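/- A Young tower consists of the following data. $(\Delta_0,m_0)$ is a finite measure space and $\{\Lambda_i\}_{i\in I}$, $I\subseteq\mathbb N$, are pairwise disjoint measurable subsets of $\Delta_0$ with $m_0(\Lambda_i)>0$ and $m_0(\Delta_0\setminus\bigcup_i\Lambda_i)=0$. There are integers $R_i\ge 1$ with $\gcd\{R_i\}=1$ and a measurable return time $R:\Delta_0\to\{1,2,\dots\}$ with $R=R_i$ on $\Lambda_i$. There is a measurable map $F^R:\Delta_0\to\Delta_0$ whose restriction to each $\Lambda_i$ is a bijection onto $\Delta_0$. The partition is generating: modulo $m_0$-null sets, every measurable subset of $\Delta_0$ belongs to the $\sigma$-algebra generated by the sets $(F^R)^{-k}(\Lambda_i)$, $k\ge 0$, $i\in I$. For $x,y\in\Delta_0$ let the separation time $s(x,y)\in\mathbb N_0\cup\{\infty\}$ be the least $n\ge0$ such that $(F^R)^n(x)$ and $(F^R)^n(y)$ do not lie in a common $\Lambda_i$, and put $\beta^\infty=0$. The map $F^R$ has a measurable Jacobian $JF^R$ with respect to $m_0$, positive on every $\Lambda_i$ (that is, $m_0(F^R(A))=\int_A JF^R\,dm_0$ for every measurable $A$ contained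 in a single $\Lambda_i$), and there are $C_F>0$ and $0<\beta<1$ such that $|\log (JF^R(x)/JF^R(y))|\le C_F\,\beta^{s(F^R(x),F^R(y))}$ for all $x,y$ in the same $\Lambda_i$. The tower is $\Delta=\{(x,l):x\in\Delta_0,\ 0\le l<R(x)\}$, with partition elements $\Delta_{l,i}=\{(x,l)\in\Delta:x\in\Lambda_i\}$ and tower map $F(x,l)=(x,l+1)$ if $l+1<R(x)$, $F(x,l)=(F^R(x),0)$ if $l+1=R(x)$; $m$ is the measure on $\Delta$ that on the level $\{(x,l):R(x)>l\}$ is the copy of $m_0$ restricted to $\{R>l\}$. Put $s((x,l),(y,l'))=s(x,y)$ if the two points lie in the same $\Delta_{l,i}$, and $0$ otherwise. A function $\varphi:\Delta\to\mathbb R$ belongs to $\mathcal F_\beta^+$ with constant $C_\varphi>0$ if $|\varphi(x)-\varphi(y)|\le C_\varphi\,\beta^{s(x,y)}$ for all $x,y\in\Delta$ and, on each $\Delta_{l,i}$, either $\varphi\equiv0$, or $\varphi>0$ and $|\varphi(x)/\varphi(y)-1|\le C_\varphi\,\beta^{s(x,y)}$ for all $x,y\in\Delta_{l,i}$. $|\cdot|$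 denotes the total variation norm of a signed measure. Then the following hold. (1) Suppose that $m_0\{R>n\}\le C n^{-\zeta}$ for all $n\ge1$, with some $C>0$ and $\zeta>1$. Then there is a unique $F$-invariant probability measure $\nu$ on $\Delta$ equivalent to $m$, and for every $C_\varphi>0$ there is $C'>0$ such that, for every probability measure $\lambda$ on $\Delta$ having a measurable density $\varphi\in\mathcal F_\beta^+$ with constant $C_\varphi$ with respect to $m$, $$|F^n_*\lambda-\nu|\le C' n^{-(\zeta-1)}\qquad\text{for all } n\ge1 .$$ (2) Suppose that $m_0\{R>n\}\le C e^{-c n^{\eta}}$ for all $n\ge1$, with some $C,c>0$ and $0<\eta\le1$. Then there is a unique $F$-invariant probability measure $\nu$ on $\Delta$ equivalent to $m$, and there is $c'>0$ such that for every $C_\varphi>0$ there is $C'>0$ such that, for every probability measure $\lambda$ on $\Delta$ having a measurable density $\varphi\in\mathcal F_\beta^+$ with constant $C_\varphi$ with respect to $m$, $$|F^n_*\lambda-\nu|\le C' e^{-c' n^{\eta}}\qquad\text{for all } n\ge1 .$$ -/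

import Mathlib

open MeasureTheory Set

universe u

noncomputable section

/-- `β ^ s` for an extended-natural separation time, with the convention `β ^ ∞ = 0`. -/
def epow (β : ℝ) (s : ℕ∞) : ℝ := if s = ⊤ then 0 else β ^ s.toNat

/-- The separation time of `x` and `y`: the least `n` such that the `n`-th iterates of the return
map do not lie in a common partition element (`∞` if there is no such `n`). -/
def sepTime {X : Type*} (I : Set ℕ) (Λ : ℕ → Set X) (FR : X → X) (x y : X) : ℕ∞ :=
  ⨅ n ∈ {n : ℕ | ¬ ∃ i ∈ I, FR^[n] x ∈ Λ i ∧ FR^[n] y ∈ Λ i}, (n : ℕ∞)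

/-- The data of a Young tower: a finite measure base `(Δ₀, m₀)`, a countable partition
`{Λ i}_{i ∈ I}` of the base modulo `m₀` into sets of positive measure, return times `Ret i ≥ 1`
with greatest common divisor `1`, a return map `FR` sending each `Λ i` bijectively onto the base,
and a positive Jacobian of `FR` with bounded distortion. The partition is generating: modulo
`m₀`, every measurable subset of the base belongs to the σ-algebra generated by the preimages of
the `Λ i` under the iterates of the return map. Off the null set `Δ₀ \ ⋃ i, Λ i` the values of
`R` and `FR` are arbitrary (measurable, with `R ≥ 1`). -/
structure YoungTower where
  Δ₀ : Type u
  [meas : MeasurableSpace Δ₀]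
  m₀ : Measure Δ₀
  [m₀_finite : IsFiniteMeasure m₀]
  I : Set ℕ
  Λ : ℕ → Set Δ₀
  Λ_meas : ∀ i ∈ I, MeasurableSet (Λ i)
  Λ_disj : I.PairwiseDisjoint Λ
  Λ_pos : ∀ i ∈ I, 0 < m₀ (Λ i)
  Λ_full : m₀ (univ \ ⋃ i ∈ I, Λ i) = 0
  Ret : ℕ → ℕ
  Ret_pos : ∀ i ∈ I, 1 ≤ Ret i
  Ret_gcd : ∀ d : ℕ, (∀ i ∈ I, d ∣ Ret i) → d = 1
  R : Δ₀ → ℕ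
  R_meas : Measurable R
  R_pos : ∀ x, 0 < R x
  R_eq : ∀ i ∈ I, ∀ x ∈ Λ i, R x = Ret i
  FR : Δ₀ → Δ₀
  FR_meas : Measurable FR
  FR_bij : ∀ i ∈ I, BijOn FR (Λ i) univ
  generating : ∀ A : Set Δ₀, MeasurableSet A → ∃ B : Set Δ₀,
    MeasurableSet[MeasurableSpace.generateFrom {S | ∃ k : ℕ, ∃ i ∈ I, S = FR^[k] ⁻¹' Λ i}] B ∧
      A =ᵐ[m₀] B
  JFR : Δ₀ → ℝ
  JFR_meas : Measurable JFR
  JFR_pos : ∀ i ∈ I, ∀ x ∈ Λ i, 0 < JFR x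
  JFR_jac : ∀ i ∈ I, ∀ A : Set Δ₀, A ⊆ Λ i → MeasurableSet A →
    m₀ (FR '' A) = ∫⁻ x in A, ENNReal.ofReal (JFR x) ∂m₀
  CF : ℝ
  CF_pos : 0 < CF
  β : ℝ
  β_pos : 0 < β
  β_lt_one : β < 1
  distortion : ∀ i ∈ I, ∀ x ∈ Λ i, ∀ y ∈ Λ i,
    |Real.log (JFR x / JFR y)| ≤ CF * epow β (sepTime I Λ FR (FR x) (FR y))

attribute [instance] YoungTower.meas
attribute [instance] YoungTower.m₀_finite

namespace YoungTower

variable (T : YoungTower.{u})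

/-- The tower `Δ = {(x, l) : x ∈ Δ₀, 0 ≤ l < R x}`. -/
abbrev Tower : Type u := {p : T.Δ₀ × ℕ // p.2 < T.R p.1}

/-- The tower map `F`. -/
def towerMap (p : T.Tower) : T.Tower :=
  if h : p.1.2 + 1 < T.R p.1.1 then ⟨(p.1.1, p.1.2 + 1), h⟩
  else ⟨(T.FR p.1.1, 0), T.R_pos _⟩

/-- The reference measure `m` on the tower: on the `l`-th level it is the copy of `m₀`
restricted to `{R > l}`. -/
def towerMeasure : Measure T.Tower :=
  (Measure.sum fun l : ℕ =>
    (T.m₀.restrict {x | l < T.R x}).map fun x => (x, l)).comap Subtype.val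

/-- The partition element `Δ_{l,i}` of the tower. -/
def pieceSet (l i : ℕ) : Set T.Tower := {p | p.1.2 = l ∧ p.1.1 ∈ T.Λ i}

open Classical in
/-- Separation time on the tower: the separation time of the base points if the two points
lie in the same partition element `Δ_{l,i}`, and `0` otherwise. -/
def sepTower (p q : T.Tower) : ℕ∞ :=
  if ∃ l : ℕ, ∃ i ∈ T.I, p ∈ T.pieceSet l i ∧ q ∈ T.pieceSet l i then
    sepTime T.I T.Λ T.FR p.1.1 q.1.1
  else 0

/-- `φ ∈ F_β` with constant `K`. -/
def MemF (K : ℝ) (φ : T.Tower → ℝ) : Prop :=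
  ∀ p q : T.Tower, |φ p - φ q| ≤ K * epow T.β (T.sepTower p q)

/-- `φ ∈ F_β⁺` with constant `K`, serving both for the membership in `F_β` and for the bound on
the quotients on the partition elements. -/
def MemFPlus (K : ℝ) (φ : T.Tower → ℝ) : Prop :=
  T.MemF K φ ∧ ∀ l : ℕ, ∀ i ∈ T.I,
    (∀ p ∈ T.pieceSet l i, φ p = 0) ∨
    ((∀ p ∈ T.pieceSet l i, 0 < φ p) ∧
      ∀ p ∈ T.pieceSet l i, ∀ q ∈ T.pieceSet l i,
        |φ p / φ q - 1| ≤ K * epow T.β (T.sepTower p q))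

/-- `ν` is an `F`-invariant probability measure equivalent to `m`. -/
def IsEquilibrium (ν : ProbabilityMeasure T.Tower) : Prop :=
  MeasurePreserving T.towerMap (ν : Measure T.Tower) (ν : Measure T.Tower) ∧
    (ν : Measure T.Tower) ≪ T.towerMeasure ∧ T.towerMeasure ≪ (ν : Measure T.Tower)

end YoungTower

/-- The total variation norm `|μ - ν|` of the signed measure `μ - ν`. -/
def tvDist {X : Type*} [MeasurableSpace X] (μ ν : Measure X)
    [IsFiniteMeasure μ] [IsFiniteMeasure ν] : ENNReal :=
  (μ.toSignedMeasure - ν.toSignedMeasure).totalVariation univ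

end

noncomputable section

open Filter Topology
open scoped ENNReal

/-!
By bounded distortion, the density of the mass arriving at the base dominates a fixed multiple of
the reference density. At each arrival split off this multiple and start it afresh from `m₀`; the
remainder stays regular and travels on to its next arrival. The waiting time between two successive
splittings then inherits the decay of the tail of the return time, and the mass that a push-forward
gives to a set solves a renewal equation driven by it. The law of the waiting time is aperiodic
because the return times have greatest common divisor one, so `1 - ∑ pₙ zⁿ`, divided by its simple
zero at `z = 1`, has no zero in the closed unit disc. Wiener's lemma, with explicit control of the
tails of the inverse, bounds the solutions of the renewal equation at the rate of the tails of the
tails. The equilibrium assigns to a set the expected time spent there during one renewal cycle, up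
to normalisation. It is ergodic because it is mixing on the sets determined by finitely many
symbols, which generate; hence every absolutely continuous invariant probability measure equals it.
-/

/-! ### Wiener's lemma for power series -/

theorem lp_one_hasSum_norm_casesOn (x : lp (fun _ : ℕ => ℂ) 1) :
    HasSum (fun n : ℕ => ‖Nat.casesOn (motive := fun _ => ℂ) n 0 x‖) ‖x‖ := by
  have hx : HasSum (fun n => ‖x n‖) ‖x‖ := by simpa using lp.hasSum_norm (p := 1) (by simp) x
  simpa using (hasSum_nat_add_iff (f := fun n : ℕ => ‖Nat.casesOn (motive := fun _ => ℂ) n 0 x‖)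
    1).1 hx

/-- The right shift `(x₀, x₁, …) ↦ (0, x₀, x₁, …)` on `ℓ¹(ℕ, ℂ)`. Evaluating a power series with
absolutely summable coefficients at the shift turns the Cauchy product into composition. -/
def rightShift : lp (fun _ : ℕ => ℂ) 1 →L[ℂ] lp (fun _ : ℕ => ℂ) 1 :=
  LinearMap.mkContinuous
    { toFun := fun x => ⟨fun n => Nat.casesOn n 0 x,
        memℓp_gen (by simpa using (lp_one_hasSum_norm_casesOn x).summable)⟩
      map_add' := fun x y => by ext (_ | n); exacts [(add_zero _).symm, rfl]
      map_smul' := fun c x => by ext (_ | n) <;> simp } 1 fun x => by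
    simpa [lp.norm_eq_tsum_rpow (p := 1) (by simp)] using (lp_one_hasSum_norm_casesOn x).tsum_eq.le

theorem rightShift_apply_zero (x : lp (fun _ : ℕ => ℂ) 1) : rightShift x 0 = 0 := rfl

theorem rightShift_apply_succ (x : lp (fun _ : ℕ => ℂ) 1) (n : ℕ) :
    rightShift x (n + 1) = x n := rfl

theorem norm_rightShift_le_one : ‖rightShift‖ ≤ 1 :=
  LinearMap.mkContinuous_norm_le _ zero_le_one _

theorem rightShift_pow_apply (k : ℕ) (x : lp (fun _ : ℕ => ℂ) 1) (n : ℕ) :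
    (rightShift ^ k) x n = if k ≤ n then x (n - k) else 0 := by
  induction k generalizing n with
  | zero => simp
  | succ k ih =>
    rw [pow_succ', mul_apply_eq_comp]
    cases n with
    | zero => simp [rightShift_apply_zero]
    | succ n => simp only [rightShift_apply_succ, ih, add_le_add_iff_right, Nat.add_sub_add_right]

/-- The convolution (Cauchy product) of two sequences. -/
def seqConv {R : Type*} [Semiring R] (a b : ℕ → R) (n : ℕ) : R :=
  ∑ k ∈ Finset.range (n + 1), a k * b (n - k)

/-- The characters of a commutative Banach algebra map a contraction into the closed unit disc. -/
theorem isUnit_tsum_smul_pow {A : Type*} [NormedCommRing A] [NormOneClass A] [NormedAlgebra ℂ A]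
    [CompleteSpace A] {S : A} (hS : ‖S‖ ≤ 1) {a : ℕ → ℂ} (hsum : Summable fun k => a k • S ^ k)
    (hne : ∀ z : ℂ, ‖z‖ ≤ 1 → ∑' n, a n * z ^ n ≠ 0) :
    IsUnit (∑' k, a k • S ^ k) := by
  by_contra hnu
  obtain ⟨χ, hχ⟩ := WeakDual.CharacterSpace.exists_apply_eq_zero hnu
  refine hne (χ S) ((spectrum.norm_le_norm_of_mem (AlgHom.apply_mem_spectrum χ S)).trans hS) ?_
  rw [← hχ, ← (hsum.hasSum.map χ (map_continuous χ)).tsum_eq]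
  simp only [Function.comp_def, map_smul, map_pow, smul_eq_mul]

theorem exists_tsum_rightShift_mul_eq_one {a : ℕ → ℂ} (ha : Summable fun n => ‖a n‖)
    (hne : ∀ z : ℂ, ‖z‖ ≤ 1 → ∑' n, a n * z ^ n ≠ 0) :
    ∃ T G, HasSum (fun k => a k • rightShift ^ k) T ∧ T * G = 1 := by
  let A := Algebra.elemental ℂ rightShift
  let _ : NormedCommRing A := { (inferInstance : NormedRing A) with
    mul_comm := (inferInstance : CommRing A).mul_comm }
  let _ : NormedAlgebra ℂ A := inferInstance
  have _ : Nontrivial (lp (fun _ : ℕ => ℂ) 1) := (lp.isometry_single 0).injective.nontrivial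
  have _ : NormOneClass A := ⟨norm_one (α := lp (fun _ : ℕ => ℂ) 1 →L[ℂ] lp (fun _ : ℕ => ℂ) 1)⟩
  have _ : CompleteSpace A := inferInstance
  let S : A := ⟨rightShift, Algebra.elemental.self_mem ℂ rightShift⟩
  have hS : ‖S‖ ≤ 1 := norm_rightShift_le_one
  have hsum : Summable fun k => a k • S ^ k := by
    refine .of_norm_bounded ha fun k => ?_
    rw [norm_smul]
    exact mul_le_of_le_one_right (norm_nonneg _)
      ((norm_pow_le S k).trans (pow_le_one₀ (norm_nonneg _) hS))
  obtain ⟨G, hG⟩ := (isUnit_tsum_smul_pow hS hsum hne).exists_right_inv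
  exact ⟨(∑' k, a k • S ^ k).1, G.1, hsum.hasSum.map (A.val : A →ₐ[ℂ] _) continuous_subtype_val,
    congrArg Subtype.val hG⟩

theorem exists_summable_seqConv_eq_single {a : ℕ → ℂ} (ha : Summable fun n => ‖a n‖)
    (hne : ∀ z : ℂ, ‖z‖ ≤ 1 → ∑' n, a n * z ^ n ≠ 0) :
    ∃ b : ℕ → ℂ, (Summable fun n => ‖b n‖) ∧ seqConv a b = Pi.single 0 1 := by
  obtain ⟨T, G, hT, hTG⟩ := exists_tsum_rightShift_mul_eq_one ha hne
  set b : lp (fun _ : ℕ => ℂ) 1 := G (lp.single 1 0 1) with hb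
  refine ⟨b, by simpa using (lp.memℓp b).summable (by simp), funext fun n => ?_⟩
  let coord : (lp (fun _ : ℕ => ℂ) 1 →L[ℂ] lp (fun _ : ℕ => ℂ) 1) →L[ℂ] ℂ :=
    (lp.evalCLM ℂ (fun _ : ℕ => ℂ) 1 n) ∘L (ContinuousLinearMap.apply ℂ _ b)
  have hTb : T b = lp.single 1 0 1 := by
    rw [hb, ← mul_apply_eq_comp, hTG, one_apply_eq_self]
  have hterm (k : ℕ) : coord (a k • rightShift ^ k) = if k ≤ n then a k * b (n - k) else 0 := by
    rw [map_smul, smul_eq_mul, ← mul_ite_zero]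
    exact congrArg (a k * ·) (rightShift_pow_apply k b n)
  have hsum : HasSum (fun k => coord (a k • rightShift ^ k)) (T b n) := hT.mapL coord
  have hfin : ∀ k ∉ Finset.range (n + 1), coord (a k • rightShift ^ k) = 0 := fun k hk => by
    rw [hterm, if_neg (by simpa using hk)]
  rw [← lp.coeFn_single, ← hTb, ← (hasSum_sum_of_ne_finset_zero hfin).unique hsum]
  exact Finset.sum_congr rfl fun k hk => by
    rw [hterm, if_pos (Finset.mem_range_succ_iff.1 hk)]

theorem exists_summable_abs_seqConv_eq_single {a : ℕ → ℝ} (ha : Summable fun n => |a n|)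
    (hne : ∀ z : ℂ, ‖z‖ ≤ 1 → ∑' n, (a n : ℂ) * z ^ n ≠ 0) :
    ∃ b : ℕ → ℝ, (Summable fun n => |b n|) ∧ seqConv a b = Pi.single 0 1 := by
  obtain ⟨b, hb, hab⟩ :=
    exists_summable_seqConv_eq_single (a := fun n => (a n : ℂ)) (by simpa using ha) hne
  refine ⟨fun n => (b n).re, .of_nonneg_of_le (fun _ => abs_nonneg _)
    (fun n => Complex.abs_re_le_norm (b n)) hb, funext fun n => ?_⟩
  have hre : (seqConv (fun n => (a n : ℂ)) b n).re = seqConv a (fun n => (b n).re) n := by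
    simp only [seqConv, Complex.re_sum, Complex.re_ofReal_mul]
  rw [← hre, hab]
  rcases eq_or_ne n 0 with rfl | hn <;> simp [*]

/-! ### Convolutions and tails -/

/-- The tail `∑_{k ≥ n} |a k|` of a sequence. -/
def absTail (a : ℕ → ℝ) (n : ℕ) : ℝ := ∑' k, |a (k + n)|

section Tails

variable {a b : ℕ → ℝ}

theorem absTail_nonneg (a : ℕ → ℝ) (n : ℕ) : 0 ≤ absTail a n := tsum_nonneg fun _ => abs_nonneg _

theorem absTail_zero (a : ℕ → ℝ) : absTail a 0 = ∑' k, |a k| := rfl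

theorem sum_add_absTail (ha : Summable fun n => |a n|) (n : ℕ) :
    ∑ k ∈ Finset.range n, |a k| + absTail a n = absTail a 0 := ha.sum_add_tsum_nat_add n

theorem absTail_antitone (ha : Summable fun n => |a n|) : Antitone (absTail a) := by
  intro m n hmn
  have hsum : ∑ k ∈ Finset.range m, |a k| ≤ ∑ k ∈ Finset.range n, |a k| :=
    Finset.sum_le_sum_of_subset_of_nonneg (Finset.range_subset_range.2 hmn)
      fun _ _ _ => abs_nonneg _
  linarith [sum_add_absTail ha m, sum_add_absTail ha n]

theorem abs_le_absTail (ha : Summable fun n => |a n|) (n : ℕ) : |a n| ≤ absTail a n := by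
  have hsucc := sum_add_absTail ha (n + 1)
  rw [Finset.sum_range_succ] at hsucc
  linarith [sum_add_absTail ha n, absTail_nonneg a (n + 1)]

theorem tendsto_absTail_zero (a : ℕ → ℝ) : Tendsto (absTail a) atTop (𝓝 0) :=
  tendsto_sum_nat_add fun k => |a k|

theorem absTail_mono (hb : Summable fun n => |b n|) (h : ∀ n, |a n| ≤ |b n|) (n : ℕ) :
    absTail a n ≤ absTail b n := by
  have hb' := (summable_nat_add_iff n).2 hb
  exact (Summable.of_nonneg_of_le (fun _ => abs_nonneg _) (fun k => h (k + n)) hb').tsum_le_tsum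
    (fun k => h (k + n)) hb'

theorem summable_and_absTail_le_of_sum_le (ha : ∀ n, 0 ≤ a n) {n : ℕ} {B : ℝ}
    (h : ∀ N, ∑ m ∈ Finset.range N, a (m + n) ≤ B) : Summable a ∧ absTail a n ≤ B := by
  have hs : Summable fun m => a (m + n) := summable_of_sum_range_le (fun m => ha _) h
  refine ⟨(summable_nat_add_iff n).1 hs, ?_⟩
  simpa only [absTail, abs_of_nonneg (ha _)] using hs.tsum_le_of_sum_range_le h

theorem sum_ite_le_abs_le_absTail (ha : Summable fun n => |a n|) (p n : ℕ) :
    ∑ k ∈ Finset.range n, (if p ≤ k then |a k| else 0) ≤ absTail a p := by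
  have hnonneg (k : ℕ) : 0 ≤ if p ≤ k then |a k| else 0 := by
    split_ifs <;> first | exact abs_nonneg _ | exact le_rfl
  calc ∑ k ∈ Finset.range n, (if p ≤ k then |a k| else 0)
      ≤ ∑ k ∈ Finset.range (p + n), (if p ≤ k then |a k| else 0) :=
        Finset.sum_le_sum_of_subset_of_nonneg
          (Finset.range_subset_range.2 (Nat.le_add_left n p)) fun k _ _ => hnonneg k
    _ = ∑ k ∈ Finset.range n, |a (k + p)| := by
        rw [Finset.sum_range_add, Finset.sum_eq_zero, zero_add]
        · simp [add_comm]
        · exact fun k hk => if_neg (not_le.2 (Finset.mem_range.1 hk))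
    _ ≤ absTail a p := ((summable_nat_add_iff p).2 ha).sum_le_tsum _ fun _ _ => abs_nonneg _

theorem abs_seqConv_le (a b : ℕ → ℝ) (n : ℕ) :
    |seqConv a b n| ≤ seqConv (fun k => |a k|) (fun k => |b k|) n := by
  refine (Finset.abs_sum_le_sum_abs _ _).trans (le_of_eq ?_)
  exact Finset.sum_congr rfl fun k _ => abs_mul _ _

theorem seqConv_mono {a' b' : ℕ → ℝ} (ha : ∀ n, 0 ≤ a n) (hb : ∀ n, 0 ≤ b n)
    (haa' : ∀ n, a n ≤ a' n) (hbb' : ∀ n, b n ≤ b' n) (n : ℕ) :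
    seqConv a b n ≤ seqConv a' b' n :=
  Finset.sum_le_sum fun k _ => mul_le_mul (haa' k) (hbb' _) (hb _) ((ha k).trans (haa' k))

theorem seqConv_le_split (ha : ∀ n, 0 ≤ a n) (has : Summable a) (hb : ∀ n, 0 ≤ b n) {n p : ℕ}
    {B D : ℝ} (hB₀ : 0 ≤ B) (hB : ∀ k < p, k ≤ n → b (n - k) ≤ B) (hD : ∀ m, b m ≤ D) :
    seqConv a b n ≤ (∑' k, a k) * B + D * absTail a p := by
  have hD₀ : 0 ≤ D := (hb 0).trans (hD 0)
  calc seqConv a b n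
      ≤ ∑ k ∈ Finset.range (n + 1), (a k * B + D * (if p ≤ k then |a k| else 0)) := by
        refine Finset.sum_le_sum fun k hk => ?_
        split_ifs with h
        · rw [abs_of_nonneg (ha k)]
          linarith [mul_le_mul_of_nonneg_left (hD (n - k)) (ha k), mul_nonneg (ha k) hB₀]
        · linarith [mul_le_mul_of_nonneg_left
            (hB k (not_le.1 h) (Finset.mem_range_succ_iff.1 hk)) (ha k)]
    _ = (∑ k ∈ Finset.range (n + 1), a k) * B
        + D * ∑ k ∈ Finset.range (n + 1), (if p ≤ k then |a k| else 0) := by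
        rw [Finset.sum_add_distrib, Finset.sum_mul, Finset.mul_sum]
    _ ≤ (∑' k, a k) * B + D * absTail a p := by
        gcongr
        · exact has.sum_le_tsum _ fun k _ => ha k
        · exact sum_ite_le_abs_le_absTail has.abs p (n + 1)

theorem seqConv_le_half (ha : ∀ n, 0 ≤ a n) (has : Summable a) (hb : ∀ n, 0 ≤ b n)
    (hanti : Antitone b) (n : ℕ) :
    seqConv a b n ≤ (∑' k, a k) * b (n / 2) + b 0 * absTail a (n / 2) :=
  seqConv_le_split ha has hb (hb _) (fun k hk hkn => hanti (by omega))
    fun m => hanti (Nat.zero_le m)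

theorem summable_abs_seqConv (ha : Summable fun n => |a n|) (hb : Summable fun n => |b n|) :
    Summable fun n => |seqConv a b n| := by
  simp only [← Real.norm_eq_abs] at ha hb ⊢
  exact summable_norm_sum_mul_range_of_summable_norm ha hb

theorem tsum_seqConv (ha : Summable fun n => |a n|) (hb : Summable fun n => |b n|) :
    ∑' n, seqConv a b n = (∑' n, a n) * ∑' n, b n := by
  simp only [← Real.norm_eq_abs] at ha hb
  exact (tsum_mul_tsum_eq_tsum_sum_range_of_summable_norm ha hb).symm

theorem seqConv_add_index (a b : ℕ → ℝ) (m n : ℕ) :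
    seqConv a b (m + n) = seqConv (fun k => a (k + n)) b m +
      ∑ k ∈ Finset.range n, a k * b (m + (n - k)) := by
  rw [seqConv, seqConv, show m + n + 1 = n + (m + 1) by ring, Finset.sum_range_add, add_comm]
  congr 1
  · exact Finset.sum_congr rfl fun k _ => by
      rw [add_comm k n, show m + n - (n + k) = m - k by omega]
  · refine Finset.sum_congr rfl fun k hk => ?_
    have := Finset.mem_range.1 hk
    rw [show m + n - k = m + (n - k) by omega]

theorem absTail_seqConv_le (ha : Summable fun n => |a n|) (hb : Summable fun n => |b n|) (n : ℕ) :
    absTail (seqConv a b) n ≤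
      absTail a n * absTail b 0 + seqConv (fun k => |a k|) (absTail b) n := by
  have ha' : Summable fun k => |(|a (k + n)|)| := by
    simpa only [abs_abs] using (summable_nat_add_iff n).2 ha
  have hb' : Summable fun k => |(|b k|)| := by simpa only [abs_abs] using hb
  have hlate : HasSum (fun m => seqConv (fun k => |a (k + n)|) (fun k => |b k|) m)
      (absTail a n * absTail b 0) := by
    rw [absTail, absTail_zero, ← tsum_seqConv ha' hb']
    exact (summable_abs_seqConv ha' hb').of_abs.hasSum
  have hearly : ∀ k ∈ Finset.range n, HasSum (fun m => |a k| * |b (m + (n - k))|)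
      (|a k| * absTail b (n - k)) := fun k _ =>
    ((summable_nat_add_iff (f := fun i => |b i|) (n - k)).2 hb).hasSum.mul_left _
  have hconv : Summable fun m => |seqConv a b (m + n)| :=
    (summable_nat_add_iff (f := fun i => |seqConv a b i|) n).2 (summable_abs_seqConv ha hb)
  calc absTail (seqConv a b) n
      ≤ absTail a n * absTail b 0 + ∑ k ∈ Finset.range n, |a k| * absTail b (n - k) := by
        refine hasSum_le (fun m => ?_) hconv.hasSum (hlate.add (hasSum_sum hearly))
        exact (abs_seqConv_le a b _).trans (seqConv_add_index _ _ m n).le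
    _ ≤ absTail a n * absTail b 0 + seqConv (fun k => |a k|) (absTail b) n := by
        rw [seqConv, Finset.sum_range_succ]
        linarith [mul_nonneg (abs_nonneg (a n)) (absTail_nonneg b (n - n))]

theorem absTail_seqConv_le_half (ha : Summable fun n => |a n|) (hb : Summable fun n => |b n|)
    (n : ℕ) : absTail (seqConv a b) n ≤
      absTail a 0 * absTail b (n / 2) + 2 * absTail b 0 * absTail a (n / 2) := by
  have hconv := seqConv_le_half (fun n => abs_nonneg (a n)) ha (absTail_nonneg b)
    (absTail_antitone hb) n
  have habs : absTail (fun k => |a k|) (n / 2) = absTail a (n / 2) := by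
    simp only [absTail, abs_abs]
  rw [habs, ← absTail_zero] at hconv
  linarith [absTail_seqConv_le ha hb n, mul_le_mul_of_nonneg_right
    (absTail_antitone ha (Nat.div_le_self n 2)) (absTail_nonneg b 0)]

theorem powerSeries_mk_seqConv {R : Type*} [Semiring R] (a b : ℕ → R) :
    PowerSeries.mk (seqConv a b) = PowerSeries.mk a * PowerSeries.mk b := by
  ext n
  simp only [PowerSeries.coeff_mul, seqConv, PowerSeries.coeff_mk]
  exact (Finset.Nat.sum_antidiagonal_eq_sum_range_succ (fun i j => a i * b j) n).symm

theorem powerSeries_mk_mul_mk_eq_one {R : Type*} [Semiring R] {a b : ℕ → R}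
    (h : seqConv a b = Pi.single 0 1) : PowerSeries.mk a * PowerSeries.mk b = 1 := by
  ext n
  rw [← powerSeries_mk_seqConv, h, PowerSeries.coeff_mk, PowerSeries.coeff_one, Pi.single_apply]

/-- Compare with the maximum of `x` over `{0, …, n}`. -/
theorem le_of_forall_le_add_mul {x : ℕ → ℝ} {c δ : ℝ} (hδ : δ < 1)
    (h : ∀ n B, (∀ m ≤ n, x m ≤ B) → x n ≤ c + δ * B) (n : ℕ) : x n ≤ c / (1 - δ) := by
  obtain ⟨m, hm, hmax⟩ := Finset.exists_max_image (Finset.range (n + 1)) x ⟨n, by simp⟩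
  have hself := h m (x m) fun k hk =>
    hmax k (Finset.mem_range.2 (hk.trans_lt (Finset.mem_range.1 hm)))
  refine (hmax n (Finset.self_mem_range_succ n)).trans ?_
  rw [le_div_iff₀ (by linarith)]
  linarith

theorem le_div_of_le_add_seqConv {e x : ℕ → ℝ} (he : ∀ n, 0 ≤ e n) (hes : Summable e)
    (he1 : ∑' n, e n < 1) (hx : ∀ n, 0 ≤ x n) {S : ℝ} (h : ∀ n, x n ≤ S + seqConv e x n) (n : ℕ) :
    x n ≤ S / (1 - ∑' n, e n) := by
  refine le_of_forall_le_add_mul he1 (fun n B hB => (h n).trans ?_) n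
  gcongr
  calc seqConv e x n ≤ ∑ k ∈ Finset.range (n + 1), e k * B :=
        Finset.sum_le_sum fun k _ => mul_le_mul_of_nonneg_left (hB _ (Nat.sub_le _ _)) (he k)
    _ = (∑ k ∈ Finset.range (n + 1), e k) * B := by rw [Finset.sum_mul]
    _ ≤ (∑' n, e n) * B := mul_le_mul_of_nonneg_right (hes.sum_le_tsum _ fun k _ => he k)
        ((hx n).trans (hB n le_rfl))

end Tails

/-! ### Families of rates -/

/-- A family of decreasing rates that is stable under halving of the argument, directed, and
stable under solving renewal inequalities with a defective kernel. The same constants serve all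
sequences obeying the same bounds, which is what makes the final estimates uniform in the initial
density. -/
structure IsRateFamily {ι : Type*} (ρ : ι → ℕ → ℝ) : Prop where
  pos : ∀ i n, 0 < ρ i n
  anti : ∀ i, Antitone (ρ i)
  tendsto : ∀ i, Tendsto (ρ i) atTop (𝓝 0)
  half : ∀ i, ∃ j C, 0 < C ∧ ∀ n, ρ i (n / 2) ≤ C * ρ j n
  directed : ∀ i j, ∃ k C, 0 < C ∧ ∀ n, ρ i n ≤ C * ρ k n ∧ ρ j n ≤ C * ρ k n
  renewal : ∀ i (e : ℕ → ℝ), (∀ n, 0 ≤ e n) → Summable e → ∑' n, e n < 1 →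
    (∃ C, ∀ n, absTail e n ≤ C * ρ i n) →
    ∃ j, ∀ C, ∃ C', ∀ s x : ℕ → ℝ, (∀ n, 0 ≤ x n) → (∀ n, s n ≤ C * ρ i n) →
      (∀ n, x n ≤ s n + seqConv e x n) → ∀ n, x n ≤ C' * ρ j n

/-- The polynomial rate `(n + 1) ^ (-a)`; the shift avoids the junk value at `n = 0`. -/
def polyRate (a : ℝ) (n : ℕ) : ℝ := ((n : ℝ) + 1) ^ (-a)

theorem polyRate_pos (a : ℝ) (n : ℕ) : 0 < polyRate a n := Real.rpow_pos_of_pos (by positivity) _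

theorem polyRate_le_one {a : ℝ} (ha : 0 ≤ a) (n : ℕ) : polyRate a n ≤ 1 :=
  Real.rpow_le_one_of_one_le_of_nonpos (by linarith [n.cast_nonneg (α := ℝ)]) (by linarith)

theorem polyRate_le_of_mul_le {a : ℝ} (ha : 0 ≤ a) {κ : ℝ} (hκ : 0 < κ) {m n : ℕ}
    (h : κ * ((n : ℝ) + 1) ≤ (m : ℝ) + 1) : polyRate a m ≤ κ ^ (-a) * polyRate a n := by
  rw [polyRate, polyRate, ← Real.mul_rpow hκ.le (by positivity)]
  exact Real.rpow_le_rpow_of_nonpos (by positivity) h (by linarith)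

theorem exists_mul_one_sub_rpow_lt_one {δ : ℝ} (hδ : δ < 1) (a : ℝ) :
    ∃ κ ∈ Ioo (0 : ℝ) 1, δ * (1 - κ) ^ a < 1 := by
  have hcont : ContinuousAt (fun κ : ℝ => δ * (1 - κ) ^ a) 0 :=
    ((continuousAt_const.sub continuousAt_id).rpow_const (Or.inl (by norm_num))).const_mul δ
  have hlt : ∀ᶠ κ : ℝ in 𝓝[>] 0, δ * (1 - κ) ^ a < 1 :=
    nhdsWithin_le_nhds (hcont.eventually_lt_const (by simpa using hδ))
  exact (Filter.Eventually.and (Ioo_mem_nhdsGT zero_lt_one) hlt).exists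

/-- The terms of the convolution with index below `κ n` are controlled by the decay of `x`, the
others by the decay of the tail of `e`. -/
theorem seqConv_le_polyRate {a κ : ℝ} (ha : 0 ≤ a) (hκ : κ ∈ Ioo (0 : ℝ) 1) {e x : ℕ → ℝ}
    (he : ∀ n, 0 ≤ e n) (hes : Summable e) {Ce : ℝ} (htail : ∀ n, absTail e n ≤ Ce * polyRate a n)
    (hx : ∀ n, 0 ≤ x n) {D : ℝ} (hD : ∀ n, x n ≤ D) {B : ℝ} {n : ℕ}
    (hB : ∀ m ≤ n, x m ≤ B * polyRate a m) :
    seqConv e x n ≤ (D * (Ce * κ ^ (-a)) + (∑' k, e k) * (1 - κ) ^ (-a) * B) * polyRate a n := by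
  have hκ' : 0 < 1 - κ := sub_pos.2 hκ.2
  have hCe : 0 ≤ Ce :=
    nonneg_of_mul_nonneg_left ((absTail_nonneg e 0).trans (htail 0)) (polyRate_pos a 0)
  have hB₀ : 0 ≤ B := nonneg_of_mul_nonneg_left ((hx n).trans (hB n le_rfl)) (polyRate_pos a n)
  have hearly : ∀ k < ⌈κ * n⌉₊, k ≤ n → x (n - k) ≤ B * ((1 - κ) ^ (-a) * polyRate a n) := by
    intro k hk hkn
    refine (hB _ (Nat.sub_le _ _)).trans (mul_le_mul_of_nonneg_left ?_ hB₀)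
    refine polyRate_le_of_mul_le ha hκ' ?_
    have hk' : (k : ℝ) < κ * n := Nat.lt_ceil.1 hk
    rw [Nat.cast_sub hkn]
    linarith [hκ.1]
  have hlate : absTail e ⌈κ * n⌉₊ ≤ Ce * (κ ^ (-a) * polyRate a n) := by
    refine (htail _).trans (mul_le_mul_of_nonneg_left ?_ hCe)
    refine polyRate_le_of_mul_le ha hκ.1 ?_
    linarith [Nat.le_ceil (κ * (n : ℝ)), hκ.2]
  have hpow : 0 < (1 - κ) ^ (-a) := Real.rpow_pos_of_pos hκ' _
  have hsplit := seqConv_le_split he hes hx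
    (mul_nonneg hB₀ (mul_nonneg hpow.le (polyRate_pos a n).le)) hearly hD
  linarith [mul_le_mul_of_nonneg_left hlate ((hx 0).trans (hD 0))]

theorem polyRate_renewal {a : ℝ} (ha : 0 ≤ a) {e : ℕ → ℝ} (he : ∀ n, 0 ≤ e n) (hes : Summable e)
    (he1 : ∑' n, e n < 1) {Ce : ℝ} (htail : ∀ n, absTail e n ≤ Ce * polyRate a n) (C : ℝ) :
    ∃ C', ∀ s x : ℕ → ℝ, (∀ n, 0 ≤ x n) → (∀ n, s n ≤ C * polyRate a n) →
      (∀ n, x n ≤ s n + seqConv e x n) → ∀ n, x n ≤ C' * polyRate a n := by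
  obtain ⟨κ, hκ, hκδ⟩ := exists_mul_one_sub_rpow_lt_one he1 (-a)
  set D := |C| / (1 - ∑' n, e n)
  refine ⟨(|C| + D * (Ce * κ ^ (-a))) / (1 - (∑' n, e n) * (1 - κ) ^ (-a)),
    fun s x hx hs hsub n => ?_⟩
  have hs' (n : ℕ) : s n ≤ |C| * polyRate a n :=
    (hs n).trans (mul_le_mul_of_nonneg_right (le_abs_self C) (polyRate_pos a n).le)
  have hxD : ∀ n, x n ≤ D := le_div_of_le_add_seqConv he hes he1 hx fun n =>
    (hsub n).trans (add_le_add_left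
      ((hs' n).trans (mul_le_of_le_one_right (abs_nonneg _) (polyRate_le_one ha n))) _)
  rw [← div_le_iff₀ (polyRate_pos a n)]
  refine le_of_forall_le_add_mul (x := fun n => x n / polyRate a n) hκδ (fun n B hB => ?_) n
  have hconv := seqConv_le_polyRate ha hκ he hes htail hx hxD (n := n) (B := B)
    fun m hm => (div_le_iff₀ (polyRate_pos a m)).1 (hB m hm)
  rw [div_le_iff₀ (polyRate_pos a n)]
  linarith [hsub n, hs' n]

theorem isRateFamily_polyRate {a : ℝ} (ha : 0 < a) :
    IsRateFamily (fun _ : Unit => polyRate a) where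
  pos _ n := polyRate_pos a n
  anti _ m n hmn := Real.rpow_le_rpow_of_nonpos (by positivity) (by gcongr) (by linarith)
  tendsto _ := (tendsto_rpow_neg_atTop ha).comp
    (tendsto_atTop_add_const_right _ _ tendsto_natCast_atTop_atTop)
  half _ := ⟨(), (1 / 2 : ℝ) ^ (-a), by positivity, fun n => by
    refine polyRate_le_of_mul_le ha.le (by norm_num) ?_
    have : (n : ℝ) ≤ 2 * (n / 2 : ℕ) + 1 := by exact_mod_cast (by omega : n ≤ 2 * (n / 2) + 1)
    linarith⟩
  directed _ _ := ⟨(), 1, one_pos, fun n => by simp⟩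
  renewal _ e he hes he1 := fun ⟨_, hC⟩ => ⟨(), polyRate_renewal ha.le he hes he1 hC⟩

theorem summable_polyRate {a : ℝ} (ha : 1 < a) : Summable (polyRate a) := by
  have hshift := (summable_nat_add_iff 1).2 (Real.summable_nat_rpow.2 (by linarith : -a < -1))
  refine hshift.congr fun n => ?_
  rw [polyRate, Nat.cast_succ]

theorem mul_rpow_neg_le_sub_rpow {b u : ℝ} (hb : 0 ≤ b) (hu : 0 < u) :
    b * (u + 1) ^ (-(b + 1)) ≤ u ^ (-b) - (u + 1) ^ (-b) := by
  have hfactor : u ^ (-b) = ((u + 1) / u) ^ b * (u + 1) ^ (-b) := by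
    rw [Real.div_rpow (by positivity) hu.le, Real.rpow_neg hu.le, Real.rpow_neg (by positivity)]
    field_simp
  have hbernoulli : 1 + b / (u + 1) ≤ ((u + 1) / u) ^ b := by
    have hlog : 1 / (u + 1) ≤ Real.log ((u + 1) / u) := by
      refine le_trans (le_of_eq ?_) (Real.one_sub_inv_le_log_of_pos (by positivity))
      field_simp
      ring
    rw [Real.rpow_def_of_pos (by positivity)]
    refine le_trans ?_ (Real.add_one_le_exp _)
    have := mul_le_mul_of_nonneg_right hlog hb
    rw [div_mul_eq_mul_div, one_mul] at this
    linarith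
  have hlast : (u + 1) ^ (-(b + 1)) = (u + 1) ^ (-b) / (u + 1) := by
    rw [neg_add', Real.rpow_sub_one (by positivity)]
  have := mul_le_mul_of_nonneg_right hbernoulli (Real.rpow_nonneg (by linarith : 0 ≤ u + 1) (-b))
  rw [hlast, hfactor, mul_div_assoc', mul_div_right_comm]
  linarith

theorem polyRate_le_mul_sub {b : ℝ} (hb : 0 < b) (k : ℕ) : polyRate (b + 1) k ≤
    (1 / 2 : ℝ) ^ (-(b + 1)) / b * (polyRate b k - polyRate b (k + 1)) := by
  have hshift : polyRate (b + 1) k ≤ (1 / 2 : ℝ) ^ (-(b + 1)) * polyRate (b + 1) (k + 1) := by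
    refine polyRate_le_of_mul_le (by linarith) (by norm_num) ?_
    push_cast
    linarith [k.cast_nonneg (α := ℝ)]
  have hdiff : b * polyRate (b + 1) (k + 1) ≤ polyRate b k - polyRate b (k + 1) := by
    simpa only [polyRate, Nat.cast_succ] using
      mul_rpow_neg_le_sub_rpow hb.le (by positivity : (0 : ℝ) < k + 1)
  calc polyRate (b + 1) k ≤ (1 / 2 : ℝ) ^ (-(b + 1)) * polyRate (b + 1) (k + 1) := hshift
    _ = (1 / 2 : ℝ) ^ (-(b + 1)) / b * (b * polyRate (b + 1) (k + 1)) := by field_simp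
    _ ≤ _ := by gcongr

theorem absTail_polyRate_le {b : ℝ} (hb : 0 < b) :
    ∃ C, ∀ n, absTail (polyRate (b + 1)) n ≤ C * polyRate b n := by
  refine ⟨(1 / 2 : ℝ) ^ (-(b + 1)) / b, fun n => ?_⟩
  refine Real.tsum_le_of_sum_range_le (fun _ => abs_nonneg _) fun N => ?_
  calc ∑ k ∈ Finset.range N, |polyRate (b + 1) (k + n)|
      ≤ ∑ k ∈ Finset.range N,
          (1 / 2 : ℝ) ^ (-(b + 1)) / b * (polyRate b (k + n) - polyRate b (k + 1 + n)) :=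
        Finset.sum_le_sum fun k _ => by
          rw [abs_of_pos (polyRate_pos _ _), add_right_comm]
          exact polyRate_le_mul_sub hb (k + n)
    _ = (1 / 2 : ℝ) ^ (-(b + 1)) / b * (polyRate b n - polyRate b (N + n)) := by
        rw [← Finset.mul_sum, Finset.sum_range_sub' fun k => polyRate b (k + n), zero_add]
    _ ≤ (1 / 2 : ℝ) ^ (-(b + 1)) / b * polyRate b n := by
        gcongr
        exact sub_le_self _ (polyRate_pos b _).le

/-- The stretched exponential rate `exp (-c n ^ η)`. The parameter `c` is bundled with its
positivity because it indexes a rate family. -/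
def expRate (η : ℝ) (c : {c : ℝ // 0 < c}) (n : ℕ) : ℝ := Real.exp (-c.1 * (n : ℝ) ^ η)

theorem expRate_pos (η : ℝ) (c : {c : ℝ // 0 < c}) (n : ℕ) : 0 < expRate η c n := Real.exp_pos _

theorem expRate_le_expRate (η : ℝ) {c d : {c : ℝ // 0 < c}} (h : c ≤ d) (n : ℕ) :
    expRate η d n ≤ expRate η c n := by
  rw [expRate, expRate]
  gcongr

theorem expRate_antitone {η : ℝ} (hη : 0 ≤ η) (c : {c : ℝ // 0 < c}) :
    Antitone (expRate η c) := by
  intro m n hmn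
  have hpow : (m : ℝ) ^ η ≤ (n : ℝ) ^ η := Real.rpow_le_rpow m.cast_nonneg (by gcongr) hη
  rw [expRate, expRate, Real.exp_le_exp, neg_mul, neg_mul]
  exact neg_le_neg (mul_le_mul_of_nonneg_left hpow c.2.le)

theorem expRate_mul_le_add {η : ℝ} (hη : 0 ≤ η) (hη1 : η ≤ 1) (c : {c : ℝ // 0 < c}) (m n : ℕ) :
    expRate η c m * expRate η c n ≤ expRate η c (m + n) := by
  have hpow := Real.rpow_add_le_add_rpow m.cast_nonneg n.cast_nonneg hη hη1
  rw [expRate, expRate, expRate, ← Real.exp_add, Real.exp_le_exp, Nat.cast_add]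
  linarith [mul_le_mul_of_nonneg_left hpow c.2.le]

theorem expRate_half_mul_self (η : ℝ) (c : {c : ℝ // 0 < c}) (n : ℕ) :
    expRate η ⟨c.1 / 2, half_pos c.2⟩ n * expRate η ⟨c.1 / 2, half_pos c.2⟩ n = expRate η c n := by
  rw [expRate, expRate, ← Real.exp_add]
  ring_nf

theorem summable_expRate {η : ℝ} (hη : 0 < η) (c : {c : ℝ // 0 < c}) : Summable (expRate η c) := by
  have hpow : Tendsto (fun n : ℕ => (n : ℝ) ^ η) atTop atTop :=
    (tendsto_rpow_atTop hη).comp tendsto_natCast_atTop_atTop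
  have hO := ((isLittleO_exp_neg_mul_rpow_atTop c.2 (-2 / η)).comp_tendsto hpow).isBigO
  refine summable_of_isBigO_nat (Real.summable_nat_rpow.2 (by norm_num : (-2 : ℝ) < -1)) ?_
  refine hO.congr (fun n => rfl) fun n => ?_
  rw [Function.comp_apply, ← Real.rpow_mul n.cast_nonneg, mul_div_cancel₀ _ hη.ne']

theorem absTail_expRate_le {η : ℝ} (hη : 0 < η) (c : {c : ℝ // 0 < c}) :
    ∃ j C, ∀ n, absTail (expRate η c) n ≤ C * expRate η j n := by
  set j : {c : ℝ // 0 < c} := ⟨c.1 / 2, half_pos c.2⟩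
  refine ⟨j, ∑' k, expRate η j k, fun n => ?_⟩
  have hle (k : ℕ) : |expRate η c (k + n)| ≤ expRate η j k * expRate η j n := by
    rw [abs_of_pos (expRate_pos _ _ _), ← expRate_half_mul_self]
    exact mul_le_mul (expRate_antitone hη.le j (Nat.le_add_right k n))
      (expRate_antitone hη.le j (Nat.le_add_left n k)) (expRate_pos _ _ _).le (expRate_pos _ _ _).le
  have hsum := (summable_expRate hη j).mul_right (expRate η j n)
  rw [← tsum_mul_right]
  exact (Summable.of_nonneg_of_le (fun _ => abs_nonneg _) hle hsum).tsum_le_tsum hle hsum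

/-- Dividing by a supermultiplicative weight turns the renewal inequality into one with constant
forcing. -/
theorem le_mul_of_le_add_seqConv_of_mul_le {ρ e s x : ℕ → ℝ} (hρ : ∀ n, 0 < ρ n)
    (hmul : ∀ m n, ρ m * ρ n ≤ ρ (m + n)) (he : ∀ n, 0 ≤ e n)
    (hes : Summable fun n => e n / ρ n) (he1 : ∑' n, e n / ρ n < 1) (hx : ∀ n, 0 ≤ x n) {S : ℝ}
    (hs : ∀ n, s n ≤ S * ρ n) (hsub : ∀ n, x n ≤ s n + seqConv e x n) (n : ℕ) :
    x n ≤ S / (1 - ∑' n, e n / ρ n) * ρ n := by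
  rw [← div_le_iff₀ (hρ n)]
  refine le_div_of_le_add_seqConv (x := fun n => x n / ρ n) (fun n => div_nonneg (he n) (hρ n).le)
    hes he1 (fun n => div_nonneg (hx n) (hρ n).le) (fun n => ?_) n
  have hconv : seqConv e x n / ρ n ≤ seqConv (fun n => e n / ρ n) (fun n => x n / ρ n) n := by
    rw [seqConv, seqConv, Finset.sum_div]
    refine Finset.sum_le_sum fun k hk => ?_
    rw [div_mul_div_comm]
    have hρk := hmul k (n - k)
    rw [Nat.add_sub_cancel' (Finset.mem_range_succ_iff.1 hk)] at hρk
    exact div_le_div_of_nonneg_left (mul_nonneg (he k) (hx _)) (mul_pos (hρ _) (hρ _)) hρk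
  calc x n / ρ n ≤ (s n + seqConv e x n) / ρ n := div_le_div_of_nonneg_right (hsub n) (hρ n).le
    _ = s n / ρ n + seqConv e x n / ρ n := add_div _ _ _
    _ ≤ S + _ := add_le_add ((div_le_iff₀ (hρ n)).2 (hs n)) hconv

theorem exists_tsum_div_expRate_lt_one {η : ℝ} (hη : 0 < η) {c : {c : ℝ // 0 < c}} {e : ℕ → ℝ}
    (he : ∀ n, 0 ≤ e n) (he1 : ∑' n, e n < 1) {Ce : ℝ} (hle : ∀ n, e n ≤ Ce * expRate η c n) :
    ∃ j ≤ c, Summable (fun n => e n / expRate η j n) ∧ ∑' n, e n / expRate η j n < 1 := by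
  set h : {c : ℝ // 0 < c} := ⟨c.1 / 2, half_pos c.2⟩ with hh
  have hnonneg (t : ℝ) (n : ℕ) : 0 ≤ e n * Real.exp (t * (n : ℝ) ^ η) :=
    mul_nonneg (he n) (Real.exp_pos _).le
  have hbound (t : ℝ) (ht : t < c.1 / 2) (n : ℕ) :
      e n * Real.exp (t * (n : ℝ) ^ η) ≤ Ce * expRate η h n := by
    calc e n * Real.exp (t * (n : ℝ) ^ η)
        ≤ Ce * expRate η c n * Real.exp (c.1 / 2 * (n : ℝ) ^ η) :=
          mul_le_mul (hle n) (by gcongr) (Real.exp_pos _).le ((he n).trans (hle n))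
      _ = Ce * expRate η h n := by
          rw [mul_assoc, expRate, expRate, ← Real.exp_add, hh]
          ring_nf
  have hdom := (summable_expRate hη h).mul_left Ce
  have hsmall : ∀ᶠ t : ℝ in 𝓝[>] 0, t ∈ Ioo 0 (c.1 / 2) := Ioo_mem_nhdsGT (half_pos c.2)
  have hlim : Tendsto (fun t : ℝ => ∑' n : ℕ, e n * Real.exp (t * (n : ℝ) ^ η)) (𝓝[>] 0)
      (𝓝 (∑' n, e n)) := by
    refine tendsto_tsum_of_dominated_convergence hdom (fun n => ?_) ?_
    · have hcont : Continuous fun t : ℝ => e n * Real.exp (t * (n : ℝ) ^ η) := by fun_prop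
      simpa using (hcont.tendsto 0).mono_left (nhdsWithin_le_nhds (s := Ioi 0))
    · filter_upwards [hsmall] with t ht n
      rw [Real.norm_of_nonneg (hnonneg t n)]
      exact hbound t ht.2 n
  obtain ⟨t, htsum, ht⟩ := ((hlim.eventually_lt_const he1).and hsmall).exists
  have hdiv : (fun n => e n / expRate η ⟨t, ht.1⟩ n) =
      fun n : ℕ => e n * Real.exp (t * (n : ℝ) ^ η) := by
    funext n
    rw [expRate, neg_mul, Real.exp_neg, div_inv_eq_mul]
  have htc : t ≤ c.1 := by linarith [ht.2, c.2]
  refine ⟨⟨t, ht.1⟩, htc, ?_, ?_⟩ <;> rw [hdiv]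
  exacts [hdom.of_nonneg_of_le (hnonneg t) (hbound t ht.2), htsum]

theorem expRate_renewal {η : ℝ} (hη : 0 < η) (hη1 : η ≤ 1) (c : {c : ℝ // 0 < c}) {e : ℕ → ℝ}
    (he : ∀ n, 0 ≤ e n) (hes : Summable e) (he1 : ∑' n, e n < 1) {Ce : ℝ}
    (htail : ∀ n, absTail e n ≤ Ce * expRate η c n) :
    ∃ j, ∀ C, ∃ C', ∀ s x : ℕ → ℝ, (∀ n, 0 ≤ x n) → (∀ n, s n ≤ C * expRate η c n) →
      (∀ n, x n ≤ s n + seqConv e x n) → ∀ n, x n ≤ C' * expRate η j n := by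
  obtain ⟨j, hjc, hjs, hj1⟩ := exists_tsum_div_expRate_lt_one hη he he1 fun n =>
    ((le_abs_self _).trans (abs_le_absTail hes.abs n)).trans (htail n)
  refine ⟨j, fun C => ⟨|C| / (1 - ∑' n, e n / expRate η j n), fun s x hx hs hsub => ?_⟩⟩
  refine le_mul_of_le_add_seqConv_of_mul_le (expRate_pos η j) (expRate_mul_le_add hη.le hη1 j) he
    hjs hj1 hx (fun n => (hs n).trans ?_) hsub
  exact mul_le_mul (le_abs_self C) (expRate_le_expRate η hjc n) (expRate_pos _ _ _).le
    (abs_nonneg C)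

theorem isRateFamily_expRate {η : ℝ} (hη : 0 < η) (hη1 : η ≤ 1) : IsRateFamily (expRate η) where
  pos := expRate_pos η
  anti := expRate_antitone hη.le
  tendsto c := (summable_expRate hη c).tendsto_atTop_zero
  half c := by
    set j : {c : ℝ // 0 < c} := ⟨c.1 / 2, half_pos c.2⟩
    refine ⟨j, (expRate η j 1)⁻¹, inv_pos.2 (expRate_pos _ _ _), fun n => ?_⟩
    rw [inv_mul_eq_div, le_div_iff₀ (expRate_pos _ _ _), ← expRate_half_mul_self]
    calc expRate η j (n / 2) * expRate η j (n / 2) * expRate η j 1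
        ≤ expRate η j (n / 2 + n / 2 + 1) :=
          (mul_le_mul_of_nonneg_right (expRate_mul_le_add hη.le hη1 j _ _)
            (expRate_pos _ _ _).le).trans (expRate_mul_le_add hη.le hη1 j _ _)
      _ ≤ expRate η j n := expRate_antitone hη.le j (by omega)
  directed c d := ⟨min c d, 1, one_pos, fun n => by
    simpa only [one_mul] using
      ⟨expRate_le_expRate η (min_le_left c d) n, expRate_le_expRate η (min_le_right c d) n⟩⟩
  renewal c e he hes he1 := fun ⟨_, hC⟩ => expRate_renewal hη hη1 c he hes he1 hC

section RateFamily

variable {ι : Type*} {ρ : ι → ℕ → ℝ}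

theorem IsRateFamily.le_abs_mul (hρ : IsRateFamily ρ) {i : ι} {n : ℕ} {x C : ℝ}
    (h : x ≤ C * ρ i n) : x ≤ |C| * ρ i n :=
  h.trans (mul_le_mul_of_nonneg_right (le_abs_self C) (hρ.pos i n).le)

theorem IsRateFamily.exists_absTail_seqConv_le (hρ : IsRateFamily ρ) (i : ι) :
    ∃ j, ∀ Na Nb Ca Cb : ℝ, ∃ C, ∀ a b : ℕ → ℝ, (Summable fun n => |a n|) →
      (Summable fun n => |b n|) → absTail a 0 ≤ Na → absTail b 0 ≤ Nb →
      (∀ n, absTail a n ≤ Ca * ρ i n) → (∀ n, absTail b n ≤ Cb * ρ i n) →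
      ∀ n, absTail (seqConv a b) n ≤ C * ρ j n := by
  obtain ⟨j, D, -, hj⟩ := hρ.half i
  refine ⟨j, fun Na Nb Ca Cb => ⟨(Na * |Cb| + 2 * Nb * |Ca|) * D,
    fun a b ha hb hNa hNb hCa hCb n => ?_⟩⟩
  have hNa₀ : 0 ≤ Na := (absTail_nonneg a 0).trans hNa
  have hNb₀ : 0 ≤ Nb := (absTail_nonneg b 0).trans hNb
  have hCa' : absTail a (n / 2) ≤ |Ca| * ρ i (n / 2) := hρ.le_abs_mul (hCa _)
  have hCb' : absTail b (n / 2) ≤ |Cb| * ρ i (n / 2) := hρ.le_abs_mul (hCb _)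
  calc absTail (seqConv a b) n
      ≤ absTail a 0 * absTail b (n / 2) + 2 * absTail b 0 * absTail a (n / 2) :=
        absTail_seqConv_le_half ha hb n
    _ ≤ Na * (|Cb| * ρ i (n / 2)) + 2 * Nb * (|Ca| * ρ i (n / 2)) := by
        have := absTail_nonneg a (n / 2)
        have := absTail_nonneg b (n / 2)
        gcongr
    _ = (Na * |Cb| + 2 * Nb * |Ca|) * ρ i (n / 2) := by ring
    _ ≤ (Na * |Cb| + 2 * Nb * |Ca|) * (D * ρ j n) := by
        gcongr
        exact hj n
    _ = (Na * |Cb| + 2 * Nb * |Ca|) * D * ρ j n := (mul_assoc _ _ _).symm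

theorem IsRateFamily.exists_le_of_eventually_le (hρ : IsRateFamily ρ) {i : ι} {x : ℕ → ℝ}
    {C D : ℝ} (hD : ∀ n, x n ≤ D) {N : ℕ} (hN : ∀ n, N ≤ n → x n ≤ C * ρ i n) :
    ∃ C', ∀ n, x n ≤ C' * ρ i n := by
  refine ⟨|C| + |D| / ρ i N, fun n => ?_⟩
  have hD₀ : 0 ≤ |D| / ρ i N := div_nonneg (abs_nonneg _) (hρ.pos i N).le
  rw [add_mul]
  rcases le_total N n with h | h
  · exact (hρ.le_abs_mul (hN n h)).trans
      (le_add_of_nonneg_right (mul_nonneg hD₀ (hρ.pos i n).le))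
  · refine le_trans ?_ (le_add_of_nonneg_left (mul_nonneg (abs_nonneg C) (hρ.pos i n).le))
    calc x n ≤ |D| := (hD n).trans (le_abs_self D)
      _ = |D| / ρ i N * ρ i N := (div_mul_cancel₀ _ (hρ.pos i N).ne').symm
      _ ≤ |D| / ρ i N * ρ i n := mul_le_mul_of_nonneg_left (hρ.anti i h) hD₀

end RateFamily

/-- Summable rates `r` whose tails decay at the rates `ρ`. -/
structure HasTailRate {ι κ : Type*} (r : ι → ℕ → ℝ) (ρ : κ → ℕ → ℝ) : Prop where
  summable : ∀ i, Summable (r i)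
  absTail_le : ∀ i, ∃ j C, ∀ n, absTail (r i) n ≤ C * ρ j n

theorem HasTailRate.summable_and_absTail_le {ι κ : Type*} {r : ι → ℕ → ℝ} {ρ : κ → ℕ → ℝ}
    (h : HasTailRate r ρ) {w : ℕ → ℝ} (hw₀ : ∀ n, 0 ≤ w n) {i : ι} {C : ℝ}
    (hw : ∀ n, w n ≤ C * r i n) :
    Summable w ∧ ∃ j C', ∀ n, absTail w n ≤ C' * ρ j n := by
  have hs : Summable fun n => C * r i n := (h.summable i).mul_left C
  refine ⟨.of_nonneg_of_le hw₀ hw hs, ?_⟩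
  obtain ⟨j, D, hD⟩ := h.absTail_le i
  refine ⟨j, |C| * D, fun n => ?_⟩
  calc absTail w n ≤ absTail (fun k => C * r i k) n :=
        absTail_mono hs.abs (fun k => abs_le_abs_of_nonneg (hw₀ k) (hw k)) n
    _ = |C| * absTail (r i) n := by simp only [absTail, abs_mul, tsum_mul_left]
    _ ≤ |C| * (D * ρ j n) := by gcongr; exact hD n
    _ = |C| * D * ρ j n := (mul_assoc _ _ _).symm

/-! ### Decay of the inverse of an absolutely convergent series -/

section Inverse

variable {ι : Type*} {ρ : ι → ℕ → ℝ} {a b : ℕ → ℝ}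

theorem absTail_add_le (ha : Summable fun n => |a n|) (hb : Summable fun n => |b n|) (n : ℕ) :
    absTail (fun k => a k + b k) n ≤ absTail a n + absTail b n := by
  have ha' := (summable_nat_add_iff n).2 ha
  have hb' := (summable_nat_add_iff n).2 hb
  rw [absTail, absTail, absTail, ← ha'.tsum_add hb']
  have hle (k : ℕ) : |a (k + n) + b (k + n)| ≤ |a (k + n)| + |b (k + n)| := abs_add_le _ _
  exact (Summable.of_nonneg_of_le (fun _ => abs_nonneg _) hle (ha'.add hb')).tsum_le_tsum hle
    (ha'.add hb')

theorem absTail_seqConv_zero_le (ha : Summable fun n => |a n|) (hb : Summable fun n => |b n|) :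
    absTail (seqConv a b) 0 ≤ absTail a 0 * absTail b 0 := by
  have ha' : Summable fun n => |(|a n|)| := by simpa only [abs_abs] using ha
  have hb' : Summable fun n => |(|b n|)| := by simpa only [abs_abs] using hb
  rw [absTail_zero a, absTail_zero b, ← tsum_seqConv ha' hb']
  exact (summable_abs_seqConv ha hb).tsum_le_tsum (abs_seqConv_le a b)
    (summable_abs_seqConv ha' hb').of_abs

theorem abs_indicator_le (s : Set ℕ) (b : ℕ → ℝ) (n : ℕ) : |s.indicator b n| ≤ |b n| := by
  simpa only [Real.norm_eq_abs] using norm_indicator_le_norm_self b n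

theorem summable_abs_indicator (hb : Summable fun n => |b n|) (s : Set ℕ) :
    Summable fun n => |s.indicator b n| :=
  .of_nonneg_of_le (fun _ => abs_nonneg _) (abs_indicator_le s b) hb

theorem absTail_indicator_Iio {N n : ℕ} (h : N ≤ n) : absTail ((Iio N).indicator b) n = 0 := by
  refine (tsum_congr fun k => ?_).trans tsum_zero
  rw [indicator_of_notMem (by rw [mem_Iio]; omega), abs_zero]

theorem absTail_indicator_Ici (hb : Summable fun n => |b n|) (N : ℕ) :
    absTail ((Ici N).indicator b) 0 = absTail b N := by
  rw [← sum_add_absTail (summable_abs_indicator hb _) N, Finset.sum_eq_zero, zero_add]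
  · refine tsum_congr fun k => ?_
    rw [indicator_of_mem (mem_Ici.2 (Nat.le_add_left N k))]
  · intro k hk
    rw [indicator_of_notMem (by simpa using hk), abs_zero]

/-- If `b = p + q` is the inverse of `a`, then `1 - a * q = a * p`. -/
theorem eq_add_seqConv_seqConv {p q : ℕ → ℝ} (hb : b = p + q)
    (hab : seqConv a b = Pi.single 0 1) (n : ℕ) :
    b n = p n + seqConv (seqConv a q) b n := by
  have hone := powerSeries_mk_mul_mk_eq_one hab
  have hmk : PowerSeries.mk b = PowerSeries.mk p + PowerSeries.mk q := by
    ext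
    simp [hb]
  have hfix : PowerSeries.mk b =
      PowerSeries.mk p + PowerSeries.mk (seqConv (seqConv a q) b) := by
    rw [powerSeries_mk_seqConv, powerSeries_mk_seqConv]
    linear_combination hmk - PowerSeries.mk q * hone
  simpa using congrArg (PowerSeries.coeff n) hfix

theorem absTail_seqConv_eq_of_ne_zero {p q : ℕ → ℝ} (hb : b = p + q)
    (hab : seqConv a b = Pi.single 0 1) {n : ℕ} (hn : n ≠ 0) :
    absTail (seqConv a q) n = absTail (seqConv a p) n := by
  refine tsum_congr fun k => ?_
  have hsum : seqConv a p (k + n) + seqConv a q (k + n) = 0 := by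
    rw [← Pi.single_eq_of_ne (M := fun _ : ℕ => ℝ) (by omega : k + n ≠ 0) 1, ← hab, hb]
    simp only [seqConv, Pi.add_apply, mul_add, Finset.sum_add_distrib]
  rw [eq_neg_of_add_eq_zero_right hsum, abs_neg]

/-- Cut `b = p + q` far out: the kernel `e = a * q` is then defective, and up to index `0` its
tails are those of `a * p`. -/
theorem IsRateFamily.exists_defective_decomposition (hρ : IsRateFamily ρ) {i : ι}
    (ha : Summable fun n => |a n|) (hb : Summable fun n => |b n|)
    {C : ℝ} (hC : ∀ n, absTail a n ≤ C * ρ i n) (hab : seqConv a b = Pi.single 0 1) :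
    ∃ p e : ℕ → ℝ, (Summable fun n => |p n|) ∧ (Summable fun n => |e n|) ∧ ∑' n, |e n| < 1 ∧
      (∀ n, b n = p n + seqConv e b n) ∧
      ∃ j C', ∀ n, absTail p n ≤ C' * ρ j n ∧ absTail e n ≤ C' * ρ j n := by
  obtain ⟨N, hN⟩ : ∃ N, absTail a 0 * absTail b N < 1 := by
    have hlim := (tendsto_absTail_zero b).const_mul (absTail a 0)
    rw [mul_zero] at hlim
    exact (hlim.eventually_lt_const zero_lt_one).exists
  set p : ℕ → ℝ := (Iio N).indicator b
  set q : ℕ → ℝ := (Ici N).indicator b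
  have hbpq : b = p + q := by
    rw [add_comm, ← indicator_self_add_compl (Ici N) b, compl_Ici]
  have hps : Summable fun n => |p n| := summable_abs_indicator hb _
  have hqs : Summable fun n => |q n| := summable_abs_indicator hb _
  have hes := summable_abs_seqConv ha hqs
  have he1 : ∑' n, |seqConv a q n| < 1 :=
    (absTail_seqConv_zero_le ha hqs).trans_lt (by rwa [absTail_indicator_Ici hb])
  refine ⟨p, seqConv a q, hps, hes, he1, eq_add_seqConv_seqConv hbpq hab, ?_⟩
  have hptail (k : ι) : ∃ Cp, ∀ n, absTail p n ≤ Cp * ρ k n :=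
    hρ.exists_le_of_eventually_le (C := 0) (fun n => absTail_antitone hps (Nat.zero_le n))
      fun n hn => by rw [zero_mul]; exact (absTail_indicator_Iio hn).le
  obtain ⟨Cp, hCp⟩ := hptail i
  obtain ⟨j, hj⟩ := hρ.exists_absTail_seqConv_le i
  obtain ⟨Cap, hCap⟩ := hj (absTail a 0) (absTail p 0) C Cp
  obtain ⟨Ce, hCe⟩ : ∃ Ce, ∀ n, absTail (seqConv a q) n ≤ Ce * ρ j n :=
    hρ.exists_le_of_eventually_le (fun n => absTail_antitone hes (Nat.zero_le n)) (N := 1)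
      fun n hn => (absTail_seqConv_eq_of_ne_zero hbpq hab (by omega)).trans_le
        (hCap a p ha hps le_rfl le_rfl hC hCp n)
  obtain ⟨Cp', hCp'⟩ := hptail j
  refine ⟨j, max Cp' Ce, fun n => ⟨(hCp' n).trans ?_, (hCe n).trans ?_⟩⟩
  exacts [mul_le_mul_of_nonneg_right (le_max_left _ _) (hρ.pos j n).le,
    mul_le_mul_of_nonneg_right (le_max_right _ _) (hρ.pos j n).le]

theorem IsRateFamily.exists_absTail_inverse_le (hρ : IsRateFamily ρ) {i : ι}
    (ha : Summable fun n => |a n|) (hb : Summable fun n => |b n|)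
    {C : ℝ} (hC : ∀ n, absTail a n ≤ C * ρ i n) (hab : seqConv a b = Pi.single 0 1) :
    ∃ j C', ∀ n, absTail b n ≤ C' * ρ j n := by
  obtain ⟨p, e, hps, hes, he1, hfix, j, C₁, hC₁⟩ :=
    hρ.exists_defective_decomposition ha hb hC hab
  obtain ⟨k, hk⟩ := hρ.renewal j (fun n => |e n|) (fun _ => abs_nonneg _) hes he1
    ⟨C₁, by simpa only [absTail, abs_abs] using fun n => (hC₁ n).2⟩
  obtain ⟨C', hC'⟩ := hk (C₁ + C₁ * absTail b 0)
  refine ⟨k, C', hC' (fun n => absTail p n + absTail e n * absTail b 0) _ (absTail_nonneg b)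
    (fun n => ?_) fun n => ?_⟩
  · linarith [(hC₁ n).1, mul_le_mul_of_nonneg_right (hC₁ n).2 (absTail_nonneg b 0)]
  · have hsub := absTail_add_le hps (summable_abs_seqConv hes hb) n
    rw [← funext hfix] at hsub
    linarith [absTail_seqConv_le hes hb n]

end Inverse

/-! ### The renewal theorem with rates -/

/-- The part of a total mass `σ` that is left after `g 0, …, g n` have been removed. For a
probability distribution `g` and `σ = 1` this is the survival function of `g`. -/
def survival (σ : ℝ) (g : ℕ → ℝ) (n : ℕ) : ℝ := σ - ∑ k ∈ Finset.range (n + 1), g k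

section Survival

variable {σ : ℝ} {g : ℕ → ℝ}

theorem survival_succ (σ : ℝ) (g : ℕ → ℝ) (n : ℕ) :
    survival σ g (n + 1) = survival σ g n - g (n + 1) := by
  rw [survival, survival, Finset.sum_range_succ _ (n + 1)]
  ring

theorem powerSeries_C_sub_mk (σ : ℝ) (g : ℕ → ℝ) :
    PowerSeries.C σ - PowerSeries.mk g =
      (1 - PowerSeries.X) * PowerSeries.mk (survival σ g) := by
  ext n
  rw [sub_mul, one_mul, map_sub, map_sub, PowerSeries.coeff_mk, PowerSeries.coeff_mk,
    PowerSeries.coeff_C]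
  cases n with
  | zero => simp [survival]
  | succ n => simp [PowerSeries.coeff_succ_X_mul, survival_succ]

theorem absTail_succ_le_survival (hg : ∀ n, 0 ≤ g n) (hS : ∀ n, 0 ≤ survival σ g n) (n : ℕ) :
    Summable g ∧ absTail g (n + 1) ≤ survival σ g n := by
  refine summable_and_absTail_le_of_sum_le hg fun N => ?_
  have hsplit := Finset.sum_range_add g (n + 1) N
  have hN := hS (n + N)
  rw [survival, show n + N + 1 = n + 1 + N by ring, hsplit] at hN
  rw [survival]
  simp only [add_comm _ (n + 1)]
  linarith

theorem tsum_le_of_survival_nonneg (hg : ∀ n, 0 ≤ g n) (hS : ∀ n, 0 ≤ survival σ g n) :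
    ∑' n, g n ≤ σ := by
  refine Real.tsum_le_of_sum_range_le hg fun N => ?_
  have hN := hS N
  rw [survival, Finset.sum_range_succ] at hN
  linarith [hg N]

theorem absTail_le_of_survival_le (hg : ∀ n, 0 ≤ g n) (hS : ∀ n, 0 ≤ survival σ g n)
    {B : ℕ → ℝ} (hB : Antitone B) (hσB : σ ≤ B 0) (hSB : ∀ n, survival σ g n ≤ B n) (n : ℕ) :
    absTail g n ≤ B (n / 2) := by
  cases n with
  | zero =>
    simp only [absTail_zero, abs_of_nonneg (hg _)]
    exact (tsum_le_of_survival_nonneg hg hS).trans hσB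
  | succ n =>
    exact (absTail_succ_le_survival hg hS n).2.trans ((hSB n).trans (hB (by omega)))

theorem hasSum_of_summable_survival (hg : ∀ n, 0 ≤ g n) (hS : Summable (survival σ g)) :
    HasSum g σ := by
  rw [hasSum_iff_tendsto_nat_of_nonneg hg, ← tendsto_add_atTop_iff_nat 1]
  simpa [survival] using hS.tendsto_atTop_zero.const_sub σ

theorem summable_ofReal_mul_pow (hg : ∀ n, 0 ≤ g n) (hgs : Summable g) {z : ℂ} (hz : ‖z‖ ≤ 1) :
    Summable fun n => (g n : ℂ) * z ^ n := by
  refine Summable.of_norm_bounded hgs fun n => ?_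
  rw [norm_mul, Complex.norm_real, Real.norm_of_nonneg (hg n), norm_pow]
  exact mul_le_of_le_one_right (hg n) (pow_le_one₀ (norm_nonneg _) hz)

theorem one_sub_mul_tsum_survival (hg : ∀ n, 0 ≤ g n) (hS₀ : ∀ n, 0 ≤ survival σ g n)
    (hS : Summable (survival σ g)) {z : ℂ} (hz : ‖z‖ ≤ 1) :
    (1 - z) * ∑' n, (survival σ g n : ℂ) * z ^ n = σ - ∑' n, (g n : ℂ) * z ^ n := by
  have hSz := summable_ofReal_mul_pow hS₀ hS hz
  have hgz := summable_ofReal_mul_pow hg (hasSum_of_summable_survival hg hS).summable hz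
  have hSz' := (summable_nat_add_iff 1).2 hSz
  have hstep (n : ℕ) : (g (n + 1) : ℂ) * z ^ (n + 1) =
      (survival σ g n : ℂ) * z ^ n * z - (survival σ g (n + 1) : ℂ) * z ^ (n + 1) := by
    rw [survival_succ]
    push_cast
    ring
  have hzero : (survival σ g 0 : ℂ) = σ - g 0 := by simp [survival]
  rw [hgz.tsum_eq_zero_add, tsum_congr hstep, (hSz.mul_right z).tsum_sub hSz', tsum_mul_right]
  have hSsplit := hSz.tsum_eq_zero_add
  rw [hzero] at hSsplit
  linear_combination hSsplit

end Survival

section Renewal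

variable {f : ℕ → ℝ}

theorem eq_one_of_norm_le_one_of_re_eq_one {w : ℂ} (hw : ‖w‖ ≤ 1) (hre : w.re = 1) : w = 1 := by
  have hnorm : |w.re| = ‖w‖ :=
    le_antisymm (Complex.abs_re_le_norm w) (by rwa [hre, abs_one])
  exact Complex.ext hre (Complex.abs_re_eq_norm.1 hnorm)

theorem pow_eq_one_of_tsum_mul_pow_eq_one (hf : ∀ n, 0 ≤ f n) (hf1 : HasSum f 1) {z : ℂ}
    (hz : ‖z‖ ≤ 1) (hfz : ∑' n, (f n : ℂ) * z ^ n = 1) {n : ℕ} (hn : 0 < f n) : z ^ n = 1 := by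
  have hzn (n : ℕ) : ‖z ^ n‖ ≤ 1 := by
    rw [norm_pow]
    exact pow_le_one₀ (norm_nonneg _) hz
  have hre : HasSum (fun n => f n * (z ^ n).re) 1 := by
    have hsum := Complex.hasSum_re (summable_ofReal_mul_pow hf hf1.summable hz).hasSum
    rw [hfz] at hsum
    simpa only [Complex.re_ofReal_mul, Complex.one_re] using hsum
  have hdefect : HasSum (fun n => f n * (1 - (z ^ n).re)) 0 := by
    simpa only [mul_sub, mul_one, sub_self] using hf1.sub hre
  have hdefect_nonneg (n : ℕ) : 0 ≤ f n * (1 - (z ^ n).re) :=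
    mul_nonneg (hf n) (sub_nonneg.2 ((Complex.re_le_norm _).trans (hzn n)))
  have hzero := congrFun ((hasSum_zero_iff_of_nonneg hdefect_nonneg).1 hdefect) n
  exact eq_one_of_norm_le_one_of_re_eq_one (hzn n)
    (sub_eq_zero.1 ((mul_eq_zero.1 hzero).resolve_left hn.ne')).symm

/-- A zero `z` would satisfy `∑ f n * z ^ n = 1`, which aperiodicity only allows for `z = 1`. -/
theorem tsum_survival_mul_pow_ne_zero (hf : ∀ n, 0 ≤ f n) (hf₀ : f 0 = 0)
    (hgcd : ∀ d : ℕ, (∀ n, 0 < f n → d ∣ n) → d = 1) (hS₀ : ∀ n, 0 ≤ survival 1 f n)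
    (hS : Summable (survival 1 f)) {z : ℂ} (hz : ‖z‖ ≤ 1) :
    ∑' n, (survival 1 f n : ℂ) * z ^ n ≠ 0 := by
  intro hzero
  have hfz := one_sub_mul_tsum_survival hf hS₀ hS hz
  rw [hzero, mul_zero, Complex.ofReal_one, eq_comm, sub_eq_zero, eq_comm] at hfz
  obtain rfl : z = 1 := orderOf_eq_one_iff.1 <| hgcd _ fun n hn => orderOf_dvd_of_pow_eq_one <|
    pow_eq_one_of_tsum_mul_pow_eq_one hf (hasSum_of_summable_survival hf hS) hz hfz hn
  simp only [one_pow, mul_one, ← Complex.ofReal_tsum, Complex.ofReal_eq_zero] at hzero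
  have hle := hS.le_tsum 0 fun n _ => hS₀ n
  simp only [survival, zero_add, Finset.sum_range_one, hf₀, sub_zero] at hle
  linarith! [hzero]

theorem eq_sum_of_one_sub_X_mul_eq {y c : ℕ → ℝ}
    (h : (1 - PowerSeries.X) * PowerSeries.mk y = PowerSeries.mk c) (n : ℕ) :
    y n = ∑ k ∈ Finset.range (n + 1), c k := by
  have hmk : PowerSeries.mk y = PowerSeries.mk (seqConv c 1) := by
    have hone : PowerSeries.mk (1 : ℕ → ℝ) * (1 - PowerSeries.X) = 1 :=
      PowerSeries.mk_one_mul_one_sub_eq_one ℝ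
    rw [powerSeries_mk_seqConv]
    linear_combination PowerSeries.mk 1 * h - PowerSeries.mk y * hone
  simpa [seqConv] using congrArg (PowerSeries.coeff n) hmk

theorem eq_sum_seqConv_of_renewal {b w y : ℕ → ℝ}
    (hb : seqConv (survival 1 f) b = Pi.single 0 1) (hy : ∀ n, y n = w n + seqConv f y n) (n : ℕ) :
    y n = ∑ k ∈ Finset.range (n + 1), seqConv w b k := by
  refine eq_sum_of_one_sub_X_mul_eq ?_ n
  have hone := powerSeries_mk_mul_mk_eq_one hb
  have hsurvival := powerSeries_C_sub_mk 1 f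
  have hrenewal : PowerSeries.mk y = PowerSeries.mk w + PowerSeries.mk f * PowerSeries.mk y := by
    rw [← powerSeries_mk_seqConv]
    ext n
    simp [hy n]
  rw [map_one] at hsurvival
  rw [powerSeries_mk_seqConv]
  linear_combination PowerSeries.mk b * (hrenewal - PowerSeries.mk y * hsurvival) -
    (1 - PowerSeries.X) * PowerSeries.mk y * hone

theorem abs_sum_range_sub_tsum_le_absTail {c : ℕ → ℝ} (hc : Summable fun n => |c n|) (n : ℕ) :
    |∑ k ∈ Finset.range n, c k - ∑' k, c k| ≤ absTail c n := by
  rw [← hc.of_abs.sum_add_tsum_nat_add n, sub_add_cancel_left, abs_neg]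
  have htail : Summable fun k => ‖c (k + n)‖ := (summable_nat_add_iff n).2 hc
  exact norm_tsum_le_tsum_norm htail

/-- With `b` the inverse of the survival function, the solution of the renewal equation is the
sequence of partial sums of `w * b`, so it converges at the rate of the tails of `w * b`. -/
theorem IsRateFamily.exists_renewal_le {ι : Type*} {ρ : ι → ℕ → ℝ} (hρ : IsRateFamily ρ)
    (hf : ∀ n, 0 ≤ f n) (hf₀ : f 0 = 0) (hgcd : ∀ d : ℕ, (∀ n, 0 < f n → d ∣ n) → d = 1)
    (hS₀ : ∀ n, 0 ≤ survival 1 f n) (hS : Summable (survival 1 f))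
    {i : ι} {C : ℝ} (hC : ∀ n, absTail (survival 1 f) n ≤ C * ρ i n) :
    ∃ j C', ∀ w y : ℕ → ℝ, (∀ n, 0 ≤ w n) → (∀ n, w n ≤ survival 1 f n) →
      (∀ n, y n = w n + seqConv f y n) →
      ∀ n, |y n - (∑' k, w k) / ∑' k, survival 1 f k| ≤ C' * ρ j n := by
  obtain ⟨b, hb, hSb⟩ := exists_summable_abs_seqConv_eq_single hS.abs fun z hz =>
    tsum_survival_mul_pow_ne_zero hf hf₀ hgcd hS₀ hS hz
  obtain ⟨i', Cb, hCb⟩ := hρ.exists_absTail_inverse_le hS.abs hb hC hSb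
  obtain ⟨k, D, -, hk⟩ := hρ.directed i i'
  have hStail (n : ℕ) : absTail (survival 1 f) n ≤ |C| * D * ρ k n := by
    rw [mul_assoc]
    exact (hρ.le_abs_mul (hC n)).trans (mul_le_mul_of_nonneg_left (hk n).1 (abs_nonneg _))
  have hbtail (n : ℕ) : absTail b n ≤ |Cb| * D * ρ k n := by
    rw [mul_assoc]
    exact (hρ.le_abs_mul (hCb n)).trans (mul_le_mul_of_nonneg_left (hk n).2 (abs_nonneg _))
  obtain ⟨j, hj⟩ := hρ.exists_absTail_seqConv_le k
  obtain ⟨C', hC'⟩ := hj (absTail (survival 1 f) 0) (absTail b 0) (|C| * D) (|Cb| * D)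
  refine ⟨j, C', fun w y hw hwS hy n => ?_⟩
  have hwabs (n : ℕ) : |w n| ≤ |survival 1 f n| := abs_le_abs_of_nonneg (hw n) (hwS n)
  have hws : Summable fun n => |w n| := .of_nonneg_of_le (fun _ => abs_nonneg _) hwabs hS.abs
  have hwb := summable_abs_seqConv hws hb
  have hlimit : (∑' k, w k) / ∑' k, survival 1 f k = ∑' k, seqConv w b k := by
    have hinv : (∑' k, survival 1 f k) * ∑' k, b k = 1 := by
      rw [← tsum_seqConv hS.abs hb, hSb, tsum_pi_single]
    rw [tsum_seqConv hws hb, div_eq_iff (left_ne_zero_of_mul_eq_one hinv), mul_assoc,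
      mul_comm (∑' k, b k), hinv, mul_one]
  rw [hlimit, eq_sum_seqConv_of_renewal hSb hy]
  calc |∑ k ∈ Finset.range (n + 1), seqConv w b k - ∑' k, seqConv w b k|
      ≤ absTail (seqConv w b) (n + 1) := abs_sum_range_sub_tsum_le_absTail hwb _
    _ ≤ absTail (seqConv w b) n := absTail_antitone hwb n.le_succ
    _ ≤ C' * ρ j n := hC' w b hws hb (absTail_mono hS.abs hwabs 0) le_rfl
        (fun n => (absTail_mono hS.abs hwabs n).trans (hStail n)) hbtail n

end Renewal

/-- The waiting-time law with survival function `Q` (where `Q 0 = 1`), thinned by the probability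
`1 - ε` of not being stopped. -/
def thinnedKernel (ε : ℝ) (Q : ℕ → ℝ) : ℕ → ℝ
  | 0 => 0
  | n + 1 => (1 - ε) * (Q n - Q (n + 1))

section Thinned

variable {ε : ℝ} {Q : ℕ → ℝ}

theorem thinnedKernel_nonneg (hε : ε ≤ 1) (hQ : Antitone Q) (n : ℕ) :
    0 ≤ thinnedKernel ε Q n := by
  cases n with
  | zero => exact le_rfl
  | succ n => exact mul_nonneg (sub_nonneg.2 hε) (sub_nonneg.2 (hQ n.le_succ))

theorem survival_thinnedKernel (ε : ℝ) (hQ₁ : Q 0 = 1) (n : ℕ) :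
    survival (1 - ε) (thinnedKernel ε Q) n = (1 - ε) * Q n := by
  induction n with
  | zero => simp [survival, thinnedKernel, hQ₁]
  | succ n ih =>
    rw [survival_succ, ih, thinnedKernel]
    ring

theorem survival_thinnedKernel_nonneg (hε : ε ≤ 1) (hQ₀ : ∀ n, 0 ≤ Q n) (hQ₁ : Q 0 = 1) (n : ℕ) :
    0 ≤ survival (1 - ε) (thinnedKernel ε Q) n := by
  rw [survival_thinnedKernel ε hQ₁]
  exact mul_nonneg (sub_nonneg.2 hε) (hQ₀ n)

theorem absTail_thinnedKernel_le (hε₀ : 0 ≤ ε) (hε : ε ≤ 1) (hQ : Antitone Q)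
    (hQ₀ : ∀ n, 0 ≤ Q n) (hQ₁ : Q 0 = 1) (n : ℕ) :
    absTail (thinnedKernel ε Q) n ≤ Q (n / 2) := by
  refine absTail_le_of_survival_le (thinnedKernel_nonneg hε hQ)
    (survival_thinnedKernel_nonneg hε hQ₀ hQ₁) hQ (by linarith) (fun n => ?_) n
  rw [survival_thinnedKernel ε hQ₁]
  exact mul_le_of_le_one_left (hQ₀ n) (by linarith)

theorem seqConv_survival_eq (ε : ℝ) (hQ₁ : Q 0 = 1) (σ : ℝ) (g : ℕ → ℝ) (n : ℕ) :
    (1 - ε) * seqConv g Q n =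
      (1 - ε) * (σ * Q n - survival σ g n) + seqConv (thinnedKernel ε Q) (survival σ g) n := by
  have hg := powerSeries_C_sub_mk σ g
  have hkernel := powerSeries_C_sub_mk (1 - ε) (thinnedKernel ε Q)
  have hmk : PowerSeries.mk (survival (1 - ε) (thinnedKernel ε Q)) =
      PowerSeries.C (1 - ε) * PowerSeries.mk Q := by
    ext m
    rw [PowerSeries.coeff_C_mul, PowerSeries.coeff_mk, PowerSeries.coeff_mk,
      survival_thinnedKernel ε hQ₁]
  rw [hmk] at hkernel
  have hseries : PowerSeries.C (1 - ε) * PowerSeries.mk (seqConv g Q) =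
      PowerSeries.C (1 - ε) *
          (PowerSeries.C σ * PowerSeries.mk Q - PowerSeries.mk (survival σ g)) +
        PowerSeries.mk (seqConv (thinnedKernel ε Q) (survival σ g)) := by
    rw [powerSeries_mk_seqConv, powerSeries_mk_seqConv]
    linear_combination PowerSeries.mk (survival σ g) * hkernel -
      PowerSeries.C (1 - ε) * PowerSeries.mk Q * hg
  have hcoeff := congrArg (PowerSeries.coeff n) hseries
  rwa [map_add, PowerSeries.coeff_C_mul, PowerSeries.coeff_C_mul, map_sub, PowerSeries.coeff_C_mul,
    PowerSeries.coeff_mk, PowerSeries.coeff_mk, PowerSeries.coeff_mk,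
    PowerSeries.coeff_mk] at hcoeff

theorem survival_le_add_seqConv_thinnedKernel (hε₀ : 0 < ε) (hQ₁ : Q 0 = 1) {σ s : ℝ}
    {g : ℕ → ℝ} {n : ℕ} (h : survival σ g n ≤ s + (1 - ε) / ε * seqConv g Q n) :
    survival σ g n ≤
      ε * s + (1 - ε) * (σ * Q n) + seqConv (thinnedKernel ε Q) (survival σ g) n := by
  have hε_mul := mul_le_mul_of_nonneg_left h hε₀.le
  rw [mul_add, ← mul_assoc, mul_div_cancel₀ _ hε₀.ne', seqConv_survival_eq ε hQ₁ σ g n] at hε_mul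
  linarith

/-- If each arrival of a mass at the base is stopped with probability `ε`, and the waiting times
between arrivals are dominated by a law with survival function `Q`, then the mass that has not yet
been stopped decays at the rate of `Q`. -/
theorem IsRateFamily.exists_stopped_le {ι : Type*} {ρ : ι → ℕ → ℝ} (hρ : IsRateFamily ρ)
    (hε₀ : 0 < ε) (hε : ε ≤ 1) (hQ : Antitone Q) (hQ₀ : ∀ n, 0 ≤ Q n) (hQ₁ : Q 0 = 1)
    {i : ι} {CQ : ℝ} (hCQ : ∀ n, Q n ≤ CQ * ρ i n) :
    ∃ j, ∀ C σ₀, ∃ C', ∀ (g s : ℕ → ℝ) (σ : ℝ), σ ≤ σ₀ → 0 ≤ σ →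
      (∀ n, 0 ≤ survival σ g n) → (∀ n, s n ≤ C * ρ i n) →
      (∀ n, survival σ g n ≤ s n + (1 - ε) / ε * seqConv g Q n) →
      ∀ n, survival σ g n ≤ C' * ρ j n := by
  obtain ⟨k, D, -, hk⟩ := hρ.half i
  have hik (n : ℕ) : ρ i n ≤ D * ρ k n := (hρ.anti i (Nat.div_le_self n 2)).trans (hk n)
  have htail (n : ℕ) : absTail (thinnedKernel ε Q) n ≤ |CQ| * D * ρ k n := by
    calc absTail (thinnedKernel ε Q) n
        ≤ Q (n / 2) := absTail_thinnedKernel_le hε₀.le hε hQ hQ₀ hQ₁ n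
      _ ≤ |CQ| * ρ i (n / 2) := hρ.le_abs_mul (hCQ _)
      _ ≤ |CQ| * (D * ρ k n) := mul_le_mul_of_nonneg_left (hk n) (abs_nonneg _)
      _ = |CQ| * D * ρ k n := (mul_assoc _ _ _).symm
  have hkernel := thinnedKernel_nonneg hε hQ
  have hkernelS := survival_thinnedKernel_nonneg hε hQ₀ hQ₁
  have hlt : ∑' n, thinnedKernel ε Q n < 1 :=
    (tsum_le_of_survival_nonneg hkernel hkernelS).trans_lt (by linarith)
  obtain ⟨j, hj⟩ := hρ.renewal k _ hkernel (absTail_succ_le_survival hkernel hkernelS 0).1 hlt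
    ⟨_, htail⟩
  refine ⟨j, fun C σ₀ => ?_⟩
  obtain ⟨C', hC'⟩ := hj (ε * (|C| * D) + (1 - ε) * (σ₀ * (|CQ| * D)))
  refine ⟨C', fun g s σ hσ hσ₀ hS hs hsub => hC' _ _ hS (fun n => ?_) fun n =>
    survival_le_add_seqConv_thinnedKernel hε₀ hQ₁ (hsub n)⟩
  have hsn : s n ≤ |C| * D * ρ k n := by
    rw [mul_assoc]
    exact (hρ.le_abs_mul (hs n)).trans (mul_le_mul_of_nonneg_left (hik n) (abs_nonneg _))
  have hQn : σ * Q n ≤ σ₀ * (|CQ| * D * ρ k n) := by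
    refine mul_le_mul hσ ?_ (hQ₀ n) (hσ₀.trans hσ)
    rw [mul_assoc]
    exact (hρ.le_abs_mul (hCQ n)).trans (mul_le_mul_of_nonneg_left (hik n) (abs_nonneg _))
  linarith [mul_le_mul_of_nonneg_left hsn hε₀.le,
    mul_le_mul_of_nonneg_left hQn (sub_nonneg.2 hε)]

end Thinned

section Delayed

variable {g v y b : ℕ → ℝ} {σ L : ℝ}

theorem abs_add_seqConv_sub_le (hg : ∀ n, 0 ≤ g n) (hv₀ : ∀ n, 0 ≤ v n)
    (hv : ∀ n, v n ≤ survival σ g n) (hL₀ : 0 ≤ L) (hL₁ : L ≤ 1) (hb : Antitone b)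
    (hy : ∀ n, |y n - L| ≤ b n) (n : ℕ) :
    |v n + seqConv g y n - σ * L| ≤
      survival σ g n + ((∑' k, g k) * b (n / 2) + b 0 * absTail g (n / 2)) := by
  have hS (n : ℕ) : 0 ≤ survival σ g n := (hv₀ n).trans (hv n)
  have hgs := (absTail_succ_le_survival hg hS 0).1
  have hdecomp : v n + seqConv g y n - σ * L =
      (v n - survival σ g n * L) + seqConv g (fun m => y m - L) n := by
    simp only [seqConv, survival, mul_sub, Finset.sum_sub_distrib, ← Finset.sum_mul]
    ring
  have hpending : |v n - survival σ g n * L| ≤ survival σ g n := by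
    rw [abs_le]
    constructor <;> linarith [hv₀ n, hv n, mul_nonneg (hS n) hL₀,
      mul_le_of_le_one_right (hS n) hL₁]
  have harrived : |seqConv g (fun m => y m - L) n| ≤ seqConv g b n := by
    refine (abs_seqConv_le _ _ n).trans ?_
    simp only [abs_of_nonneg (hg _)]
    exact seqConv_mono hg (fun _ => abs_nonneg _) (fun _ => le_rfl) hy n
  rw [hdecomp]
  exact (abs_add_le _ _).trans (add_le_add hpending (harrived.trans
    (seqConv_le_half hg hgs (fun n => (abs_nonneg _).trans (hy n)) hb n)))

theorem IsRateFamily.exists_delayed_le {ι : Type*} {ρ : ι → ℕ → ℝ} (hρ : IsRateFamily ρ) (i : ι) :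
    ∃ j, ∀ Cy CV σ₀, ∃ C', ∀ (y g v : ℕ → ℝ) (L σ : ℝ), 0 ≤ L → L ≤ 1 → σ ≤ σ₀ →
      (∀ n, |y n - L| ≤ Cy * ρ i n) → (∀ n, 0 ≤ g n) →
      (∀ n, survival σ g n ≤ CV * ρ i n) → (∀ n, 0 ≤ v n) → (∀ n, v n ≤ survival σ g n) →
      ∀ n, |v n + seqConv g y n - σ * L| ≤ C' * ρ j n := by
  obtain ⟨k, D, hD, hk⟩ := hρ.half i
  obtain ⟨j, D', -, hj⟩ := hρ.half k
  refine ⟨j, fun Cy CV σ₀ => ?_⟩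
  set B := |CV| + |σ₀| / ρ i 0
  have hσ₀ : 0 ≤ |σ₀| / ρ i 0 := div_nonneg (abs_nonneg _) (hρ.pos i 0).le
  have hB₀ : 0 ≤ B := add_nonneg (abs_nonneg _) hσ₀
  set C := |CV| + |σ₀| * |Cy| + |Cy| * ρ i 0 * B
  have hC₀ : 0 ≤ C := by
    have := (hρ.pos i 0).le
    positivity
  refine ⟨C * (D * D'), fun y g v L σ hL₀ hL₁ hσ hy hg hCV hv₀ hv n => ?_⟩
  have hS (n : ℕ) : 0 ≤ survival σ g n := (hv₀ n).trans (hv n)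
  have hscaled {c : ℝ} (hc : 0 ≤ c) : Antitone fun n => c * ρ i n := (hρ.anti i).const_mul hc
  have htail : absTail g (n / 2) ≤ B * ρ i (n / 2 / 2) := by
    refine absTail_le_of_survival_le hg hS (hscaled hB₀) ?_ (fun n => ?_) _
    · rw [add_mul, div_mul_cancel₀ _ (hρ.pos i 0).ne']
      linarith [le_abs_self σ₀, mul_nonneg (abs_nonneg CV) (hρ.pos i 0).le]
    · exact (hρ.le_abs_mul (hCV n)).trans
        (mul_le_mul_of_nonneg_right (le_add_of_nonneg_right hσ₀) (hρ.pos i n).le)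
  have hmass : ∑' k, g k ≤ |σ₀| :=
    (tsum_le_of_survival_nonneg hg hS).trans (hσ.trans (le_abs_self σ₀))
  have hle : ρ i (n / 2) ≤ ρ i (n / 2 / 2) := hρ.anti i (Nat.div_le_self _ _)
  calc |v n + seqConv g y n - σ * L|
      ≤ survival σ g n + ((∑' k, g k) * (|Cy| * ρ i (n / 2)) +
          |Cy| * ρ i 0 * absTail g (n / 2)) :=
        abs_add_seqConv_sub_le hg hv₀ hv hL₀ hL₁ (hscaled (abs_nonneg Cy))
          (fun n => hρ.le_abs_mul (hy n)) n
    _ ≤ |CV| * ρ i (n / 2 / 2) + (|σ₀| * (|Cy| * ρ i (n / 2 / 2)) +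
          |Cy| * ρ i 0 * (B * ρ i (n / 2 / 2))) := by
        have hSn : survival σ g n ≤ |CV| * ρ i (n / 2 / 2) := (hρ.le_abs_mul (hCV n)).trans
          (hscaled (abs_nonneg CV) ((Nat.div_le_self _ _).trans (Nat.div_le_self _ _)))
        have := (hρ.pos i 0).le
        have := (hρ.pos i (n / 2)).le
        gcongr
    _ = C * ρ i (n / 2 / 2) := by ring
    _ ≤ C * (D * (D' * ρ j n)) := mul_le_mul_of_nonneg_left
        ((hk _).trans (mul_le_mul_of_nonneg_left (hj n) hD.le)) hC₀
    _ = C * (D * D') * ρ j n := by ring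

end Delayed

theorem epow_nonneg {β : ℝ} (hβ : 0 ≤ β) (s : ℕ∞) : 0 ≤ epow β s := by
  rw [epow]
  split_ifs
  exacts [le_rfl, pow_nonneg hβ _]

theorem epow_le_one {β : ℝ} (hβ : 0 ≤ β) (hβ₁ : β ≤ 1) (s : ℕ∞) : epow β s ≤ 1 := by
  rw [epow]
  split_ifs
  exacts [zero_le_one, pow_le_one₀ hβ hβ₁]

theorem epow_antitone {β : ℝ} (hβ : 0 ≤ β) (hβ₁ : β ≤ 1) : Antitone (epow β) := fun s t h => by
  by_cases ht : t = ⊤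
  · rw [ht, epow, if_pos rfl]
    exact epow_nonneg hβ s
  · rw [epow, epow, if_neg ht, if_neg (ne_top_of_le_ne_top ht h)]
    exact pow_le_pow_of_le_one hβ hβ₁ (ENat.toNat_le_toNat h ht)

theorem epow_natCast (β : ℝ) (n : ℕ) : epow β n = β ^ n := by
  simp [epow]

theorem epow_add_one (β : ℝ) (s : ℕ∞) : epow β (s + 1) = β * epow β s := by
  by_cases hs : s = ⊤
  · simp [hs, epow]
  · have hs' : s + 1 ≠ ⊤ := by simpa using hs
    rw [epow, epow, if_neg hs', if_neg hs, ENat.toNat_add hs (by simp), ENat.toNat_one, pow_succ']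

theorem sepTime_comm {X : Type*} (I : Set ℕ) (Λ : ℕ → Set X) (FR : X → X) (x y : X) :
    sepTime I Λ FR x y = sepTime I Λ FR y x := by
  simp only [sepTime, and_comm]

theorem sepTime_FR_add_one_le {X : Type*} {I : Set ℕ} {Λ : ℕ → Set X} {FR : X → X} {i : ℕ}
    (hi : i ∈ I) {x y : X} (hx : x ∈ Λ i) (hy : y ∈ Λ i) :
    sepTime I Λ FR (FR x) (FR y) + 1 ≤ sepTime I Λ FR x y := by
  refine le_iInf₂ fun n hn => ?_
  cases n with
  | zero => exact absurd ⟨i, hi, hx, hy⟩ hn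
  | succ n =>
    push_cast
    gcongr
    refine iInf₂_le n ?_
    simpa only [mem_ofPred_eq, Function.iterate_succ_apply] using hn

theorem nullMeasurableSet_of_measure_add_measure_compl_le {X : Type*} [MeasurableSpace X]
    {μ : Measure X} [IsFiniteMeasure μ] {s : Set X} (h : μ s + μ sᶜ ≤ μ univ) :
    NullMeasurableSet s μ := by
  set B := toMeasurable μ s
  set B' := toMeasurable μ sᶜ
  have hB : MeasurableSet B := measurableSet_toMeasurable _ _
  have hcover : B ∪ B' = univ := univ_subset_iff.1 <| (union_compl_self s).symm.subset.trans
    (union_subset_union (subset_toMeasurable _ _) (subset_toMeasurable _ _))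
  have hinter : μ (B ∩ B') = 0 := by
    have hadd := measure_union_add_inter (μ := μ) B (measurableSet_toMeasurable μ sᶜ)
    rw [hcover, measure_toMeasurable, measure_toMeasurable] at hadd
    exact le_zero_iff.1 ((ENNReal.add_le_add_iff_left (measure_ne_top μ univ)).1
      (hadd.le.trans (h.trans (add_zero _).ge)))
  refine hB.nullMeasurableSet.congr (EventuallyLE.antisymm ?_ ?_)
  · exact ae_le_set.2 (measure_mono_null
      (inter_subset_inter_right _ (subset_toMeasurable μ sᶜ)) hinter)
  · exact (subset_toMeasurable μ s).eventuallyLE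

namespace YoungTower

variable (T : YoungTower.{u})

/-! ### Transfer operators of the return map -/

/-- The symbolic distance `β ^ s(x, y)` on the base. -/
def sepDist (x y : T.Δ₀) : ℝ := epow T.β (sepTime T.I T.Λ T.FR x y)

theorem sepDist_nonneg (x y : T.Δ₀) : 0 ≤ T.sepDist x y := epow_nonneg T.β_pos.le _

theorem sepDist_le_one (x y : T.Δ₀) : T.sepDist x y ≤ 1 := epow_le_one T.β_pos.le T.β_lt_one.le _

theorem sepDist_comm (x y : T.Δ₀) : T.sepDist x y = T.sepDist y x := by
  rw [sepDist, sepDist, sepTime_comm]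

theorem sepDist_le_mul {i : ℕ} (hi : i ∈ T.I) {x y : T.Δ₀} (hx : x ∈ T.Λ i) (hy : y ∈ T.Λ i) :
    T.sepDist x y ≤ T.β * T.sepDist (T.FR x) (T.FR y) := by
  rw [sepDist, sepDist, ← epow_add_one]
  exact epow_antitone T.β_pos.le T.β_lt_one.le (sepTime_FR_add_one_le hi hx hy)

/-- The inverse branch of the return map with values in `Λ i`. -/
def branch (i : ℕ) (y : T.Δ₀) : T.Δ₀ := @Function.invFunOn _ _ ⟨y⟩ T.FR (T.Λ i) y

variable {T} {i : ℕ}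

theorem branch_mem (hi : i ∈ T.I) (y : T.Δ₀) : T.branch i y ∈ T.Λ i :=
  have : Nonempty T.Δ₀ := ⟨y⟩
  Function.invFunOn_mem ((T.FR_bij i hi).surjOn (mem_univ y))

theorem FR_branch (hi : i ∈ T.I) (y : T.Δ₀) : T.FR (T.branch i y) = y :=
  have : Nonempty T.Δ₀ := ⟨y⟩
  Function.invFunOn_eq ((T.FR_bij i hi).surjOn (mem_univ y))

theorem branch_FR (hi : i ∈ T.I) {x : T.Δ₀} (hx : x ∈ T.Λ i) : T.branch i (T.FR x) = x :=
  (T.FR_bij i hi).injOn (branch_mem hi _) hx (FR_branch hi _)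

theorem preimage_branch (hi : i ∈ T.I) (S : Set T.Δ₀) :
    T.branch i ⁻¹' S = T.FR '' (T.Λ i ∩ S) := by
  ext y
  constructor
  · exact fun hy => ⟨_, ⟨branch_mem hi y, hy⟩, FR_branch hi y⟩
  · rintro ⟨x, ⟨hx, hxS⟩, rfl⟩
    rwa [mem_preimage, branch_FR hi hx]

theorem measure_preimage_branch (hi : i ∈ T.I) {S : Set T.Δ₀} (hS : MeasurableSet S) :
    T.m₀ (T.branch i ⁻¹' S) = ∫⁻ x in T.Λ i ∩ S, ENNReal.ofReal (T.JFR x) ∂T.m₀ := by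
  rw [preimage_branch hi, T.JFR_jac i hi _ inter_subset_left ((T.Λ_meas i hi).inter hS)]

theorem map_FR_withDensity (hi : i ∈ T.I) :
    ((T.m₀.restrict (T.Λ i)).withDensity fun x => ENNReal.ofReal (T.JFR x)).map T.FR = T.m₀ := by
  ext E hE
  have hFE := T.FR_meas hE
  rw [Measure.map_apply T.FR_meas hE, withDensity_apply _ hFE, Measure.restrict_restrict hFE,
    inter_comm, ← measure_preimage_branch hi hFE]
  congr 1
  ext y
  simp only [mem_preimage, FR_branch hi]

/-- The inverse branches are only measurable modulo null sets: the images of measurable sets under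
the return map are controlled through their outer measures. -/
theorem nullMeasurable_branch (hi : i ∈ T.I) : NullMeasurable (T.branch i) T.m₀ := fun S hS => by
  refine nullMeasurableSet_of_measure_add_measure_compl_le (le_of_eq ?_)
  rw [← preimage_compl, measure_preimage_branch hi hS, measure_preimage_branch hi hS.compl,
    ← sdiff_eq, lintegral_inter_add_sdiff _ _ hS, ← inter_univ (T.Λ i),
    ← measure_preimage_branch hi .univ, preimage_univ]

theorem tendsto_branch_ae (hi : i ∈ T.I) : Tendsto (T.branch i) (ae T.m₀) (ae T.m₀) := by
  intro S hS
  obtain ⟨N, hSN, hN, hN₀⟩ := exists_measurable_superset_of_null (mem_ae_iff.1 hS)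
  refine mem_ae_iff.2 (measure_mono_null (preimage_mono hSN) ?_)
  rw [measure_preimage_branch hi hN]
  exact setLIntegral_measure_zero _ _ (measure_mono_null inter_subset_right hN₀)

theorem aemeasurable_comp_branch (hi : i ∈ T.I) {k : T.Δ₀ → ℝ≥0∞} (hk : AEMeasurable k T.m₀) :
    AEMeasurable (fun y => k (T.branch i y)) T.m₀ :=
  (hk.measurable_mk.comp_nullMeasurable (nullMeasurable_branch hi)).aemeasurable.congr
    (hk.ae_eq_mk.symm.comp_tendsto (tendsto_branch_ae hi))

variable (T) in
/-- The contribution of the branch `i` to the density of the push-forward under the return map. -/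
def branchTransfer (i : ℕ) (h : T.Δ₀ → ℝ≥0∞) (y : T.Δ₀) : ℝ≥0∞ :=
  h (T.branch i y) / ENNReal.ofReal (T.JFR (T.branch i y))

theorem aemeasurable_branchTransfer (hi : i ∈ T.I) {h : T.Δ₀ → ℝ≥0∞}
    (hh : AEMeasurable h T.m₀) : AEMeasurable (T.branchTransfer i h) T.m₀ :=
  aemeasurable_comp_branch hi (hh.div T.JFR_meas.ennreal_ofReal.aemeasurable)

theorem lintegral_branchTransfer_mul (hi : i ∈ T.I) {h G : T.Δ₀ → ℝ≥0∞}
    (hh : AEMeasurable h T.m₀) (hG : Measurable G) :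
    ∫⁻ y, T.branchTransfer i h y * G y ∂T.m₀ = ∫⁻ x in T.Λ i, h x * G (T.FR x) ∂T.m₀ := by
  have hmeas : AEMeasurable (fun y => T.branchTransfer i h y * G y) T.m₀ :=
    (aemeasurable_branchTransfer hi hh).mul hG.aemeasurable
  rw [← map_FR_withDensity hi] at hmeas
  conv_lhs => rw [← map_FR_withDensity hi]
  rw [lintegral_map' hmeas T.FR_meas.aemeasurable,
    lintegral_withDensity_eq_lintegral_mul₀' T.JFR_meas.ennreal_ofReal.aemeasurable
      (g := fun x => T.branchTransfer i h (T.FR x) * G (T.FR x))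
      (hmeas.comp_aemeasurable T.FR_meas.aemeasurable)]
  refine setLIntegral_congr_fun (T.Λ_meas i hi) fun x hx => ?_
  have hJx : ENNReal.ofReal (T.JFR x) ≠ 0 := by
    simpa using T.JFR_pos i hi x hx
  simp only [Pi.mul_apply, branchTransfer, branch_FR hi hx, ← mul_assoc]
  rw [ENNReal.mul_div_cancel hJx ENNReal.ofReal_ne_top]

variable (T) in
/-- The density of the push-forward under the return map of the part of `h` with return time `r`. It
is a sum over inverse branches, which defines it at every point and not only almost everywhere. -/
def transfer (r : ℕ) (h : T.Δ₀ → ℝ≥0∞) (y : T.Δ₀) : ℝ≥0∞ :=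
  ∑' i : {i // i ∈ T.I ∧ T.Ret i = r}, T.branchTransfer i h y

theorem aemeasurable_transfer (r : ℕ) {h : T.Δ₀ → ℝ≥0∞} (hh : AEMeasurable h T.m₀) :
    AEMeasurable (T.transfer r h) T.m₀ :=
  AEMeasurable.tsum fun i => aemeasurable_branchTransfer i.2.1 hh

theorem setOf_R_eq_ae (r : ℕ) :
    {x | T.R x = r} =ᵐ[T.m₀] ⋃ i : {i // i ∈ T.I ∧ T.Ret i = r}, T.Λ i := by
  have hcover : ∀ᵐ x ∂T.m₀, x ∈ ⋃ i ∈ T.I, T.Λ i := by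
    rw [ae_iff]
    convert T.Λ_full using 2
    ext x
    simp
  filter_upwards [hcover] with x hx
  obtain ⟨i, hi, hxi⟩ : ∃ i ∈ T.I, x ∈ T.Λ i := by simpa using hx
  refine propext ⟨fun h => ?_, fun h => ?_⟩
  · exact mem_iUnion.2 ⟨⟨i, hi, (T.R_eq i hi x hxi).symm.trans h⟩, hxi⟩
  · obtain ⟨j, hj⟩ := mem_iUnion.1 h
    exact (T.R_eq j j.2.1 x hj).trans j.2.2

theorem lintegral_transfer_mul (r : ℕ) {h G : T.Δ₀ → ℝ≥0∞}
    (hh : AEMeasurable h T.m₀) (hG : Measurable G) :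
    ∫⁻ y, T.transfer r h y * G y ∂T.m₀ = ∫⁻ x in {x | T.R x = r}, h x * G (T.FR x) ∂T.m₀ := by
  simp only [transfer, ← ENNReal.tsum_mul_right]
  rw [lintegral_tsum (f := fun (i : {i // i ∈ T.I ∧ T.Ret i = r}) y =>
      T.branchTransfer i h y * G y) fun i =>
        (aemeasurable_branchTransfer i.2.1 hh).mul hG.aemeasurable,
    Measure.restrict_congr_set (setOf_R_eq_ae r),
    lintegral_iUnion (s := fun i : {i // i ∈ T.I ∧ T.Ret i = r} => T.Λ i)
      (fun i => T.Λ_meas i i.2.1) fun i j hij =>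
      T.Λ_disj i.2.1 j.2.1 fun h => hij (Subtype.ext h)]
  exact tsum_congr fun i => lintegral_branchTransfer_mul i.2.1 hh hG

variable (T) in
/-- Log-Lipschitz densities with respect to the symbolic distance. The zero density is included,
and no measurability is required. -/
def LogLip (K : ℝ) (h : T.Δ₀ → ℝ≥0∞) : Prop :=
  ∀ x y, h x ≤ ENNReal.ofReal (Real.exp (K * T.sepDist x y)) * h y

variable (T) in
/-- Densities that are log-Lipschitz on every partition element with return time `r`. -/
def LogLipOn (r : ℕ) (K : ℝ) (h : T.Δ₀ → ℝ≥0∞) : Prop :=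
  ∀ i ∈ T.I, T.Ret i = r → ∀ x ∈ T.Λ i, ∀ y ∈ T.Λ i,
    h x ≤ ENNReal.ofReal (Real.exp (K * T.sepDist x y)) * h y

theorem LogLip.logLipOn {K : ℝ} {h : T.Δ₀ → ℝ≥0∞} (hh : T.LogLip K h) (r : ℕ) :
    T.LogLipOn r K h := fun _ _ _ x _ y _ => hh x y

theorem LogLip.mono {K K' : ℝ} {h : T.Δ₀ → ℝ≥0∞} (hh : T.LogLip K h) (hK : K ≤ K') :
    T.LogLip K' h := fun x y => (hh x y).trans (by
      gcongr
      exact T.sepDist_nonneg x y)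

theorem LogLip.add {K : ℝ} {h g : T.Δ₀ → ℝ≥0∞} (hh : T.LogLip K h) (hg : T.LogLip K g) :
    T.LogLip K fun x => h x + g x := fun x y => by
  rw [mul_add]
  exact add_le_add (hh x y) (hg x y)

theorem LogLip.tsum {ι : Type*} {K : ℝ} {h : ι → T.Δ₀ → ℝ≥0∞} (hh : ∀ i, T.LogLip K (h i)) :
    T.LogLip K fun x => ∑' i, h i x := fun x y => by
  rw [← ENNReal.tsum_mul_left]
  exact ENNReal.tsum_le_tsum fun i => hh i x y

theorem LogLip.sum {ι : Type*} {K : ℝ} {h : ι → T.Δ₀ → ℝ≥0∞} (s : Finset ι)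
    (hh : ∀ i ∈ s, T.LogLip K (h i)) :
    T.LogLip K fun x => ∑ i ∈ s, h i x := fun x y => by
  rw [Finset.mul_sum]
  exact Finset.sum_le_sum fun i hi => hh i hi x y

theorem inv_JFR_branch_le (hi : i ∈ T.I) (x y : T.Δ₀) :
    (ENNReal.ofReal (T.JFR (T.branch i x)))⁻¹ ≤
      ENNReal.ofReal (Real.exp (T.CF * T.sepDist x y)) *
        (ENNReal.ofReal (T.JFR (T.branch i y)))⁻¹ := by
  have hJx := T.JFR_pos i hi _ (branch_mem hi x)
  have hJy := T.JFR_pos i hi _ (branch_mem hi y)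
  have hlog := (le_abs_self _).trans
    (T.distortion i hi _ (branch_mem hi y) _ (branch_mem hi x))
  rw [FR_branch hi, FR_branch hi, ← sepDist, T.sepDist_comm,
    Real.log_le_iff_le_exp (div_pos hJy hJx), div_le_iff₀ hJx] at hlog
  rw [← ENNReal.ofReal_inv_of_pos hJx, ← ENNReal.ofReal_inv_of_pos hJy,
    ← ENNReal.ofReal_mul (Real.exp_pos _).le]
  refine ENNReal.ofReal_le_ofReal ?_
  rwa [← div_eq_mul_inv, le_div_iff₀ hJy, inv_mul_le_iff₀ hJx, mul_comm]

theorem LogLipOn.branchTransfer {r : ℕ} {K : ℝ} (hK : 0 ≤ K) {h : T.Δ₀ → ℝ≥0∞}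
    (hh : T.LogLipOn r K h) (hi : i ∈ T.I) (hir : T.Ret i = r) :
    T.LogLip (T.β * K + T.CF) (T.branchTransfer i h) := by
  intro x y
  have hbranch : h (T.branch i x) ≤
      ENNReal.ofReal (Real.exp (T.β * K * T.sepDist x y)) * h (T.branch i y) := by
    refine (hh i hi hir _ (branch_mem hi x) _ (branch_mem hi y)).trans ?_
    have hdist := T.sepDist_le_mul hi (branch_mem hi x) (branch_mem hi y)
    rw [FR_branch hi, FR_branch hi] at hdist
    rw [mul_comm T.β, mul_assoc]
    gcongr
  calc T.branchTransfer i h x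
      = h (T.branch i x) * (ENNReal.ofReal (T.JFR (T.branch i x)))⁻¹ := rfl
    _ ≤ (ENNReal.ofReal (Real.exp (T.β * K * T.sepDist x y)) * h (T.branch i y)) *
        (ENNReal.ofReal (Real.exp (T.CF * T.sepDist x y)) *
          (ENNReal.ofReal (T.JFR (T.branch i y)))⁻¹) :=
        mul_le_mul' hbranch (inv_JFR_branch_le hi x y)
    _ = ENNReal.ofReal (Real.exp ((T.β * K + T.CF) * T.sepDist x y)) *
        (h (T.branch i y) * (ENNReal.ofReal (T.JFR (T.branch i y)))⁻¹) := by
        rw [add_mul, Real.exp_add, ENNReal.ofReal_mul (Real.exp_pos _).le]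
        ring

theorem LogLipOn.transfer {r : ℕ} {K : ℝ} (hK : 0 ≤ K) {h : T.Δ₀ → ℝ≥0∞}
    (hh : T.LogLipOn r K h) : T.LogLip (T.β * K + T.CF) (T.transfer r h) :=
  LogLip.tsum fun i => hh.branchTransfer hK i.2.1 i.2.2

end YoungTower

/-! ### Splitting off a multiple of the reference measure -/

theorem exp_le_add_mul_exp_div {θ : ℝ} (hθ₀ : 0 ≤ θ) (hθ : θ < 1) (t : ℝ) :
    Real.exp t ≤ θ + (1 - θ) * Real.exp (t / (1 - θ)) := by
  have hconv := convexOn_exp.2 (mem_univ 0) (mem_univ (t / (1 - θ))) hθ₀ (sub_nonneg.2 hθ.le)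
    (add_sub_cancel _ _)
  simpa only [smul_eq_mul, mul_zero, zero_add, Real.exp_zero, mul_one,
    mul_div_cancel₀ t (sub_pos.2 hθ).ne'] using hconv

theorem exp_mul_add_le {θ t p c : ℝ} (hθ₀ : 0 ≤ θ) (hθ : θ < 1) (ht : 0 ≤ t) (hpc : 0 ≤ p + c)
    (hc : c ≤ θ * (p + c)) : Real.exp t * (p + c) ≤ Real.exp (t / (1 - θ)) * p + c := by
  have hexp : 1 ≤ Real.exp (t / (1 - θ)) :=
    Real.one_le_exp (div_nonneg ht (sub_nonneg.2 hθ.le))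
  calc Real.exp t * (p + c)
      ≤ (θ + (1 - θ) * Real.exp (t / (1 - θ))) * (p + c) :=
        mul_le_mul_of_nonneg_right (exp_le_add_mul_exp_div hθ₀ hθ t) hpc
    _ = Real.exp (t / (1 - θ)) * p + c -
          (Real.exp (t / (1 - θ)) - 1) * (θ * (p + c) - c) := by ring
    _ ≤ Real.exp (t / (1 - θ)) * p + c :=
        sub_le_self _ (mul_nonneg (sub_nonneg.2 hexp) (sub_nonneg.2 hc))

namespace YoungTower

variable (T : YoungTower.{u})

/-- The regularity constant of the densities to which the splitting is applied. -/
def regConst : ℝ := 2 * (T.CF + 1) / (1 - T.β)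

/-- The largest proportion of a regular density that is split off at any point. It is so small
that the loss of regularity of the remainder is made up for by one return to the base. -/
def splitRatio : ℝ := (1 - T.β) / (1 + T.β)

/-- The proportion of the total mass of a regular density that is split off. -/
def splitProb : ℝ := T.splitRatio * Real.exp (-T.regConst)

theorem splitRatio_pos : 0 < T.splitRatio :=
  div_pos (by linarith [T.β_lt_one]) (by linarith [T.β_pos])

theorem splitRatio_lt_one : T.splitRatio < 1 := by
  rw [splitRatio, div_lt_one (by linarith [T.β_pos])]
  linarith [T.β_pos]

theorem regConst_pos : 0 < T.regConst :=
  div_pos (by linarith [T.CF_pos]) (by linarith [T.β_lt_one])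

theorem splitProb_pos : 0 < T.splitProb := mul_pos T.splitRatio_pos (Real.exp_pos _)

theorem splitProb_lt_one : T.splitProb < 1 :=
  mul_lt_one_of_nonneg_of_lt_one_left T.splitRatio_pos.le T.splitRatio_lt_one
    (Real.exp_le_one_iff.2 (neg_nonpos.2 T.regConst_pos.le))

theorem regConst_mul_one_sub : T.regConst * (1 - T.β) = 2 * (T.CF + 1) :=
  div_mul_cancel₀ _ (sub_pos.2 T.β_lt_one).ne'

theorem contraction_regConst :
    T.β * (T.regConst / (1 - T.splitRatio)) + T.CF ≤ T.regConst := by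
  have hβ := T.β_pos
  have hratio : 1 - T.splitRatio = 2 * T.β / (1 + T.β) := by
    rw [splitRatio]
    field_simp
    ring
  have hcontract : T.β * (T.regConst / (1 - T.splitRatio)) = T.regConst * (1 + T.β) / 2 := by
    rw [hratio]
    field_simp
  linarith [T.regConst_mul_one_sub]

theorem β_add_CF_le_regConst : T.β * 1 + T.CF ≤ T.regConst := by
  linarith [T.regConst_mul_one_sub, mul_pos T.regConst_pos T.β_pos, T.β_lt_one, T.CF_pos]

theorem nonempty_I : T.I.Nonempty := by
  by_contra h
  exact zero_ne_one (T.Ret_gcd 0 fun i hi => absurd ⟨i, hi⟩ h)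

theorem m₀_univ_ne_zero : T.m₀ univ ≠ 0 := by
  obtain ⟨i, hi⟩ := T.nonempty_I
  exact ((T.Λ_pos i hi).trans_le (measure_mono (subset_univ _))).ne'

/-- The constant that is split off from the density `h`. -/
def splitConst (h : T.Δ₀ → ℝ≥0∞) : ℝ≥0∞ :=
  ENNReal.ofReal T.splitProb * (∫⁻ x, h x ∂T.m₀) / T.m₀ univ

/-- What remains of the density `h` after splitting. -/
def remainder (h : T.Δ₀ → ℝ≥0∞) (x : T.Δ₀) : ℝ≥0∞ := h x - T.splitConst h

variable {T}

section LogLip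

variable {K : ℝ} {h : T.Δ₀ → ℝ≥0∞}

theorem LogLip.le_exp_mul (hK : 0 ≤ K) (hh : T.LogLip K h) (x y : T.Δ₀) :
    h x ≤ ENNReal.ofReal (Real.exp K) * h y := by
  refine (hh x y).trans ?_
  gcongr
  exact mul_le_of_le_one_right hK (T.sepDist_le_one x y)

theorem LogLip.lintegral_le (hK : 0 ≤ K) (hh : T.LogLip K h) (x : T.Δ₀) :
    ∫⁻ y, h y ∂T.m₀ ≤ ENNReal.ofReal (Real.exp K) * h x * T.m₀ univ := by
  rw [← lintegral_const]
  exact lintegral_mono fun y => hh.le_exp_mul hK y x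

theorem LogLip.mul_le_lintegral (hK : 0 ≤ K) (hh : T.LogLip K h) (x : T.Δ₀) :
    h x * T.m₀ univ ≤ ENNReal.ofReal (Real.exp K) * ∫⁻ y, h y ∂T.m₀ := by
  rw [← lintegral_const, ← lintegral_const_mul' _ _ ENNReal.ofReal_ne_top]
  exact lintegral_mono fun y => hh.le_exp_mul hK x y

theorem LogLip.ne_top (hK : 0 ≤ K) (hh : T.LogLip K h) (hfin : ∫⁻ x, h x ∂T.m₀ ≠ ⊤) (x : T.Δ₀) :
    h x ≠ ⊤ := by
  intro hx
  have hle := hh.mul_le_lintegral hK x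
  rw [hx, ENNReal.top_mul T.m₀_univ_ne_zero, top_le_iff] at hle
  exact ENNReal.mul_ne_top ENNReal.ofReal_ne_top hfin hle

end LogLip

variable {h : T.Δ₀ → ℝ≥0∞}

theorem splitConst_le (hh : T.LogLip T.regConst h) (x : T.Δ₀) :
    T.splitConst h ≤ ENNReal.ofReal T.splitRatio * h x := by
  refine ENNReal.div_le_of_le_mul ?_
  have hprob : T.splitProb * Real.exp T.regConst = T.splitRatio := by
    rw [splitProb, mul_assoc, ← Real.exp_add, neg_add_cancel, Real.exp_zero, mul_one]
  calc ENNReal.ofReal T.splitProb * ∫⁻ y, h y ∂T.m₀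
      ≤ ENNReal.ofReal T.splitProb *
        (ENNReal.ofReal (Real.exp T.regConst) * h x * T.m₀ univ) := by
        gcongr
        exact hh.lintegral_le T.regConst_pos.le x
    _ = ENNReal.ofReal T.splitRatio * h x * T.m₀ univ := by
        rw [← hprob, ENNReal.ofReal_mul T.splitProb_pos.le]
        ring

theorem remainder_add_splitConst (hh : T.LogLip T.regConst h) (x : T.Δ₀) :
    T.remainder h x + T.splitConst h = h x := by
  refine tsub_add_cancel_of_le ((splitConst_le hh x).trans (mul_le_of_le_one_left' ?_))
  exact ENNReal.ofReal_le_one.2 T.splitRatio_lt_one.le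

theorem remainder_le (h : T.Δ₀ → ℝ≥0∞) (x : T.Δ₀) : T.remainder h x ≤ h x := tsub_le_self

theorem splitConst_mul_univ (h : T.Δ₀ → ℝ≥0∞) :
    T.splitConst h * T.m₀ univ = ENNReal.ofReal T.splitProb * ∫⁻ x, h x ∂T.m₀ :=
  ENNReal.div_mul_cancel T.m₀_univ_ne_zero (measure_ne_top _ _)

theorem splitConst_ne_top (hfin : ∫⁻ x, h x ∂T.m₀ ≠ ⊤) : T.splitConst h ≠ ⊤ :=
  ENNReal.div_ne_top (ENNReal.mul_ne_top ENNReal.ofReal_ne_top hfin) T.m₀_univ_ne_zero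

theorem aemeasurable_remainder (hm : AEMeasurable h T.m₀) : AEMeasurable (T.remainder h) T.m₀ :=
  hm.sub aemeasurable_const

theorem logLip_remainder (hh : T.LogLip T.regConst h) (hfin : ∫⁻ x, h x ∂T.m₀ ≠ ⊤) :
    T.LogLip (T.regConst / (1 - T.splitRatio)) (T.remainder h) := by
  intro x y
  have hlip := hh x y
  have hratio := splitConst_le hh y
  have hconst := splitConst_ne_top hfin
  have hrem : T.remainder h y ≠ ⊤ :=
    ne_top_of_le_ne_top (hh.ne_top T.regConst_pos.le hfin y) (remainder_le h y)
  rw [← remainder_add_splitConst hh y] at hlip hratio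
  refine tsub_le_iff_right.2 (hlip.trans ?_)
  rw [← ENNReal.ofReal_toReal hrem, ← ENNReal.ofReal_toReal hconst] at hratio ⊢
  have hp : 0 ≤ (T.remainder h y).toReal := ENNReal.toReal_nonneg
  have hc : 0 ≤ (T.splitConst h).toReal := ENNReal.toReal_nonneg
  have hpc := add_nonneg hp hc
  rw [← ENNReal.ofReal_add hp hc, ← ENNReal.ofReal_mul T.splitRatio_pos.le,
    ENNReal.ofReal_le_ofReal_iff (mul_nonneg T.splitRatio_pos.le hpc)] at hratio
  rw [← ENNReal.ofReal_add hp hc, ← ENNReal.ofReal_mul (Real.exp_pos _).le,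
    ← ENNReal.ofReal_mul (Real.exp_pos _).le,
    ← ENNReal.ofReal_add (mul_nonneg (Real.exp_pos _).le hp) hc, div_mul_eq_mul_div]
  exact ENNReal.ofReal_le_ofReal (exp_mul_add_le T.splitRatio_pos.le T.splitRatio_lt_one
    (mul_nonneg T.regConst_pos.le (T.sepDist_nonneg x y)) hpc hratio)

theorem logLip_transfer_remainder (hh : T.LogLip T.regConst h) (hfin : ∫⁻ x, h x ∂T.m₀ ≠ ⊤)
    (r : ℕ) : T.LogLip T.regConst (T.transfer r (T.remainder h)) :=
  (((logLip_remainder hh hfin).logLipOn r).transfer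
    (div_nonneg T.regConst_pos.le (sub_nonneg.2 T.splitRatio_lt_one.le))).mono
      T.contraction_regConst

theorem lintegral_transfer (r : ℕ) (hm : AEMeasurable h T.m₀) :
    ∫⁻ y, T.transfer r h y ∂T.m₀ = ∫⁻ x in {x | T.R x = r}, h x ∂T.m₀ := by
  simpa using lintegral_transfer_mul r hm (measurable_const (a := (1 : ℝ≥0∞)))

theorem lintegral_remainder_add (hm : AEMeasurable h T.m₀) (hh : T.LogLip T.regConst h) :
    ∫⁻ x, T.remainder h x ∂T.m₀ + ENNReal.ofReal T.splitProb * ∫⁻ x, h x ∂T.m₀ =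
      ∫⁻ x, h x ∂T.m₀ := by
  rw [← splitConst_mul_univ, ← lintegral_const,
    ← lintegral_add_left' (aemeasurable_remainder hm)]
  exact lintegral_congr fun x => remainder_add_splitConst hh x

variable (T) in
/-- The density of the arrivals at the base at time `n` that have never been split off, when mass
is fed into the base with density `S k` at each time `k`. -/
def arrival (S : ℕ → T.Δ₀ → ℝ≥0∞) : ℕ → T.Δ₀ → ℝ≥0∞
  | n => fun x => S n x + ∑ k : Fin n, T.transfer (n - k) (T.remainder (arrival S k)) x
  decreasing_by exact k.2

theorem arrival_eq (S : ℕ → T.Δ₀ → ℝ≥0∞) (n : ℕ) (x : T.Δ₀) :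
    T.arrival S n x =
      S n x + ∑ k ∈ Finset.range n, T.transfer (n - k) (T.remainder (T.arrival S k)) x := by
  rw [arrival, Finset.sum_range]

variable (T) in
/-- A density on the base from which a constant can be split off. -/
structure IsRegular (h : T.Δ₀ → ℝ≥0∞) : Prop where
  aemeasurable : AEMeasurable h T.m₀
  logLip : T.LogLip T.regConst h
  lintegral_ne_top : ∫⁻ x, h x ∂T.m₀ ≠ ⊤

theorem IsRegular.add {g : T.Δ₀ → ℝ≥0∞} (hh : T.IsRegular h) (hg : T.IsRegular g) :
    T.IsRegular fun x => h x + g x where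
  aemeasurable := hh.aemeasurable.add hg.aemeasurable
  logLip := hh.logLip.add hg.logLip
  lintegral_ne_top := by
    rw [lintegral_add_left' hh.aemeasurable]
    exact ENNReal.add_ne_top.2 ⟨hh.lintegral_ne_top, hg.lintegral_ne_top⟩

theorem IsRegular.sum {ι : Type*} (s : Finset ι) {h : ι → T.Δ₀ → ℝ≥0∞}
    (hh : ∀ i ∈ s, T.IsRegular (h i)) : T.IsRegular fun x => ∑ i ∈ s, h i x where
  aemeasurable := Finset.aemeasurable_fun_sum _ fun i hi => (hh i hi).aemeasurable
  logLip := LogLip.sum _ fun i hi => (hh i hi).logLip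
  lintegral_ne_top := by
    rw [lintegral_finsetSum' _ fun i hi => (hh i hi).aemeasurable]
    exact ENNReal.sum_ne_top.2 fun i hi => (hh i hi).lintegral_ne_top

theorem IsRegular.transfer_remainder (hh : T.IsRegular h) (r : ℕ) :
    T.IsRegular (T.transfer r (T.remainder h)) where
  aemeasurable := aemeasurable_transfer r (aemeasurable_remainder hh.aemeasurable)
  logLip := logLip_transfer_remainder hh.logLip hh.lintegral_ne_top r
  lintegral_ne_top := by
    rw [lintegral_transfer _ (aemeasurable_remainder hh.aemeasurable)]
    exact ne_top_of_le_ne_top hh.lintegral_ne_top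
      ((setLIntegral_le_lintegral _ _).trans (lintegral_mono (remainder_le _)))

theorem IsRegular.arrival {S : ℕ → T.Δ₀ → ℝ≥0∞} (hS : ∀ n, T.IsRegular (S n)) (n : ℕ) :
    T.IsRegular (T.arrival S n) := by
  induction n using Nat.strong_induction_on with
  | _ n ih =>
    rw [funext (arrival_eq S n)]
    exact (hS n).add (.sum _ fun k hk => (ih k (Finset.mem_range.1 hk)).transfer_remainder _)

end YoungTower

namespace YoungTower

variable (T : YoungTower.{u})

/-! ### The renewal equation -/

/-- The tower map as a total map of `Δ₀ × ℕ`. -/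
def rawMap (p : T.Δ₀ × ℕ) : T.Δ₀ × ℕ :=
  if p.2 + 1 < T.R p.1 then (p.1, p.2 + 1) else (T.FR p.1, 0)

/-- The indicator that the orbit of `(x, l)` is in `E` at time `n`. -/
def obs (E : Set (T.Δ₀ × ℕ)) (n l : ℕ) (x : T.Δ₀) : ℝ≥0∞ :=
  E.indicator 1 (T.rawMap^[n] (x, l))

variable {T}

theorem measurable_rawMap : Measurable T.rawMap := by
  refine Measurable.ite ?_ (by fun_prop) ((T.FR_meas.comp measurable_fst).prodMk measurable_const)
  exact measurableSet_lt (by fun_prop) (T.R_meas.comp measurable_fst)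

theorem measurable_obs {E : Set (T.Δ₀ × ℕ)} (hE : MeasurableSet E) (n l : ℕ) :
    Measurable (T.obs E n l) :=
  (measurable_one.indicator hE).comp
    ((measurable_rawMap.iterate n).comp (measurable_id.prodMk measurable_const))

theorem obs_le_one (E : Set (T.Δ₀ × ℕ)) (n l : ℕ) (x : T.Δ₀) : T.obs E n l x ≤ 1 :=
  indicator_apply_le' (fun _ => le_rfl) fun _ => zero_le_one

theorem obs_univ (n l : ℕ) (x : T.Δ₀) : T.obs univ n l x = 1 := by simp [obs]

theorem rawMap_iterate_of_lt {x : T.Δ₀} {l n : ℕ} (h : l + n < T.R x) :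
    T.rawMap^[n] (x, l) = (x, l + n) := by
  induction n with
  | zero => rfl
  | succ n ih =>
    rw [Function.iterate_succ_apply', ih (by omega), rawMap, if_pos (by simpa [add_assoc] using h)]
    rfl

theorem rawMap_iterate_of_eq {x : T.Δ₀} {l k n : ℕ} (h : T.R x = l + (k + 1)) (hkn : k < n) :
    T.rawMap^[n] (x, l) = T.rawMap^[n - (k + 1)] (T.FR x, 0) := by
  obtain ⟨m, rfl⟩ := Nat.exists_eq_add_of_lt hkn
  rw [show k + m + 1 = m + 1 + k by ring, Function.iterate_add_apply,
    rawMap_iterate_of_lt (x := x) (by omega), Function.iterate_succ_apply, rawMap,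
    if_neg (by dsimp only; omega)]
  congr 1
  omega

theorem measurableSet_lt_R (n : ℕ) : MeasurableSet {x | n < T.R x} :=
  measurableSet_lt measurable_const T.R_meas

theorem measurableSet_R_eq (n : ℕ) : MeasurableSet {x | T.R x = n} :=
  T.R_meas (measurableSet_singleton n)

theorem setLIntegral_lt_R_eq (g : T.Δ₀ → ℝ≥0∞) (l n : ℕ) :
    ∫⁻ x in {x | l < T.R x}, g x ∂T.m₀ = ∫⁻ x in {x | l + n < T.R x}, g x ∂T.m₀ +
      ∑ k ∈ Finset.range n, ∫⁻ x in {x | T.R x = l + (k + 1)}, g x ∂T.m₀ := by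
  induction n with
  | zero => simp
  | succ n ih =>
    have hsplit : {x | l + n < T.R x} = {x | l + (n + 1) < T.R x} ∪ {x | T.R x = l + (n + 1)} := by
      ext x
      simp only [mem_ofPred_eq, mem_union]
      omega
    rw [ih, hsplit, lintegral_union (measurableSet_R_eq _), Finset.sum_range_succ, add_assoc,
      add_comm (∑ k ∈ _, _)]
    refine Set.disjoint_left.2 ?_
    intro x hx hx'
    simp only [mem_ofPred_eq] at hx hx'
    omega

theorem setLIntegral_mul_obs {E : Set (T.Δ₀ × ℕ)} (hE : MeasurableSet E) {φ : T.Δ₀ → ℝ≥0∞}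
    (hφ : AEMeasurable φ T.m₀) (l n : ℕ) :
    ∫⁻ x in {x | l < T.R x}, φ x * T.obs E n l x ∂T.m₀ =
      ∫⁻ x in {x | l + n < T.R x}, φ x * T.obs E n l x ∂T.m₀ +
      ∑ k ∈ Finset.range n,
        ∫⁻ y, T.transfer (l + (k + 1)) φ y * T.obs E (n - (k + 1)) 0 y ∂T.m₀ := by
  rw [setLIntegral_lt_R_eq _ l n]
  congr 1
  refine Finset.sum_congr rfl fun k hk => ?_
  rw [lintegral_transfer_mul _ hφ (measurable_obs hE _ _)]
  refine setLIntegral_congr_fun (measurableSet_R_eq _) fun x hx => ?_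
  simp only [obs]
  rw [rawMap_iterate_of_eq hx (Finset.mem_range.1 hk)]

theorem lintegral_mul_obs {E : Set (T.Δ₀ × ℕ)} (hE : MeasurableSet E) {h : T.Δ₀ → ℝ≥0∞}
    (hh : AEMeasurable h T.m₀) (n : ℕ) :
    ∫⁻ x, h x * T.obs E n 0 x ∂T.m₀ =
      ∫⁻ x in {x | n < T.R x}, h x * T.obs E n 0 x ∂T.m₀ +
      ∑ k ∈ Finset.range n,
        ∫⁻ y, T.transfer (k + 1) h y * T.obs E (n - (k + 1)) 0 y ∂T.m₀ := by
  have huniv : {x | 0 < T.R x} = univ := eq_univ_of_forall T.R_pos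
  simpa only [zero_add, huniv, Measure.restrict_univ] using setLIntegral_mul_obs hE hh 0 n

theorem lintegral_mul_obs_le (E : Set (T.Δ₀ × ℕ)) (h : T.Δ₀ → ℝ≥0∞) (n l : ℕ) (μ : Measure T.Δ₀) :
    ∫⁻ x, h x * T.obs E n l x ∂μ ≤ ∫⁻ x, h x ∂μ :=
  lintegral_mono fun x => mul_le_of_le_one_right' (obs_le_one E n l x)

theorem sum_range_succ_sum_range_comm {M : Type*} [AddCommMonoid M] (a : ℕ → ℕ → ℕ → M) (n : ℕ) :
    ∑ k ∈ Finset.range (n + 1), ∑ j ∈ Finset.range k, a (k - j) j (n - k) =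
      ∑ j ∈ Finset.range (n + 1), ∑ i ∈ Finset.range (n - j), a (i + 1) j (n - j - (i + 1)) := by
  rw [Finset.sum_comm' (t' := Finset.range (n + 1)) (s' := fun j => Finset.Ico (j + 1) (n + 1))
    fun k j => by simp only [Finset.mem_range, Finset.mem_Ico]; omega]
  refine Finset.sum_congr rfl fun j _ => ?_
  rw [Finset.sum_Ico_eq_sum_range, Nat.add_sub_add_right]
  refine Finset.sum_congr rfl fun i _ => ?_
  rw [show j + 1 + i - j = i + 1 by omega, show n - (j + 1 + i) = n - j - (i + 1) by omega]

theorem IsRegular.lintegral_arrival_mul {S : ℕ → T.Δ₀ → ℝ≥0∞} (hS : ∀ n, T.IsRegular (S n))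
    {G : T.Δ₀ → ℝ≥0∞} (hG : Measurable G) (n : ℕ) :
    ∫⁻ x, T.arrival S n x * G x ∂T.m₀ = ∫⁻ x, S n x * G x ∂T.m₀ +
      ∑ k ∈ Finset.range n,
        ∫⁻ x, T.transfer (n - k) (T.remainder (T.arrival S k)) x * G x ∂T.m₀ := by
  simp only [arrival_eq S n, add_mul, Finset.sum_mul]
  rw [lintegral_add_left' ((hS n).aemeasurable.fun_mul hG.aemeasurable),
    lintegral_finsetSum' _ fun k _ =>
      ((arrival hS k).transfer_remainder _).aemeasurable.fun_mul hG.aemeasurable]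

theorem IsRegular.lintegral_mul_obs {h : T.Δ₀ → ℝ≥0∞} (hh : T.IsRegular h) {E : Set (T.Δ₀ × ℕ)}
    (hE : MeasurableSet E) (n : ℕ) :
    ∫⁻ x, h x * T.obs E n 0 x ∂T.m₀ =
      ∫⁻ x in {x | n < T.R x}, T.remainder h x * T.obs E n 0 x ∂T.m₀ +
        T.splitConst h * ∫⁻ x, T.obs E n 0 x ∂T.m₀ +
      ∑ k ∈ Finset.range n,
        ∫⁻ y, T.transfer (k + 1) (T.remainder h) y * T.obs E (n - (k + 1)) 0 y ∂T.m₀ := by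
  have hrem := aemeasurable_remainder hh.aemeasurable
  have hobs := measurable_obs hE n 0
  rw [add_right_comm, ← YoungTower.lintegral_mul_obs hE hrem, ← lintegral_const_mul _ hobs,
    ← lintegral_add_left' (hrem.fun_mul hobs.aemeasurable)]
  refine lintegral_congr fun x => ?_
  rw [← add_mul, remainder_add_splitConst hh.logLip]

theorem IsRegular.sum_lintegral_mul_obs {S : ℕ → T.Δ₀ → ℝ≥0∞} (hS : ∀ n, T.IsRegular (S n))
    {E : Set (T.Δ₀ × ℕ)} (hE : MeasurableSet E) (n : ℕ) :
    ∑ k ∈ Finset.range (n + 1), ∫⁻ x, S k x * T.obs E (n - k) 0 x ∂T.m₀ =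
      ∑ k ∈ Finset.range (n + 1), ∫⁻ x in {x | n - k < T.R x},
        T.remainder (T.arrival S k) x * T.obs E (n - k) 0 x ∂T.m₀ +
      ∑ k ∈ Finset.range (n + 1), T.splitConst (T.arrival S k) *
        ∫⁻ x, T.obs E (n - k) 0 x ∂T.m₀ := by
  set H := T.arrival S
  -- The mass that returns to the base without being split off enters both ways of counting the
  -- arrivals, and is finite.
  set D := ∑ k ∈ Finset.range (n + 1), ∑ j ∈ Finset.range k,
    ∫⁻ y, T.transfer (k - j) (T.remainder (H j)) y * T.obs E (n - k) 0 y ∂T.m₀ with hD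
  have hsource : ∑ k ∈ Finset.range (n + 1), ∫⁻ x, H k x * T.obs E (n - k) 0 x ∂T.m₀ =
      ∑ k ∈ Finset.range (n + 1), ∫⁻ x, S k x * T.obs E (n - k) 0 x ∂T.m₀ + D := by
    rw [hD, ← Finset.sum_add_distrib]
    exact Finset.sum_congr rfl fun k _ => lintegral_arrival_mul hS (measurable_obs hE _ _) k
  have hsplit : ∑ k ∈ Finset.range (n + 1), ∫⁻ x, H k x * T.obs E (n - k) 0 x ∂T.m₀ =
      (∑ k ∈ Finset.range (n + 1), ∫⁻ x in {x | n - k < T.R x},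
        T.remainder (H k) x * T.obs E (n - k) 0 x ∂T.m₀ +
      ∑ k ∈ Finset.range (n + 1), T.splitConst (H k) *
        ∫⁻ x, T.obs E (n - k) 0 x ∂T.m₀) + D := by
    rw [hD, sum_range_succ_sum_range_comm fun r j m =>
      ∫⁻ y, T.transfer r (T.remainder (H j)) y * T.obs E m 0 y ∂T.m₀,
      ← Finset.sum_add_distrib, ← Finset.sum_add_distrib]
    exact Finset.sum_congr rfl fun k _ => (arrival hS k).lintegral_mul_obs hE _
  have hD_fin : D ≠ ⊤ := by
    refine ne_top_of_le_ne_top (ENNReal.sum_ne_top.2 fun k _ => ?_) (le_add_self.trans hsource.ge)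
    exact ne_top_of_le_ne_top (arrival hS k).lintegral_ne_top (lintegral_mul_obs_le E _ _ _ _)
  exact (ENNReal.add_left_inj hD_fin).1 (hsource.symm.trans hsplit)

variable (T) in
/-- Densities on the tower, given level by level, that are log-Lipschitz on the partition
elements. -/
structure IsProfile (φ : ℕ → T.Δ₀ → ℝ≥0∞) : Prop where
  aemeasurable : ∀ l, AEMeasurable (φ l) T.m₀
  logLipOn : ∀ l r, l < r → T.LogLipOn r 1 (φ l)
  lintegral_ne_top : ∑' l, ∫⁻ x in {x | l < T.R x}, φ l x ∂T.m₀ ≠ ⊤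

variable (T) in
/-- The density of the first arrivals at the base. -/
def firstArrival (φ : ℕ → T.Δ₀ → ℝ≥0∞) : ℕ → T.Δ₀ → ℝ≥0∞
  | 0 => fun _ => 0
  | k + 1 => fun y => ∑' l, T.transfer (l + (k + 1)) (φ l) y

variable (T) in
/-- The mass of the density `φ` that is in `E` at time `n`. -/
def pushMass (φ : ℕ → T.Δ₀ → ℝ≥0∞) (E : Set (T.Δ₀ × ℕ)) (n : ℕ) : ℝ≥0∞ :=
  ∑' l, ∫⁻ x in {x | l < T.R x}, φ l x * T.obs E n l x ∂T.m₀

variable (T) in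
/-- The mass of the density `φ` that has not returned to the base at time `n` and is in `E`. -/
def firstMass (φ : ℕ → T.Δ₀ → ℝ≥0∞) (E : Set (T.Δ₀ × ℕ)) (n : ℕ) : ℝ≥0∞ :=
  ∑' l, ∫⁻ x in {x | l + n < T.R x}, φ l x * T.obs E n l x ∂T.m₀

variable (T) in
/-- The mass of the density `φ` that has not been split off at time `n` and is in `E`. -/
def survivalMass (φ : ℕ → T.Δ₀ → ℝ≥0∞) (E : Set (T.Δ₀ × ℕ)) (n : ℕ) : ℝ≥0∞ :=
  T.firstMass φ E n + ∑ k ∈ Finset.range (n + 1), ∫⁻ x in {x | n - k < T.R x},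
    T.remainder (T.arrival (T.firstArrival φ) k) x * T.obs E (n - k) 0 x ∂T.m₀

variable (T) in
/-- The mass of the density `φ` that is split off at time `n`. -/
def stopMass (φ : ℕ → T.Δ₀ → ℝ≥0∞) (n : ℕ) : ℝ≥0∞ :=
  ENNReal.ofReal T.splitProb * ∫⁻ x, T.arrival (T.firstArrival φ) n x ∂T.m₀

variable (T) in
/-- The probability that the orbit of a random point of the base is in `E` at time `n`. -/
def baseProb (E : Set (T.Δ₀ × ℕ)) (n : ℕ) : ℝ≥0∞ :=
  (∫⁻ x, T.obs E n 0 x ∂T.m₀) / T.m₀ univ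

variable {φ : ℕ → T.Δ₀ → ℝ≥0∞}

theorem pushMass_univ (φ : ℕ → T.Δ₀ → ℝ≥0∞) (n : ℕ) :
    T.pushMass φ univ n = ∑' l, ∫⁻ x in {x | l < T.R x}, φ l x ∂T.m₀ := by
  simp only [pushMass, obs_univ, mul_one]

theorem pushMass_le (φ : ℕ → T.Δ₀ → ℝ≥0∞) (E : Set (T.Δ₀ × ℕ)) (n : ℕ) :
    T.pushMass φ E n ≤ ∑' l, ∫⁻ x in {x | l < T.R x}, φ l x ∂T.m₀ :=
  ENNReal.tsum_le_tsum fun _ => lintegral_mul_obs_le _ _ _ _ _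

theorem baseProb_univ (n : ℕ) : T.baseProb univ n = 1 := by
  simp only [baseProb, obs_univ, lintegral_one]
  exact ENNReal.div_self T.m₀_univ_ne_zero (measure_ne_top _ _)

theorem survivalMass_le_univ (φ : ℕ → T.Δ₀ → ℝ≥0∞) (E : Set (T.Δ₀ × ℕ)) (n : ℕ) :
    T.survivalMass φ E n ≤ T.survivalMass φ univ n := by
  simp only [survivalMass, firstMass, obs_univ, mul_one]
  gcongr
  · exact mul_le_of_le_one_right' (obs_le_one _ _ _ _)
  · exact mul_le_of_le_one_right' (obs_le_one _ _ _ _)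

theorem lintegral_firstArrival_mul (hφ : T.IsProfile φ) {G : T.Δ₀ → ℝ≥0∞} (hG : Measurable G)
    (k : ℕ) : ∫⁻ x, T.firstArrival φ (k + 1) x * G x ∂T.m₀ =
      ∑' l, ∫⁻ x, T.transfer (l + (k + 1)) (φ l) x * G x ∂T.m₀ := by
  simp only [firstArrival, ← ENNReal.tsum_mul_right]
  exact lintegral_tsum fun l =>
    (aemeasurable_transfer _ (hφ.aemeasurable l)).mul hG.aemeasurable

theorem IsProfile.isRegular_firstArrival (hφ : T.IsProfile φ) :
    ∀ n, T.IsRegular (T.firstArrival φ n)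
  | 0 =>
    { aemeasurable := aemeasurable_const
      logLip := fun x y => by simp [firstArrival]
      lintegral_ne_top := by simp [firstArrival] }
  | k + 1 =>
    { aemeasurable := AEMeasurable.tsum fun l => aemeasurable_transfer _ (hφ.aemeasurable l)
      logLip := LogLip.tsum fun l =>
        ((hφ.logLipOn l _ (by omega)).transfer zero_le_one).mono T.β_add_CF_le_regConst
      lintegral_ne_top := by
        have hmass := lintegral_firstArrival_mul hφ (measurable_const (a := (1 : ℝ≥0∞))) k
        simp only [mul_one] at hmass
        rw [hmass]
        refine ne_top_of_le_ne_top hφ.lintegral_ne_top (ENNReal.tsum_le_tsum fun l => ?_)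
        rw [lintegral_transfer _ (hφ.aemeasurable l)]
        refine lintegral_mono_set fun x hx => ?_
        simp only [mem_ofPred_eq] at hx ⊢
        omega }

theorem IsProfile.pushMass_eq (hφ : T.IsProfile φ) {E : Set (T.Δ₀ × ℕ)} (hE : MeasurableSet E)
    (n : ℕ) : T.pushMass φ E n = T.survivalMass φ E n +
      ∑ k ∈ Finset.range (n + 1), T.stopMass φ k * T.baseProb E (n - k) := by
  have hfirst : T.pushMass φ E n = T.firstMass φ E n + ∑ k ∈ Finset.range (n + 1),
      ∫⁻ x, T.firstArrival φ k x * T.obs E (n - k) 0 x ∂T.m₀ := by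
    rw [Finset.sum_range_succ']
    simp only [lintegral_firstArrival_mul hφ (measurable_obs hE _ _)]
    simp only [firstArrival, zero_mul, lintegral_zero, add_zero, pushMass, firstMass]
    rw [← Summable.tsum_finsetSum fun _ _ => ENNReal.summable, ← ENNReal.tsum_add]
    exact tsum_congr fun l => setLIntegral_mul_obs hE (hφ.aemeasurable l) l n
  rw [hfirst, IsRegular.sum_lintegral_mul_obs hφ.isRegular_firstArrival hE n,
    survivalMass, ← add_assoc]
  congr 1
  refine Finset.sum_congr rfl fun k _ => ?_
  rw [stopMass, baseProb, ← splitConst_mul_univ, mul_assoc,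
    ENNReal.mul_div_cancel T.m₀_univ_ne_zero (measure_ne_top _ _)]

end YoungTower

namespace YoungTower

variable {T : YoungTower.{u}}

/-! ### Convergence of the push-forwards -/

theorem setOf_zero_lt_R : {x | 0 < T.R x} = univ := eq_univ_of_forall T.R_pos

theorem m₀_real_univ_pos : 0 < T.m₀.real univ :=
  ENNReal.toReal_pos T.m₀_univ_ne_zero (measure_ne_top _ _)

variable (T) in
/-- The tail `m₀{R > n}` of the return time. -/
def returnTail (n : ℕ) : ℝ := T.m₀.real {x | n < T.R x}

variable (T) in
/-- The factor by which the tail of the return time under a normalized remainder can exceed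
`m₀{R > n}`. -/
def survivalCoeff : ℝ := Real.exp T.regConst / ((1 - T.splitProb) * T.m₀.real univ)

variable (T) in
/-- A bound for the probability that the return time exceeds `n`, valid under every normalized
remainder of a regular density. -/
def survivalBound (n : ℕ) : ℝ := min 1 (T.survivalCoeff * T.returnTail n)

theorem returnTail_nonneg (n : ℕ) : 0 ≤ T.returnTail n := measureReal_nonneg

theorem returnTail_antitone : Antitone T.returnTail := fun _ _ hmn =>
  measureReal_mono fun _ hx => hmn.trans_lt hx

theorem returnTail_zero : T.returnTail 0 = T.m₀.real univ := by rw [returnTail, setOf_zero_lt_R]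

theorem survivalCoeff_pos : 0 < T.survivalCoeff :=
  div_pos (Real.exp_pos _) (mul_pos (sub_pos.2 T.splitProb_lt_one) m₀_real_univ_pos)

theorem survivalBound_nonneg (n : ℕ) : 0 ≤ T.survivalBound n :=
  le_min zero_le_one (mul_nonneg survivalCoeff_pos.le (returnTail_nonneg n))

theorem survivalBound_antitone : Antitone T.survivalBound := fun _ _ hmn =>
  min_le_min le_rfl (mul_le_mul_of_nonneg_left (returnTail_antitone hmn) survivalCoeff_pos.le)

theorem survivalBound_zero : T.survivalBound 0 = 1 := by
  refine min_eq_left ?_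
  have hM := m₀_real_univ_pos (T := T)
  have hexp : 1 ≤ Real.exp T.regConst := Real.one_le_exp T.regConst_pos.le
  rw [survivalCoeff, returnTail_zero, div_mul_eq_mul_div,
    le_div_iff₀ (mul_pos (sub_pos.2 T.splitProb_lt_one) hM), one_mul]
  gcongr
  linarith [T.splitProb_pos]

theorem survivalBound_le {x : ℝ} {n : ℕ} (h : T.returnTail n ≤ x) :
    T.survivalBound n ≤ T.survivalCoeff * x :=
  (min_le_right _ _).trans (mul_le_mul_of_nonneg_left h survivalCoeff_pos.le)

namespace IsRegular

variable {h : T.Δ₀ → ℝ≥0∞}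

theorem lintegral_remainder_ne_top (hh : T.IsRegular h) : ∫⁻ x, T.remainder h x ∂T.m₀ ≠ ⊤ :=
  ne_top_of_le_ne_top hh.lintegral_ne_top (lintegral_mono (remainder_le h))

theorem toReal_lintegral_remainder (hh : T.IsRegular h) :
    (∫⁻ x, T.remainder h x ∂T.m₀).toReal = (1 - T.splitProb) * (∫⁻ x, h x ∂T.m₀).toReal := by
  have hsum := congrArg ENNReal.toReal (lintegral_remainder_add hh.aemeasurable hh.logLip)
  rw [ENNReal.toReal_add hh.lintegral_remainder_ne_top
      (ENNReal.mul_ne_top ENNReal.ofReal_ne_top hh.lintegral_ne_top),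
    ENNReal.toReal_mul, ENNReal.toReal_ofReal T.splitProb_pos.le] at hsum
  linarith

theorem toReal_setLIntegral_le (hh : T.IsRegular h) (n : ℕ) :
    (∫⁻ x in {x | n < T.R x}, h x ∂T.m₀).toReal ≤
      Real.exp T.regConst * (∫⁻ x, h x ∂T.m₀).toReal / T.m₀.real univ * T.returnTail n := by
  have hle : ∫⁻ x in {x | n < T.R x}, h x ∂T.m₀ ≤
      ENNReal.ofReal (Real.exp T.regConst) * (∫⁻ y, h y ∂T.m₀) / T.m₀ univ *
        T.m₀ {x | n < T.R x} := by
    rw [← setLIntegral_const]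
    refine setLIntegral_mono' (measurableSet_lt_R n) fun x _ => ?_
    rw [ENNReal.le_div_iff_mul_le (Or.inl T.m₀_univ_ne_zero) (Or.inl (measure_ne_top _ _))]
    exact hh.logLip.mul_le_lintegral T.regConst_pos.le x
  refine (ENNReal.toReal_mono (ENNReal.mul_ne_top (ENNReal.div_ne_top (ENNReal.mul_ne_top
    ENNReal.ofReal_ne_top hh.lintegral_ne_top) T.m₀_univ_ne_zero) (measure_ne_top _ _))
      hle).trans_eq ?_
  rw [ENNReal.toReal_mul, ENNReal.toReal_div, ENNReal.toReal_mul,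
    ENNReal.toReal_ofReal (Real.exp_pos _).le]
  rfl

theorem toReal_setLIntegral_remainder_le (hh : T.IsRegular h) (n : ℕ) :
    (∫⁻ x in {x | n < T.R x}, T.remainder h x ∂T.m₀).toReal ≤
      (1 - T.splitProb) * (∫⁻ x, h x ∂T.m₀).toReal * T.survivalBound n := by
  have hε : 0 < 1 - T.splitProb := sub_pos.2 T.splitProb_lt_one
  rw [survivalBound, mul_min_of_nonneg _ _ (mul_nonneg hε.le ENNReal.toReal_nonneg), mul_one]
  refine le_min ?_ ?_
  · rw [← hh.toReal_lintegral_remainder]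
    exact ENNReal.toReal_mono hh.lintegral_remainder_ne_top (setLIntegral_le_lintegral _ _)
  · have hh_fin : ∫⁻ x in {x | n < T.R x}, h x ∂T.m₀ ≠ ⊤ :=
      ne_top_of_le_ne_top hh.lintegral_ne_top (setLIntegral_le_lintegral _ _)
    calc (∫⁻ x in {x | n < T.R x}, T.remainder h x ∂T.m₀).toReal
        ≤ (∫⁻ x in {x | n < T.R x}, h x ∂T.m₀).toReal :=
          ENNReal.toReal_mono hh_fin (lintegral_mono (remainder_le h))
      _ ≤ Real.exp T.regConst * (∫⁻ x, h x ∂T.m₀).toReal / T.m₀.real univ * T.returnTail n :=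
          hh.toReal_setLIntegral_le n
      _ = _ := by
          rw [survivalCoeff]
          field_simp

end IsRegular

section Profile

variable {φ : ℕ → T.Δ₀ → ℝ≥0∞}

variable (T) in
/-- The total mass of the density `φ`. -/
def totalMass (φ : ℕ → T.Δ₀ → ℝ≥0∞) : ℝ≥0∞ := ∑' l, ∫⁻ x in {x | l < T.R x}, φ l x ∂T.m₀

theorem IsProfile.totalMass_eq (hφ : T.IsProfile φ) (n : ℕ) :
    T.totalMass φ = T.survivalMass φ univ n + ∑ k ∈ Finset.range (n + 1), T.stopMass φ k := by
  simpa only [totalMass, pushMass_univ, baseProb_univ, mul_one] using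
    hφ.pushMass_eq MeasurableSet.univ n

theorem IsProfile.survivalMass_ne_top (hφ : T.IsProfile φ) (E : Set (T.Δ₀ × ℕ)) (n : ℕ) :
    T.survivalMass φ E n ≠ ⊤ := by
  refine ne_top_of_le_ne_top hφ.lintegral_ne_top ((survivalMass_le_univ φ E n).trans ?_)
  change _ ≤ T.totalMass φ
  rw [hφ.totalMass_eq n]
  exact le_self_add

theorem IsProfile.stopMass_ne_top (hφ : T.IsProfile φ) (n : ℕ) : T.stopMass φ n ≠ ⊤ :=
  ENNReal.mul_ne_top ENNReal.ofReal_ne_top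
    (IsRegular.arrival hφ.isRegular_firstArrival n).lintegral_ne_top

theorem baseProb_ne_top (E : Set (T.Δ₀ × ℕ)) (n : ℕ) : T.baseProb E n ≠ ⊤ := by
  refine ENNReal.div_ne_top (ne_top_of_le_ne_top (measure_ne_top T.m₀ univ) ?_) T.m₀_univ_ne_zero
  rw [← lintegral_one]
  exact lintegral_mono fun x => obs_le_one E n 0 x

theorem IsProfile.survival_stopMass (hφ : T.IsProfile φ) (n : ℕ) :
    survival (T.totalMass φ).toReal (fun k => (T.stopMass φ k).toReal) n =
      (T.survivalMass φ univ n).toReal := by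
  rw [survival, hφ.totalMass_eq n, ENNReal.toReal_add (hφ.survivalMass_ne_top univ n)
    (ENNReal.sum_ne_top.2 fun k _ => hφ.stopMass_ne_top k),
    ENNReal.toReal_sum fun k _ => hφ.stopMass_ne_top k, add_sub_cancel_right]

theorem IsProfile.toReal_pushMass (hφ : T.IsProfile φ) {E : Set (T.Δ₀ × ℕ)} (hE : MeasurableSet E)
    (n : ℕ) : (T.pushMass φ E n).toReal = (T.survivalMass φ E n).toReal +
      seqConv (fun k => (T.stopMass φ k).toReal) (fun k => (T.baseProb E k).toReal) n := by
  have hfin : ∀ k ∈ Finset.range (n + 1), T.stopMass φ k * T.baseProb E (n - k) ≠ ⊤ := fun k _ =>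
    ENNReal.mul_ne_top (hφ.stopMass_ne_top k) (baseProb_ne_top E _)
  rw [hφ.pushMass_eq hE n, ENNReal.toReal_add (hφ.survivalMass_ne_top E n)
    (ENNReal.sum_ne_top.2 hfin), ENNReal.toReal_sum hfin]
  simp only [ENNReal.toReal_mul, seqConv]

theorem IsProfile.toReal_survivalMass_le (hφ : T.IsProfile φ) (E : Set (T.Δ₀ × ℕ)) (n : ℕ) :
    (T.survivalMass φ E n).toReal ≤ (T.survivalMass φ univ n).toReal :=
  ENNReal.toReal_mono (hφ.survivalMass_ne_top univ n) (survivalMass_le_univ φ E n)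

theorem IsProfile.toReal_survivalMass_univ_le (hφ : T.IsProfile φ) (n : ℕ) :
    (T.survivalMass φ univ n).toReal ≤ (T.firstMass φ univ n).toReal +
      (1 - T.splitProb) / T.splitProb *
        seqConv (fun k => (T.stopMass φ k).toReal) T.survivalBound n := by
  have hH := IsRegular.arrival hφ.isRegular_firstArrival
  have hε := T.splitProb_pos
  have hfin : ∀ k ∈ Finset.range (n + 1), ∫⁻ x in {x | n - k < T.R x},
      T.remainder (T.arrival (T.firstArrival φ) k) x ∂T.m₀ ≠ ⊤ := fun k _ =>
    ne_top_of_le_ne_top (hH k).lintegral_remainder_ne_top (setLIntegral_le_lintegral _ _)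
  have hsurv : T.survivalMass φ univ n = T.firstMass φ univ n + ∑ k ∈ Finset.range (n + 1),
      ∫⁻ x in {x | n - k < T.R x}, T.remainder (T.arrival (T.firstArrival φ) k) x ∂T.m₀ := by
    simp only [survivalMass, obs_univ, mul_one]
  have hfirst : T.firstMass φ univ n ≠ ⊤ :=
    ne_top_of_le_ne_top (hφ.survivalMass_ne_top univ n) (hsurv ▸ le_self_add)
  rw [hsurv, ENNReal.toReal_add hfirst (ENNReal.sum_ne_top.2 hfin), ENNReal.toReal_sum hfin,
    seqConv, Finset.mul_sum]
  gcongr with k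
  refine ((hH k).toReal_setLIntegral_remainder_le (n - k)).trans_eq ?_
  rw [stopMass, ENNReal.toReal_mul, ENNReal.toReal_ofReal hε.le]
  field_simp

theorem toReal_firstMass_univ_le (hR : Summable T.returnTail) {B : ℝ} (hB : 0 ≤ B)
    (hφB : ∀ l x, φ l x ≤ ENNReal.ofReal B) (n : ℕ) :
    (T.firstMass φ univ n).toReal ≤ B * absTail T.returnTail n := by
  have hsum : ∑' l, B * T.returnTail (l + n) = B * absTail T.returnTail n := by
    simp only [tsum_mul_left, absTail, abs_of_nonneg (returnTail_nonneg _)]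
  have hB₀ (l : ℕ) : 0 ≤ B * T.returnTail (l + n) := mul_nonneg hB (returnTail_nonneg _)
  refine ENNReal.toReal_le_of_le_ofReal (mul_nonneg hB (absTail_nonneg _ _)) ?_
  rw [← hsum, ENNReal.ofReal_tsum_of_nonneg hB₀ (((summable_nat_add_iff n).2 hR).mul_left B)]
  refine ENNReal.tsum_le_tsum fun l => ?_
  calc ∫⁻ x in {x | l + n < T.R x}, φ l x * T.obs univ n l x ∂T.m₀
      ≤ ∫⁻ _ in {x | l + n < T.R x}, ENNReal.ofReal B ∂T.m₀ :=
        (lintegral_mul_obs_le _ _ _ _ _).trans (lintegral_mono (hφB l))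
    _ = ENNReal.ofReal (B * T.returnTail (l + n)) := by
        rw [setLIntegral_const, ENNReal.ofReal_mul hB, returnTail, ofReal_measureReal]

end Profile

variable (T) in
/-- The normalized reference measure of the base as a density on the tower. -/
def baseProfile (l : ℕ) (_ : T.Δ₀) : ℝ≥0∞ := if l = 0 then (T.m₀ univ)⁻¹ else 0

theorem tsum_baseProfile (c : ℕ → T.Δ₀ → ℝ≥0∞) (A : ℕ → Set T.Δ₀) :
    ∑' l, ∫⁻ x in A l, T.baseProfile l x * c l x ∂T.m₀ =
      (∫⁻ x in A 0, c 0 x ∂T.m₀) / T.m₀ univ := by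
  rw [tsum_eq_single 0 fun l hl => by simp [baseProfile, hl]]
  simp only [baseProfile, if_true]
  rw [lintegral_const_mul' _ _ (ENNReal.inv_ne_top.2 T.m₀_univ_ne_zero),
    ENNReal.div_eq_inv_mul]

theorem pushMass_baseProfile (E : Set (T.Δ₀ × ℕ)) (n : ℕ) :
    T.pushMass T.baseProfile E n = T.baseProb E n := by
  rw [pushMass, tsum_baseProfile, setOf_zero_lt_R, Measure.restrict_univ, baseProb]

theorem totalMass_baseProfile : T.totalMass T.baseProfile = 1 := by
  rw [totalMass, ← pushMass_univ T.baseProfile 0, pushMass_baseProfile, baseProb_univ]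

theorem toReal_firstMass_baseProfile_univ (n : ℕ) :
    (T.firstMass T.baseProfile univ n).toReal = T.returnTail n / T.m₀.real univ := by
  rw [firstMass, tsum_baseProfile]
  simp only [obs_univ, lintegral_one, Measure.restrict_apply_univ, zero_add, ENNReal.toReal_div]
  rfl

theorem isProfile_baseProfile : T.IsProfile T.baseProfile where
  aemeasurable _ := aemeasurable_const
  logLipOn l r _ i _ _ x _ y _ := by
    refine le_mul_of_one_le_left' ?_
    rw [ENNReal.one_le_ofReal, one_mul]
    exact Real.one_le_exp (T.sepDist_nonneg x y)
  lintegral_ne_top := by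
    change T.totalMass T.baseProfile ≠ ⊤
    rw [totalMass_baseProfile]
    exact ENNReal.one_ne_top

theorem stopMass_baseProfile_zero : T.stopMass T.baseProfile 0 = 0 := by
  simp [stopMass, arrival_eq, firstArrival]

theorem stopMass_baseProfile_pos {i : ℕ} (hi : i ∈ T.I) :
    0 < T.stopMass T.baseProfile (T.Ret i) := by
  obtain ⟨k, hk⟩ : ∃ k, T.Ret i = k + 1 := ⟨T.Ret i - 1, by have := T.Ret_pos i hi; omega⟩
  refine ENNReal.mul_pos (by simpa using T.splitProb_pos) (ne_of_gt ?_)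
  have hfirst : ∫⁻ x, T.firstArrival T.baseProfile (k + 1) x ∂T.m₀ =
      ∑' l, ∫⁻ x, T.transfer (l + (k + 1)) (T.baseProfile l) x ∂T.m₀ := by
    simpa only [mul_one] using lintegral_firstArrival_mul (T := T) isProfile_baseProfile
      (measurable_const (a := (1 : ℝ≥0∞))) k
  calc 0 < T.m₀ (T.Λ i) / T.m₀ univ :=
        ENNReal.div_pos (T.Λ_pos i hi).ne' (measure_ne_top _ _)
    _ ≤ T.m₀ {x | T.R x = k + 1} / T.m₀ univ := by
        gcongr
        exact fun x hx => (T.R_eq i hi x hx).trans hk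
    _ = ∫⁻ x, T.transfer (0 + (k + 1)) (T.baseProfile 0) x ∂T.m₀ := by
        rw [lintegral_transfer _ (isProfile_baseProfile.aemeasurable 0)]
        simp [baseProfile, ENNReal.div_eq_inv_mul]
    _ ≤ ∫⁻ x, T.firstArrival T.baseProfile (k + 1) x ∂T.m₀ := by
        rw [hfirst]
        exact ENNReal.le_tsum 0
    _ ≤ ∫⁻ x, T.arrival (T.firstArrival T.baseProfile) (T.Ret i) x ∂T.m₀ := by
        rw [hk]
        refine lintegral_mono fun x => ?_
        rw [arrival_eq]
        exact le_self_add

variable (T) in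
/-- The mass in `E` of a renewal cycle, normalized. -/
def cycleMass (E : Set (T.Δ₀ × ℕ)) : ℝ :=
  (∑' n, (T.survivalMass T.baseProfile E n).toReal) /
    ∑' n, (T.survivalMass T.baseProfile univ n).toReal

theorem cycleMass_nonneg (E : Set (T.Δ₀ × ℕ)) : 0 ≤ T.cycleMass E :=
  div_nonneg (tsum_nonneg fun _ => ENNReal.toReal_nonneg) (tsum_nonneg fun _ =>
    ENNReal.toReal_nonneg)

theorem cycleMass_le_one (hW : Summable fun n => (T.survivalMass T.baseProfile univ n).toReal)
    (E : Set (T.Δ₀ × ℕ)) : T.cycleMass E ≤ 1 := by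
  have hle := isProfile_baseProfile.toReal_survivalMass_le E
  refine div_le_one_of_le₀ (Summable.tsum_le_tsum hle ?_ hW)
    (tsum_nonneg fun _ => ENNReal.toReal_nonneg)
  exact .of_nonneg_of_le (fun _ => ENNReal.toReal_nonneg) hle hW

section Rates

variable {ι : Type*} {ρ : ι → ℕ → ℝ}

theorem exists_survivalMass_baseProfile_le (hρ : IsRateFamily ρ) {i : ι} {C : ℝ}
    (hC : ∀ n, T.returnTail n ≤ C * ρ i n) :
    ∃ j C', ∀ n, (T.survivalMass T.baseProfile univ n).toReal ≤ C' * ρ j n := by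
  have hbase := isProfile_baseProfile (T := T)
  obtain ⟨j, hj⟩ := hρ.exists_stopped_le T.splitProb_pos T.splitProb_lt_one.le
    survivalBound_antitone survivalBound_nonneg survivalBound_zero
    fun n => (survivalBound_le (hC n)).trans_eq (mul_assoc _ _ _).symm
  obtain ⟨C', hC'⟩ := hj (C / T.m₀.real univ) (T.totalMass T.baseProfile).toReal
  refine ⟨j, C', fun n => ?_⟩
  rw [← hbase.survival_stopMass]
  refine hC' _ (fun n => (T.firstMass T.baseProfile univ n).toReal) _ le_rfl
    ENNReal.toReal_nonneg (fun n => ?_) (fun n => ?_) (fun n => ?_) n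
  · exact (hbase.survival_stopMass n).symm ▸ ENNReal.toReal_nonneg
  · rw [toReal_firstMass_baseProfile_univ, div_mul_eq_mul_div]
    gcongr
    exact hC n
  · exact (hbase.survival_stopMass n).trans_le (hbase.toReal_survivalMass_univ_le n)

theorem exists_baseProb_sub_cycleMass_le (hρ : IsRateFamily ρ)
    (hW : Summable fun n => (T.survivalMass T.baseProfile univ n).toReal) {i : ι} {C : ℝ}
    (hC : ∀ n, absTail (fun k => (T.survivalMass T.baseProfile univ k).toReal) n ≤ C * ρ i n) :
    ∃ j C', ∀ E, MeasurableSet E → ∀ n,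
      |(T.baseProb E n).toReal - T.cycleMass E| ≤ C' * ρ j n := by
  have hbase := isProfile_baseProfile (T := T)
  have hsurv : (fun n => (T.survivalMass T.baseProfile univ n).toReal) =
      survival 1 fun k => (T.stopMass T.baseProfile k).toReal := by
    funext n
    rw [← hbase.survival_stopMass, totalMass_baseProfile, ENNReal.toReal_one]
  have hsurv₀ (n : ℕ) : 0 ≤ survival 1 (fun k => (T.stopMass T.baseProfile k).toReal) n :=
    congrFun hsurv n ▸ ENNReal.toReal_nonneg
  have hgcd (d : ℕ) (hd : ∀ n, 0 < (T.stopMass T.baseProfile n).toReal → d ∣ n) : d = 1 :=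
    T.Ret_gcd d fun i hi => hd _ (ENNReal.toReal_pos (stopMass_baseProfile_pos hi).ne'
      (hbase.stopMass_ne_top _))
  rw [hsurv] at hW hC
  obtain ⟨j, C', hC'⟩ := hρ.exists_renewal_le (fun _ => ENNReal.toReal_nonneg)
    (by rw [stopMass_baseProfile_zero, ENNReal.toReal_zero]) hgcd hsurv₀ hW hC
  refine ⟨j, C', fun E hE n => ?_⟩
  rw [cycleMass, hsurv]
  refine hC' (fun n => (T.survivalMass T.baseProfile E n).toReal)
    (fun n => (T.baseProb E n).toReal)
    (fun _ => ENNReal.toReal_nonneg) (fun n => ?_) (fun n => ?_) n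
  · exact (hbase.toReal_survivalMass_le E n).trans_eq (congrFun hsurv n)
  · rw [← pushMass_baseProfile]
    exact hbase.toReal_pushMass hE n

theorem exists_survivalMass_univ_le (hρ : IsRateFamily ρ) (hR : Summable T.returnTail) {i : ι}
    {C : ℝ} (hC : ∀ n, absTail T.returnTail n ≤ C * ρ i n) :
    ∃ j, ∀ B σ₀ : ℝ, 0 ≤ B → ∃ C', ∀ φ, T.IsProfile φ → (∀ l x, φ l x ≤ ENNReal.ofReal B) →
      (T.totalMass φ).toReal ≤ σ₀ → ∀ n, (T.survivalMass φ univ n).toReal ≤ C' * ρ j n := by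
  obtain ⟨j, hj⟩ := hρ.exists_stopped_le T.splitProb_pos T.splitProb_lt_one.le
    survivalBound_antitone survivalBound_nonneg survivalBound_zero fun n =>
      (survivalBound_le ((le_abs_self _).trans ((abs_le_absTail hR.abs n).trans (hC n)))).trans_eq
        (mul_assoc _ _ _).symm
  refine ⟨j, fun B σ₀ hB => ?_⟩
  obtain ⟨C', hC'⟩ := hj (B * C) σ₀
  refine ⟨C', fun φ hφ hφB hσ n => ?_⟩
  rw [← hφ.survival_stopMass]
  refine hC' _ (fun n => (T.firstMass φ univ n).toReal) _ hσ ENNReal.toReal_nonneg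
    (fun n => ?_) (fun n => ?_) (fun n => ?_) n
  · exact (hφ.survival_stopMass n).symm ▸ ENNReal.toReal_nonneg
  · rw [mul_assoc]
    exact (toReal_firstMass_univ_le hR hB hφB n).trans (mul_le_mul_of_nonneg_left (hC n) hB)
  · exact (hφ.survival_stopMass n).trans_le (hφ.toReal_survivalMass_univ_le n)

theorem exists_pushMass_sub_le (hρ : IsRateFamily ρ) (hR : Summable T.returnTail)
    (hW : Summable fun n => (T.survivalMass T.baseProfile univ n).toReal) {i j : ι} {C D : ℝ}
    (hC : ∀ n, absTail T.returnTail n ≤ C * ρ i n)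
    (hD : ∀ E, MeasurableSet E → ∀ n, |(T.baseProb E n).toReal - T.cycleMass E| ≤ D * ρ j n) :
    ∃ k, ∀ B σ₀ : ℝ, 0 ≤ B → ∃ C', ∀ φ, T.IsProfile φ → (∀ l x, φ l x ≤ ENNReal.ofReal B) →
      (T.totalMass φ).toReal ≤ σ₀ → ∀ E, MeasurableSet E → ∀ n,
        |(T.pushMass φ E n).toReal - (T.totalMass φ).toReal * T.cycleMass E| ≤ C' * ρ k n := by
  obtain ⟨j', hj'⟩ := exists_survivalMass_univ_le hρ hR hC
  obtain ⟨l, A, -, hl⟩ := hρ.directed j j'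
  obtain ⟨k, hk⟩ := hρ.exists_delayed_le l
  refine ⟨k, fun B σ₀ hB => ?_⟩
  obtain ⟨V, hV⟩ := hj' B σ₀ hB
  obtain ⟨C', hC'⟩ := hk (|D| * A) (|V| * A) σ₀
  refine ⟨C', fun φ hφ hφB hσ E hE n => ?_⟩
  rw [hφ.toReal_pushMass hE]
  refine hC' (fun n => (T.baseProb E n).toReal) _ (fun n => (T.survivalMass φ E n).toReal) _ _
    (cycleMass_nonneg E) (cycleMass_le_one hW E) hσ (fun n => ?_) (fun _ => ENNReal.toReal_nonneg)
    (fun n => ?_) (fun _ => ENNReal.toReal_nonneg) (fun n => ?_) n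
  · rw [mul_assoc]
    exact (hρ.le_abs_mul (hD E hE n)).trans
      (mul_le_mul_of_nonneg_left (hl n).1 (abs_nonneg _))
  · rw [hφ.survival_stopMass, mul_assoc]
    exact (hρ.le_abs_mul (hV φ hφ hφB hσ n)).trans
      (mul_le_mul_of_nonneg_left (hl n).2 (abs_nonneg _))
  · exact (hφ.toReal_survivalMass_le E n).trans_eq (hφ.survival_stopMass n).symm

end Rates

end YoungTower

/-! ### Lipschitz densities -/

namespace YoungTower

variable {T : YoungTower.{u}}

variable (T) in
/-- `ψ` lists, level by level, a density on the tower that is bounded by `B` and Lipschitz with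
constant `A` on every partition element. Unlike for `IsProfile`, zeros are allowed. -/
structure IsLipProfile (A B : ℝ) (ψ : ℕ → T.Δ₀ → ℝ≥0∞) : Prop where
  aemeasurable : ∀ l, AEMeasurable (ψ l) T.m₀
  le : ∀ l x, ψ l x ≤ ENNReal.ofReal B
  le_add : ∀ l, ∀ i ∈ T.I, l < T.Ret i → ∀ x ∈ T.Λ i, ∀ y ∈ T.Λ i,
    ψ l x ≤ ψ l y + ENNReal.ofReal (A * T.sepDist x y)

theorem isLipProfile_zero {A B : ℝ} : T.IsLipProfile A B fun _ _ => 0 where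
  aemeasurable _ := aemeasurable_const
  le _ _ := zero_le
  le_add _ _ _ _ _ _ _ _ := zero_le

theorem tsum_measure_lt_R_ne_top (hR : Summable T.returnTail) :
    ∑' l, T.m₀ {x | l < T.R x} ≠ ⊤ := by
  have h_eq : ∑' l, T.m₀ {x | l < T.R x} = ∑' l, ENNReal.ofReal (T.returnTail l) :=
    tsum_congr fun _ => (ofReal_measureReal).symm
  rw [h_eq, ← ENNReal.ofReal_tsum_of_nonneg returnTail_nonneg hR]
  exact ENNReal.ofReal_ne_top

section Bounded

variable {ψ χ : ℕ → T.Δ₀ → ℝ≥0∞} {B : ℝ}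

theorem totalMass_le {b : ℝ≥0∞} (hψ : ∀ l x, ψ l x ≤ b) :
    T.totalMass ψ ≤ b * ∑' l, T.m₀ {x | l < T.R x} := by
  rw [← ENNReal.tsum_mul_left]
  refine ENNReal.tsum_le_tsum fun l => ?_
  rw [← setLIntegral_const]
  exact lintegral_mono (hψ l)

theorem totalMass_ne_top (hR : Summable T.returnTail) (hψ : ∀ l x, ψ l x ≤ ENNReal.ofReal B) :
    T.totalMass ψ ≠ ⊤ :=
  ne_top_of_le_ne_top (ENNReal.mul_ne_top ENNReal.ofReal_ne_top (tsum_measure_lt_R_ne_top hR))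
    (totalMass_le hψ)

theorem toReal_totalMass_le (hR : Summable T.returnTail) (hB : 0 ≤ B)
    (hψ : ∀ l x, ψ l x ≤ ENNReal.ofReal B) :
    (T.totalMass ψ).toReal ≤ B * (∑' l, T.m₀ {x | l < T.R x}).toReal := by
  refine (ENNReal.toReal_mono (ENNReal.mul_ne_top ENNReal.ofReal_ne_top
    (tsum_measure_lt_R_ne_top hR)) (totalMass_le hψ)).trans_eq ?_
  rw [ENNReal.toReal_mul, ENNReal.toReal_ofReal hB]

theorem pushMass_add (hψ : ∀ l, AEMeasurable (ψ l) T.m₀) {E : Set (T.Δ₀ × ℕ)}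
    (hE : MeasurableSet E) (n : ℕ) :
    T.pushMass (fun l x => ψ l x + χ l x) E n = T.pushMass ψ E n + T.pushMass χ E n := by
  rw [pushMass, pushMass, pushMass, ← ENNReal.tsum_add]
  refine tsum_congr fun l => ?_
  simp only [add_mul]
  exact lintegral_add_left'
    (((hψ l).fun_mul (measurable_obs hE n l).aemeasurable).mono_measure Measure.restrict_le_self) _

theorem toReal_pushMass_add (hR : Summable T.returnTail) (hψm : ∀ l, AEMeasurable (ψ l) T.m₀)
    (hψ : ∀ l x, ψ l x ≤ ENNReal.ofReal B) (hχ : ∀ l x, χ l x ≤ ENNReal.ofReal B)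
    {E : Set (T.Δ₀ × ℕ)} (hE : MeasurableSet E) (n : ℕ) :
    (T.pushMass (fun l x => ψ l x + χ l x) E n).toReal =
      (T.pushMass ψ E n).toReal + (T.pushMass χ E n).toReal := by
  rw [pushMass_add hψm hE, ENNReal.toReal_add]
  · exact ne_top_of_le_ne_top (totalMass_ne_top hR hψ) (pushMass_le _ _ _)
  · exact ne_top_of_le_ne_top (totalMass_ne_top hR hχ) (pushMass_le _ _ _)

theorem toReal_totalMass_add (hR : Summable T.returnTail) (hψm : ∀ l, AEMeasurable (ψ l) T.m₀)
    (hψ : ∀ l x, ψ l x ≤ ENNReal.ofReal B) (hχ : ∀ l x, χ l x ≤ ENNReal.ofReal B) :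
    (T.totalMass fun l x => ψ l x + χ l x).toReal =
      (T.totalMass ψ).toReal + (T.totalMass χ).toReal := by
  have h_add := toReal_pushMass_add hR hψm hψ hχ MeasurableSet.univ 0
  simpa only [totalMass, pushMass_univ] using h_add

end Bounded

theorem add_le_exp_mul_add {A a b d : ℝ} (hA : 0 ≤ A) (hb : 0 ≤ b) (hd : 0 ≤ d)
    (h : a ≤ b + A * d) : a + A ≤ Real.exp d * (b + A) :=
  calc a + A ≤ (d + 1) * (b + A) := by nlinarith
    _ ≤ Real.exp d * (b + A) := by gcongr; exact Real.add_one_le_exp d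

namespace IsLipProfile

variable {A B : ℝ} {ψ : ℕ → T.Δ₀ → ℝ≥0∞}

theorem add_const_le (hψ : T.IsLipProfile A B ψ) (hA : 0 ≤ A) (hB : 0 ≤ B) (l : ℕ) (x : T.Δ₀) :
    ψ l x + ENNReal.ofReal A ≤ ENNReal.ofReal (B + A) := by
  rw [ENNReal.ofReal_add hB hA]
  gcongr
  exact hψ.le l x

theorem isProfile_add_const (hψ : T.IsLipProfile A B ψ) (hR : Summable T.returnTail)
    (hA : 0 ≤ A) (hB : 0 ≤ B) : T.IsProfile fun l x => ψ l x + ENNReal.ofReal A where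
  aemeasurable l := (hψ.aemeasurable l).add aemeasurable_const
  logLipOn l r hlr i hi hir x hx y hy := by
    have hd := T.sepDist_nonneg x y
    have hle := hψ.le_add l i hi (by omega) x hx y hy
    have hx_fin := ne_top_of_le_ne_top ENNReal.ofReal_ne_top (hψ.le l x)
    have hy_fin := ne_top_of_le_ne_top ENNReal.ofReal_ne_top (hψ.le l y)
    change ψ l x + _ ≤ _ * (ψ l y + _)
    rw [← ENNReal.ofReal_toReal hx_fin, ← ENNReal.ofReal_toReal hy_fin] at hle ⊢
    rw [← ENNReal.ofReal_add ENNReal.toReal_nonneg (by positivity),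
      ENNReal.ofReal_le_ofReal_iff (by positivity)] at hle
    rw [← ENNReal.ofReal_add ENNReal.toReal_nonneg hA,
      ← ENNReal.ofReal_add ENNReal.toReal_nonneg hA, ← ENNReal.ofReal_mul (Real.exp_pos _).le,
      one_mul]
    exact ENNReal.ofReal_le_ofReal (add_le_exp_mul_add hA ENNReal.toReal_nonneg hd hle)
  lintegral_ne_top := totalMass_ne_top hR (hψ.add_const_le hA hB)

end IsLipProfile

/-- Convergence of the push-forwards with rate in the family `ρ`, for densities given level by
level. The limiting mass of a set is `cycleMass`, because a long renewal process is found in the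
middle of a cycle. -/
structure HasRate {κ : Type*} (T : YoungTower.{u}) (ρ : κ → ℕ → ℝ) : Prop where
  tendsto : ∀ j, Tendsto (ρ j) atTop (𝓝 0)
  summable_returnTail : Summable T.returnTail
  summable_survivalMass : Summable fun n => (T.survivalMass T.baseProfile univ n).toReal
  tendsto_baseProb : ∀ E, MeasurableSet E →
    Tendsto (fun n => (T.baseProb E n).toReal) atTop (𝓝 (T.cycleMass E))
  exists_pushMass_sub_le : ∃ j, ∀ A B : ℝ, 0 ≤ A → 0 ≤ B → ∃ C', ∀ ψ, T.IsLipProfile A B ψ →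
    ∀ E, MeasurableSet E → ∀ n,
      |(T.pushMass ψ E n).toReal - (T.totalMass ψ).toReal * T.cycleMass E| ≤ C' * ρ j n

/-- The bound for the profile `ψ + A`, which is bounded away from zero, and the one for the
constant profile `A` give the bound for `ψ` by subtraction. -/
theorem exists_pushMass_sub_le_of_isLipProfile (hR : Summable T.returnTail) {f : ℕ → ℝ}
    (hf : ∀ B σ₀ : ℝ, 0 ≤ B → ∃ C', ∀ φ, T.IsProfile φ → (∀ l x, φ l x ≤ ENNReal.ofReal B) →
      (T.totalMass φ).toReal ≤ σ₀ → ∀ E, MeasurableSet E → ∀ n,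
        |(T.pushMass φ E n).toReal - (T.totalMass φ).toReal * T.cycleMass E| ≤ C' * f n)
    {A B : ℝ} (hA : 0 ≤ A) (hB : 0 ≤ B) :
    ∃ C', ∀ ψ, T.IsLipProfile A B ψ → ∀ E, MeasurableSet E → ∀ n,
      |(T.pushMass ψ E n).toReal - (T.totalMass ψ).toReal * T.cycleMass E| ≤ C' * f n := by
  have hBA := add_nonneg hB hA
  obtain ⟨C', hC'⟩ := hf (B + A) ((B + A) * (∑' l, T.m₀ {x | l < T.R x}).toReal) hBA
  refine ⟨C' + C', fun ψ hψ E hE n => ?_⟩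
  have hzero := T.isLipProfile_zero (A := A) (B := B)
  have hψ_le (l : ℕ) (x : T.Δ₀) : ψ l x ≤ ENNReal.ofReal (B + A) :=
    le_self_add.trans (hψ.add_const_le hA hB l x)
  have hconst_le := hzero.add_const_le hA hB
  have hψA := hC' _ (hψ.isProfile_add_const hR hA hB) (hψ.add_const_le hA hB)
    (toReal_totalMass_le hR hBA (hψ.add_const_le hA hB)) E hE n
  have hconst := hC' _ (hzero.isProfile_add_const hR hA hB) hconst_le
    (toReal_totalMass_le hR hBA hconst_le) E hE n
  simp only [zero_add] at hconst hconst_le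
  rw [toReal_pushMass_add hR hψ.aemeasurable hψ_le hconst_le hE,
    toReal_totalMass_add hR hψ.aemeasurable hψ_le hconst_le] at hψA
  rw [abs_le] at hψA hconst ⊢
  constructor <;> linarith

theorem hasRate_of_returnTail_le {ι κ : Type*} {r : ι → ℕ → ℝ} {ρ : κ → ℕ → ℝ}
    (hr : IsRateFamily r) (hρ : IsRateFamily ρ) (hrρ : HasTailRate r ρ) {i : ι} {C : ℝ}
    (hC : ∀ n, T.returnTail n ≤ C * r i n) : T.HasRate ρ := by
  obtain ⟨i', C₁, hsurv⟩ := exists_survivalMass_baseProfile_le hr hC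
  obtain ⟨hR, j, C₂, hRtail⟩ := hrρ.summable_and_absTail_le returnTail_nonneg hC
  obtain ⟨hW, j', C₃, hWtail⟩ :=
    hrρ.summable_and_absTail_le (fun _ => ENNReal.toReal_nonneg) hsurv
  obtain ⟨l, D, hbase⟩ := exists_baseProb_sub_cycleMass_le hρ hW hWtail
  obtain ⟨k, hk⟩ := exists_pushMass_sub_le hρ hR hW hRtail hbase
  refine ⟨hρ.tendsto, hR, hW, fun E hE => ?_, k, fun A B hA hB =>
    exists_pushMass_sub_le_of_isLipProfile hR hk hA hB⟩
  have hlim := (hρ.tendsto l).const_mul D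
  rw [mul_zero] at hlim
  exact tendsto_iff_norm_sub_tendsto_zero.2
    (squeeze_zero (fun _ => norm_nonneg _) (hbase E hE) hlim)

end YoungTower

theorem tsum_sum_range_sub_ennreal (c : ℕ → ℕ → ℝ≥0∞) :
    ∑' n, ∑ k ∈ Finset.range (n + 1), c k (n - k) = ∑' k, ∑' m, c k m := by
  rw [← ENNReal.tsum_prod, ← (Finset.HasAntidiagonal.sigmaAntidiagonalEquivProd (A := ℕ)).tsum_eq,
    ENNReal.tsum_sigma']
  refine tsum_congr fun n => ?_
  rw [tsum_fintype, ← Finset.Nat.sum_antidiagonal_eq_sum_range_succ c n, ← Finset.sum_attach]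
  rfl

namespace YoungTower

variable {T : YoungTower.{u}}

/-! ### Measures on the tower -/

theorem measurableEmbedding_val : MeasurableEmbedding (Subtype.val : T.Tower → T.Δ₀ × ℕ) :=
  .subtype_coe (measurableSet_lt measurable_snd (T.R_meas.comp measurable_fst))

theorem val_towerMap (p : T.Tower) : (T.towerMap p).1 = T.rawMap p.1 := by
  rw [towerMap, rawMap]
  split_ifs <;> rfl

theorem val_towerMap_iterate (n : ℕ) (p : T.Tower) :
    (T.towerMap^[n] p).1 = T.rawMap^[n] p.1 :=
  (show Function.Semiconj Subtype.val T.towerMap T.rawMap from val_towerMap).iterate_right n p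

theorem measurable_towerMap : Measurable T.towerMap := by
  rw [← measurableEmbedding_val.measurable_comp_iff]
  exact (funext val_towerMap : Subtype.val ∘ T.towerMap = T.rawMap ∘ Subtype.val) ▸
    measurable_rawMap.comp measurable_subtype_coe

theorem lintegral_towerMeasure (G : T.Δ₀ × ℕ → ℝ≥0∞) :
    ∫⁻ p, G p.1 ∂T.towerMeasure = ∑' l, ∫⁻ x in {x | l < T.R x}, G (x, l) ∂T.m₀ := by
  have hlevel (l : ℕ) : MeasurableEmbedding fun x : T.Δ₀ => (x, l) :=
    .prodMk_right .id l
  have hrange := (measurableEmbedding_val (T := T)).measurableSet_range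
  rw [towerMeasure, ← measurableEmbedding_val.lintegral_map, measurableEmbedding_val.map_comap,
    Measure.restrict_sum _ hrange, lintegral_sum_measure]
  refine tsum_congr fun l => ?_
  rw [(hlevel l).restrict_map, (hlevel l).lintegral_map,
    Measure.restrict_restrict ((hlevel l).measurable hrange)]
  congr 2
  ext x
  simp

theorem towerMeasure_preimage_val {E : Set (T.Δ₀ × ℕ)} (hE : MeasurableSet E) :
    T.towerMeasure (Subtype.val ⁻¹' E) =
      ∑' l, T.m₀.restrict {x | l < T.R x} {x | (x, l) ∈ E} := by
  rw [← lintegral_indicator_one (measurable_subtype_coe hE)]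
  refine (lintegral_towerMeasure (E.indicator 1)).trans (tsum_congr fun l => ?_)
  exact lintegral_indicator_one (measurable_prodMk_right hE)

theorem quasiMeasurePreserving_base :
    Measure.QuasiMeasurePreserving (fun p : T.Tower => p.1.1) T.towerMeasure T.m₀ := by
  have hmeas : Measurable fun p : T.Tower => p.1.1 := measurable_fst.comp measurable_subtype_coe
  refine ⟨hmeas, Measure.AbsolutelyContinuous.mk fun N hN hN₀ => ?_⟩
  rw [Measure.map_apply hmeas hN]
  refine (towerMeasure_preimage_val (measurable_fst hN)).trans (ENNReal.tsum_eq_zero.2 fun l => ?_)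
  exact Measure.restrict_le_self.absolutelyContinuous hN₀

/-! ### The equilibrium measure -/

theorem aemeasurable_remainder_arrival (k : ℕ) :
    AEMeasurable (T.remainder (T.arrival (T.firstArrival T.baseProfile) k)) T.m₀ :=
  aemeasurable_remainder
    (IsRegular.arrival isProfile_baseProfile.isRegular_firstArrival k).aemeasurable

variable (T) in
/-- The density on the base of the mass that is present during a renewal cycle: the initial
reference mass and everything that returns before the renewal without being stopped. -/
def cycleDensity (x : T.Δ₀) : ℝ≥0∞ :=
  (T.m₀ univ)⁻¹ + ∑' k, T.remainder (T.arrival (T.firstArrival T.baseProfile) k) x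

theorem aemeasurable_cycleDensity : AEMeasurable T.cycleDensity T.m₀ :=
  aemeasurable_const.add (AEMeasurable.tsum aemeasurable_remainder_arrival)

theorem cycleDensity_ne_zero (x : T.Δ₀) : T.cycleDensity x ≠ 0 := fun h =>
  ENNReal.inv_ne_zero.2 (measure_ne_top T.m₀ univ) (add_eq_zero.1 h).1

theorem setLIntegral_mul_obs_zero (E : Set (T.Δ₀ × ℕ)) (h : T.Δ₀ → ℝ≥0∞) (n : ℕ) :
    ∫⁻ x in {x | n < T.R x}, h x * T.obs E n 0 x ∂T.m₀ =
      ∫⁻ x in {x | n < T.R x}, h x * E.indicator 1 (x, n) ∂T.m₀ := by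
  refine setLIntegral_congr_fun (measurableSet_lt_R n) fun x hx => ?_
  simp only [obs]
  rw [rawMap_iterate_of_lt (by simpa using hx), zero_add]

theorem firstMass_baseProfile (E : Set (T.Δ₀ × ℕ)) (n : ℕ) :
    T.firstMass T.baseProfile E n =
      ∫⁻ x in {x | n < T.R x}, (T.m₀ univ)⁻¹ * E.indicator 1 (x, n) ∂T.m₀ := by
  rw [firstMass, tsum_baseProfile, zero_add,
    ← setLIntegral_mul_obs_zero E (fun _ => (T.m₀ univ)⁻¹),
    lintegral_const_mul' _ _ (ENNReal.inv_ne_top.2 T.m₀_univ_ne_zero), ENNReal.div_eq_inv_mul]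

theorem tsum_survivalMass_baseProfile {E : Set (T.Δ₀ × ℕ)} (hE : MeasurableSet E) :
    ∑' n, T.survivalMass T.baseProfile E n =
      ∑' n, ∫⁻ x in {x | n < T.R x}, T.cycleDensity x * E.indicator 1 (x, n) ∂T.m₀ := by
  have hind (n : ℕ) : Measurable fun x : T.Δ₀ => E.indicator (1 : T.Δ₀ × ℕ → ℝ≥0∞) (x, n) :=
    (measurable_one.indicator hE).comp measurable_prodMk_right
  simp only [survivalMass]
  rw [ENNReal.tsum_add, tsum_sum_range_sub_ennreal (fun k m => ∫⁻ x in {x | m < T.R x},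
    T.remainder (T.arrival (T.firstArrival T.baseProfile) k) x * T.obs E m 0 x ∂T.m₀),
    ENNReal.tsum_comm, ← ENNReal.tsum_add]
  refine tsum_congr fun n => ?_
  simp only [setLIntegral_mul_obs_zero, cycleDensity, add_mul, ← ENNReal.tsum_mul_right]
  rw [lintegral_add_left (f := fun x => (T.m₀ univ)⁻¹ * _) (measurable_const.mul (hind n)),
    lintegral_tsum fun k => ((aemeasurable_remainder_arrival k).fun_mul
      (hind n).aemeasurable).mono_measure Measure.restrict_le_self, firstMass_baseProfile]

variable (T) in
/-- The mass of a renewal cycle, which is the mean waiting time of the renewal process. -/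
def cycleTotal : ℝ≥0∞ := ∑' n, T.survivalMass T.baseProfile univ n

theorem cycleTotal_ne_zero : T.cycleTotal ≠ 0 := by
  have h_start : T.survivalMass T.baseProfile univ 0 = 1 := by
    simpa [totalMass_baseProfile, stopMass_baseProfile_zero] using
      (isProfile_baseProfile.totalMass_eq (T := T) 0).symm
  have h_le : T.survivalMass T.baseProfile univ 0 ≤ T.cycleTotal := ENNReal.le_tsum 0
  exact (zero_lt_one.trans_le (h_start ▸ h_le)).ne'

variable (T) in
/-- The measure with the density of a renewal cycle, normalized. -/
def equilibrium : Measure T.Tower :=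
  T.cycleTotal⁻¹ • T.towerMeasure.withDensity fun p => T.cycleDensity p.1.1

theorem equilibrium_preimage_val {E : Set (T.Δ₀ × ℕ)} (hE : MeasurableSet E) :
    T.equilibrium (Subtype.val ⁻¹' E) =
      (∑' n, T.survivalMass T.baseProfile E n) / T.cycleTotal := by
  have hE' : MeasurableSet (Subtype.val ⁻¹' E : Set T.Tower) := measurable_subtype_coe hE
  rw [equilibrium, Measure.smul_apply, withDensity_apply _ hE', smul_eq_mul,
    ← ENNReal.div_eq_inv_mul, ← lintegral_indicator hE', tsum_survivalMass_baseProfile hE]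
  congr 1
  refine (lintegral_towerMeasure (E.indicator fun p => T.cycleDensity p.1)).trans
    (tsum_congr fun l => lintegral_congr fun x => ?_)
  by_cases hx : (x, l) ∈ E <;> simp [hx]

theorem real_equilibrium_preimage_val {E : Set (T.Δ₀ × ℕ)} (hE : MeasurableSet E) :
    T.equilibrium.real (Subtype.val ⁻¹' E) = T.cycleMass E := by
  have hbase := isProfile_baseProfile (T := T)
  rw [measureReal_def, equilibrium_preimage_val hE, ENNReal.toReal_div, cycleTotal, cycleMass,
    ENNReal.tsum_toReal_eq (hbase.survivalMass_ne_top E), ENNReal.tsum_toReal_eq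
      (hbase.survivalMass_ne_top univ)]

theorem real_equilibrium {E : Set T.Tower} (hE : MeasurableSet E) :
    T.equilibrium.real E = T.cycleMass (Subtype.val '' E) := by
  rw [← real_equilibrium_preimage_val (measurableEmbedding_val.measurableSet_image.2 hE),
    Subtype.val_injective.preimage_image]

theorem equilibrium_absolutelyContinuous : T.equilibrium ≪ T.towerMeasure :=
  (withDensity_absolutelyContinuous _ _).smul_left _

namespace HasRate

variable {κ : Type*} {ρ : κ → ℕ → ℝ}

theorem cycleTotal_ne_top (hT : T.HasRate ρ) : T.cycleTotal ≠ ⊤ := by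
  have h_eq : T.cycleTotal = ∑' n, ENNReal.ofReal (T.survivalMass T.baseProfile univ n).toReal :=
    tsum_congr fun n => (ENNReal.ofReal_toReal
      (isProfile_baseProfile.survivalMass_ne_top univ n)).symm
  rw [h_eq, ← ENNReal.ofReal_tsum_of_nonneg (fun _ => ENNReal.toReal_nonneg)
    hT.summable_survivalMass]
  exact ENNReal.ofReal_ne_top

theorem isProbabilityMeasure_equilibrium (hT : T.HasRate ρ) :
    IsProbabilityMeasure T.equilibrium where
  measure_univ := (equilibrium_preimage_val MeasurableSet.univ).trans
    (ENNReal.div_self cycleTotal_ne_zero hT.cycleTotal_ne_top)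

theorem cycleMass_preimage (hT : T.HasRate ρ) {E : Set (T.Δ₀ × ℕ)} (hE : MeasurableSet E) :
    T.cycleMass (T.rawMap ⁻¹' E) = T.cycleMass E := by
  refine tendsto_nhds_unique (hT.tendsto_baseProb _ (measurable_rawMap hE)) ?_
  refine ((tendsto_add_atTop_iff_nat 1).2 (hT.tendsto_baseProb E hE)).congr fun n => ?_
  simp only [baseProb, obs, Function.iterate_succ_apply']
  rfl

theorem measurePreserving_equilibrium (hT : T.HasRate ρ) :
    MeasurePreserving T.towerMap T.equilibrium T.equilibrium := by
  have := hT.isProbabilityMeasure_equilibrium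
  refine ⟨measurable_towerMap, Measure.ext fun E hE => ?_⟩
  obtain ⟨E', hE', rfl⟩ : ∃ E', MeasurableSet E' ∧ Subtype.val ⁻¹' E' = E := hE
  have h_preimage : T.towerMap ⁻¹' (Subtype.val ⁻¹' E') = Subtype.val ⁻¹' (T.rawMap ⁻¹' E') :=
    ext fun p => by simp only [mem_preimage, val_towerMap]
  rw [Measure.map_apply measurable_towerMap (measurable_subtype_coe hE'), h_preimage,
    ← measureReal_eq_measureReal_iff, real_equilibrium_preimage_val hE',
    real_equilibrium_preimage_val (measurable_rawMap hE'), hT.cycleMass_preimage hE']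

theorem absolutelyContinuous_equilibrium (hT : T.HasRate ρ) : T.towerMeasure ≪ T.equilibrium :=
  (withDensity_absolutelyContinuous'
    (aemeasurable_cycleDensity.comp_quasiMeasurePreserving quasiMeasurePreserving_base)
    (ae_of_all _ fun p => cycleDensity_ne_zero p.1.1)).trans
    (Measure.absolutelyContinuous_smul (ENNReal.inv_ne_zero.2 hT.cycleTotal_ne_top))

end HasRate

end YoungTower

theorem tvDist_le {X : Type*} [MeasurableSpace X] (μ ν : Measure X) [IsFiniteMeasure μ]
    [IsFiniteMeasure ν] {B : ℝ} (h : ∀ E, MeasurableSet E → |μ.real E - ν.real E| ≤ B) :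
    tvDist μ ν ≤ ENNReal.ofReal (2 * B) := by
  set s := μ.toSignedMeasure - ν.toSignedMeasure with hs
  have hs_apply (E : Set X) (hE : MeasurableSet E) : s E = μ.real E - ν.real E := by
    rw [hs, Measure.toSignedMeasure_sub_apply hE]
  obtain ⟨P, hP, hP_nonneg, hP_nonpos, hpos, hneg⟩ := s.toJordanDecomposition_spec
  have hB : 0 ≤ B := (abs_nonneg _).trans (h ∅ MeasurableSet.empty)
  have hpos_le : s.toJordanDecomposition.posPart univ ≤ ENNReal.ofReal B := by
    rw [hpos, SignedMeasure.toMeasureOfZeroLE_apply _ _ hP MeasurableSet.univ, ENNReal.ofReal,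
      ENNReal.coe_le_coe, ← NNReal.coe_le_coe, Real.coe_toNNReal _ hB]
    change s (P ∩ univ) ≤ B
    rw [inter_univ, hs_apply P hP]
    exact (le_abs_self _).trans (h P hP)
  have hneg_le : s.toJordanDecomposition.negPart univ ≤ ENNReal.ofReal B := by
    rw [hneg, SignedMeasure.toMeasureOfLEZero_apply _ _ hP.compl MeasurableSet.univ,
      ENNReal.ofReal, ENNReal.coe_le_coe, ← NNReal.coe_le_coe, Real.coe_toNNReal _ hB]
    change -s (Pᶜ ∩ univ) ≤ B
    rw [inter_univ, hs_apply Pᶜ hP.compl]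
    exact (neg_le_abs _).trans (h Pᶜ hP.compl)
  rw [tvDist, ← hs, SignedMeasure.totalVariation, Measure.add_apply, two_mul,
    ENNReal.ofReal_add hB hB]
  exact add_le_add hpos_le hneg_le

theorem hasSum_measureReal_iUnion {X : Type*} [MeasurableSpace X] (μ : Measure X)
    [IsFiniteMeasure μ] {f : ℕ → Set X} (hf : ∀ k, MeasurableSet (f k))
    (hd : Pairwise (Function.onFun Disjoint f)) :
    HasSum (fun k => μ.real (f k)) (μ.real (⋃ k, f k)) := by
  simpa only [Measure.toSignedMeasure_apply_measurable (hf _),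
    Measure.toSignedMeasure_apply_measurable (MeasurableSet.iUnion hf)] using
    μ.toSignedMeasure.m_iUnion hf hd

theorem tendsto_measureReal_of_isPiSystem {X : Type*} [mX : MeasurableSpace X]
    {μ : ℕ → Measure X} {κ ν : Measure X} [∀ n, IsFiniteMeasure (μ n)] [IsFiniteMeasure κ]
    [IsFiniteMeasure ν] (hμ : ∀ n, μ n ≤ κ) {S : Set (Set X)} (hS : IsPiSystem S)
    (hS_meas : ∀ A ∈ S, MeasurableSet A) (hS_univ : univ ∈ S)
    (h : ∀ A ∈ S, Tendsto (fun n => (μ n).real A) atTop (𝓝 (ν.real A))) (A : Set X)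
    (hA : MeasurableSet[MeasurableSpace.generateFrom S] A) :
    Tendsto (fun n => (μ n).real A) atTop (𝓝 (ν.real A)) := by
  have hle : MeasurableSpace.generateFrom S ≤ mX := MeasurableSpace.generateFrom_le hS_meas
  induction A, hA using MeasurableSpace.induction_on_inter
    (m := MeasurableSpace.generateFrom S) rfl hS with
  | empty => simp
  | basic A hA => exact h A hA
  | compl A hA ih =>
    simp only [measureReal_compl (hle _ hA)]
    exact (h univ hS_univ).sub ih
  | iUnion f hd hf ih =>
    have hf_meas (k : ℕ) := hle _ (hf k)
    simp only [← (hasSum_measureReal_iUnion _ hf_meas hd).tsum_eq]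
    refine tendsto_tsum_of_dominated_convergence (hasSum_measureReal_iUnion κ hf_meas hd).summable
      ih (.of_forall fun n k => ?_)
    rw [Real.norm_of_nonneg measureReal_nonneg]
    exact ENNReal.toReal_mono (measure_ne_top _ _) (hμ n (f k))

namespace YoungTower

variable {T : YoungTower.{u}} {κ : Type*} {ρ : κ → ℕ → ℝ}

/-! ### Ergodicity -/

variable (T) in
/-- Measurable subsets of the base that are determined by finitely many symbols. -/
def finiteMemory : Set (Set T.Δ₀) :=
  {A | MeasurableSet A ∧ ∃ N : ℕ, ∀ x y, (N : ℕ∞) ≤ sepTime T.I T.Λ T.FR x y → x ∈ A → y ∈ A}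

theorem isPiSystem_finiteMemory : IsPiSystem T.finiteMemory := by
  rintro A ⟨hA, N, hN⟩ B ⟨hB, M, hM⟩ -
  refine ⟨hA.inter hB, max N M, fun x y h hx => ?_⟩
  exact ⟨hN x y (le_trans (by exact_mod_cast le_max_left N M) h) hx.1,
    hM x y (le_trans (by exact_mod_cast le_max_right N M) h) hx.2⟩

theorem univ_mem_finiteMemory : univ ∈ T.finiteMemory :=
  ⟨MeasurableSet.univ, 0, fun _ _ _ _ => mem_univ _⟩

theorem exists_mem_Λ_of_lt_sepTime {x y : T.Δ₀} {k : ℕ}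
    (h : (k : ℕ∞) < sepTime T.I T.Λ T.FR x y) :
    ∃ i ∈ T.I, T.FR^[k] x ∈ T.Λ i ∧ T.FR^[k] y ∈ T.Λ i := by
  by_contra hk
  exact h.not_ge (iInf₂_le k hk)

theorem preimage_iterate_mem_finiteMemory (k : ℕ) {i : ℕ} (hi : i ∈ T.I) :
    T.FR^[k] ⁻¹' T.Λ i ∈ T.finiteMemory := by
  refine ⟨T.FR_meas.iterate k (T.Λ_meas i hi), k + 1, fun x y h hx => ?_⟩
  obtain ⟨j, hj, hxj, hyj⟩ := exists_mem_Λ_of_lt_sepTime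
    (lt_of_lt_of_le (by exact_mod_cast k.lt_succ_self) h)
  rwa [← T.Λ_disj.elim hi hj (not_disjoint_iff.2 ⟨_, hx, hxj⟩)] at hyj

theorem exists_finiteMemory_ae_eq {A : Set T.Δ₀} (hA : MeasurableSet A) :
    ∃ B, MeasurableSet[MeasurableSpace.generateFrom T.finiteMemory] B ∧ A =ᵐ[T.m₀] B := by
  obtain ⟨B, hB, hAB⟩ := T.generating A hA
  refine ⟨B, MeasurableSpace.generateFrom_mono ?_ _ hB, hAB⟩
  rintro S ⟨k, i, hi, rfl⟩
  exact preimage_iterate_mem_finiteMemory k hi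

theorem indicator_le_add_sepDist {A : Set T.Δ₀} {N : ℕ}
    (hN : ∀ x y, (N : ℕ∞) ≤ sepTime T.I T.Λ T.FR x y → x ∈ A → y ∈ A) (x y : T.Δ₀) :
    A.indicator (1 : T.Δ₀ → ℝ≥0∞) x ≤
      A.indicator 1 y + ENNReal.ofReal ((T.β ^ N)⁻¹ * T.sepDist x y) := by
  by_cases hx : x ∈ A
  · by_cases hy : y ∈ A
    · simp [hx, hy]
    · have hsep : sepTime T.I T.Λ T.FR x y ≤ N := le_of_not_ge fun h => hy (hN x y h hx)
      rw [indicator_of_mem hx, indicator_of_notMem hy, zero_add, Pi.one_apply,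
        ENNReal.one_le_ofReal, ← div_eq_inv_mul, one_le_div (pow_pos T.β_pos N)]
      exact (epow_natCast _ _).symm.trans_le (epow_antitone T.β_pos.le T.β_lt_one.le hsep)
  · simp [hx]

section Mixing

variable {E : Set (T.Δ₀ × ℕ)} (l : ℕ)

variable (T E) in
/-- The part of the `l`-th level that is in `E` at time `n`. -/
def levelMeasure (n : ℕ) : Measure T.Δ₀ :=
  (T.m₀.restrict {x | l < T.R x}).withDensity (T.obs E n l)

theorem levelMeasure_le (n : ℕ) : T.levelMeasure E l n ≤ T.m₀.restrict {x | l < T.R x} :=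
  (withDensity_mono (ae_of_all _ fun x => obs_le_one E n l x)).trans_eq withDensity_one

theorem isFiniteMeasure_levelMeasure (n : ℕ) : IsFiniteMeasure (T.levelMeasure E l n) :=
  isFiniteMeasure_of_le _ (levelMeasure_le l n)

variable (T) in
/-- The indicator function of a subset `A` of the `l`-th level. -/
def levelIndicator (A : Set T.Δ₀) (k : ℕ) : T.Δ₀ → ℝ≥0∞ := if k = l then A.indicator 1 else 0

theorem isLipProfile_levelIndicator {A : Set T.Δ₀} (hA : MeasurableSet A) {N : ℕ}
    (hN : ∀ x y, (N : ℕ∞) ≤ sepTime T.I T.Λ T.FR x y → x ∈ A → y ∈ A) :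
    T.IsLipProfile (T.β ^ N)⁻¹ 1 (T.levelIndicator l A) where
  aemeasurable k := by
    rw [levelIndicator]
    split_ifs
    · exact (measurable_one.indicator hA).aemeasurable
    · exact aemeasurable_const
  le k x := by
    rw [levelIndicator, ENNReal.ofReal_one]
    split_ifs
    · exact indicator_apply_le' (fun _ => le_rfl) fun _ => zero_le_one
    · exact zero_le_one
  le_add k i _ _ x _ y _ := by
    simp only [levelIndicator]
    split_ifs
    · exact indicator_le_add_sepDist hN x y
    · exact zero_le

theorem pushMass_levelIndicator {A : Set T.Δ₀} (hA : MeasurableSet A) (n : ℕ) :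
    T.pushMass (T.levelIndicator l A) E n = T.levelMeasure E l n A := by
  rw [pushMass, tsum_eq_single l fun k hk => by simp [levelIndicator, hk], levelMeasure,
    withDensity_apply _ hA, ← lintegral_indicator hA]
  refine lintegral_congr fun x => ?_
  by_cases hx : x ∈ A <;> simp [levelIndicator, hx]

theorem totalMass_levelIndicator {A : Set T.Δ₀} (hA : MeasurableSet A) :
    T.totalMass (T.levelIndicator l A) = T.m₀.restrict {x | l < T.R x} A := by
  rw [totalMass, tsum_eq_single l fun k hk => by simp [levelIndicator, hk]]
  simp only [levelIndicator, if_true]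
  exact lintegral_indicator_one hA

namespace HasRate

theorem tendsto_levelMeasure_of_finiteMemory (hT : T.HasRate ρ) (hE : MeasurableSet E)
    {A : Set T.Δ₀} (hA : A ∈ T.finiteMemory) :
    Tendsto (fun n => (T.levelMeasure E l n).real A) atTop
      (𝓝 ((T.m₀.restrict {x | l < T.R x}).real A * T.cycleMass E)) := by
  obtain ⟨hA, N, hN⟩ := hA
  obtain ⟨j, hj⟩ := hT.exists_pushMass_sub_le
  obtain ⟨C, hC⟩ := hj (T.β ^ N)⁻¹ 1 (inv_nonneg.2 (pow_pos T.β_pos N).le) zero_le_one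
  have hle := hC _ (isLipProfile_levelIndicator l hA hN) E hE
  simp only [pushMass_levelIndicator l hA, totalMass_levelIndicator l hA] at hle
  have hlim := (hT.tendsto j).const_mul C
  rw [mul_zero] at hlim
  exact tendsto_iff_norm_sub_tendsto_zero.2 (squeeze_zero (fun _ => norm_nonneg _) hle hlim)

theorem tendsto_levelMeasure (hT : T.HasRate ρ) (hE : MeasurableSet E) {A : Set T.Δ₀}
    (hA : MeasurableSet A) :
    Tendsto (fun n => (T.levelMeasure E l n).real A) atTop
      (𝓝 ((T.m₀.restrict {x | l < T.R x}).real A * T.cycleMass E)) := by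
  have hfin := isFiniteMeasure_levelMeasure (T := T) (E := E) l
  set μ := T.m₀.restrict {x | l < T.R x}
  have hlimit (B : Set T.Δ₀) :
      ((T.cycleMass E).toNNReal • μ).real B = μ.real B * T.cycleMass E := by
    rw [measureReal_nnreal_smul_apply, Real.coe_toNNReal _ (cycleMass_nonneg E), mul_comm]
  obtain ⟨B, hB, hAB⟩ := exists_finiteMemory_ae_eq hA
  have hABμ : A =ᵐ[μ] B := ae_restrict_of_ae hAB
  have hconv := tendsto_measureReal_of_isPiSystem (levelMeasure_le (E := E) l)
    (ν := (T.cycleMass E).toNNReal • μ) isPiSystem_finiteMemory (fun _ hA => hA.1)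
    univ_mem_finiteMemory (fun A hA => by
      rw [hlimit]
      exact hT.tendsto_levelMeasure_of_finiteMemory l hE hA) B hB
  rw [hlimit, ← measureReal_congr hABμ] at hconv
  exact hconv.congr fun n =>
    (measureReal_congr ((withDensity_absolutelyContinuous _ _).ae_eq hABμ)).symm

end HasRate

theorem levelMeasure_real_image_compl_eq_zero {A : Set T.Tower} (hA : MeasurableSet A)
    (hinv : T.towerMap ⁻¹' A = A) (n : ℕ) :
    (T.levelMeasure (Subtype.val '' Aᶜ) l n).real {x | (x, l) ∈ (Subtype.val '' A : Set _)} =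
      0 := by
  have hlevel : MeasurableSet {x : T.Δ₀ | (x, l) ∈ (Subtype.val '' A : Set _)} :=
    measurable_prodMk_right (measurableEmbedding_val.measurableSet_image.2 hA)
  rw [measureReal_def, levelMeasure, withDensity_apply _ hlevel,
    setLIntegral_congr_fun (g := fun _ => 0) hlevel, lintegral_zero, ENNReal.toReal_zero]
  rintro x ⟨p, hp, hpx⟩
  refine indicator_of_notMem ?_ _
  rw [← hpx, ← val_towerMap_iterate]
  rintro ⟨q, hq, hqp⟩
  have hmaps : MapsTo T.towerMap A A := hinv.ge
  have hmem : T.towerMap^[n] p ∈ A := hmaps.iterate n hp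
  exact hq (Subtype.ext hqp ▸ hmem)

end Mixing

theorem exists_level_ne_zero {A : Set T.Tower} (hA : MeasurableSet A)
    (hA₀ : T.towerMeasure A ≠ 0) :
    ∃ l, T.m₀.restrict {x | l < T.R x} {x | (x, l) ∈ (Subtype.val '' A : Set _)} ≠ 0 := by
  contrapose! hA₀
  rw [← Subtype.val_injective.preimage_image A,
    towerMeasure_preimage_val (measurableEmbedding_val.measurableSet_image.2 hA)]
  exact ENNReal.tsum_eq_zero.2 hA₀

/-- An invariant set `A` of positive measure never reaches its complement, so the limiting mass of
the complement is zero. -/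
theorem HasRate.ergodic_equilibrium (hT : T.HasRate ρ) : Ergodic T.towerMap T.equilibrium := by
  have hprob := hT.isProbabilityMeasure_equilibrium
  refine ⟨hT.measurePreserving_equilibrium, ⟨fun A hA hinv => ?_⟩⟩
  rw [eventuallyConst_set']
  by_cases hA₀ : T.towerMeasure A = 0
  · exact .inl (ae_eq_empty.2 (equilibrium_absolutelyContinuous hA₀))
  obtain ⟨l, hl⟩ := exists_level_ne_zero hA hA₀
  have hlim := hT.tendsto_levelMeasure l (measurableEmbedding_val.measurableSet_image.2 hA.compl)
    (A := {x | (x, l) ∈ (Subtype.val '' A : Set _)})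
    (measurable_prodMk_right (measurableEmbedding_val.measurableSet_image.2 hA))
  simp only [levelMeasure_real_image_compl_eq_zero l hA hinv] at hlim
  have hmass : T.cycleMass (Subtype.val '' Aᶜ) = 0 :=
    (mul_eq_zero.1 (tendsto_nhds_unique hlim tendsto_const_nhds)).resolve_left
      (ENNReal.toReal_ne_zero.2 ⟨hl, measure_ne_top _ _⟩)
  rw [← real_equilibrium hA.compl, measureReal_eq_zero_iff] at hmass
  exact .inr (eventuallyEq_univ.2 (mem_ae_iff.2 hmass))

end YoungTower

namespace YoungTower

variable {T : YoungTower.{u}} {κ : Type*} {ρ : κ → ℕ → ℝ} {K : ℝ} {φ : T.Tower → ℝ}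

/-! ### Convergence in total variation -/

theorem towerMeasure_univ : T.towerMeasure univ = ∑' l, T.m₀ {x | l < T.R x} := by
  simpa using towerMeasure_preimage_val (T := T) MeasurableSet.univ

theorem towerMeasure_ne_zero : T.towerMeasure ≠ 0 := fun h => by
  have hsum := towerMeasure_univ (T := T)
  rw [h, Measure.coe_zero, Pi.zero_apply, eq_comm, ENNReal.tsum_eq_zero] at hsum
  exact T.m₀_univ_ne_zero (setOf_zero_lt_R (T := T) ▸ hsum 0)

theorem sepTower_eq {p q : T.Tower} {l i : ℕ} (hi : i ∈ T.I) (hp : p ∈ T.pieceSet l i)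
    (hq : q ∈ T.pieceSet l i) :
    T.sepTower p q = sepTime T.I T.Λ T.FR p.1.1 q.1.1 :=
  if_pos ⟨l, i, hi, hp, hq⟩

theorem MemF.le_add (hφ : T.MemF K φ) (p q : T.Tower) :
    φ p ≤ φ q + K * epow T.β (T.sepTower p q) :=
  sub_le_iff_le_add'.1 ((le_abs_self _).trans (hφ p q))

theorem MemF.le_inv_add [IsFiniteMeasure T.towerMeasure] (hK : 0 ≤ K) (hφm : Measurable φ)
    (hφ : T.MemF K φ) (hmass : ∫⁻ p, ENNReal.ofReal (φ p) ∂T.towerMeasure = 1)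
    (q : T.Tower) :
    φ q ≤ (T.towerMeasure.real univ)⁻¹ + K := by
  obtain ⟨p, hp⟩ := exists_le_laverage towerMeasure_ne_zero hφm.ennreal_ofReal.aemeasurable
  have hp_le : φ p ≤ (T.towerMeasure.real univ)⁻¹ := by
    rw [laverage_eq, hmass, one_div] at hp
    refine (ENNReal.ofReal_le_iff_le_toReal ?_).1 hp |>.trans_eq (ENNReal.toReal_inv _)
    exact ENNReal.inv_ne_top.2 (Measure.measure_univ_ne_zero.2 towerMeasure_ne_zero)
  exact (hφ.le_add q p).trans (add_le_add hp_le
    (mul_le_of_le_one_right hK (epow_le_one T.β_pos.le T.β_lt_one.le _)))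

variable (T) in
/-- A density on the tower as a profile of densities on its levels, extended by zero to the points
`(x, l)` that are not in the tower. -/
def densityProfile (φ : T.Tower → ℝ) (l : ℕ) (x : T.Δ₀) : ℝ≥0∞ :=
  Function.extend Subtype.val (fun p : T.Tower => ENNReal.ofReal (φ p)) 0 (x, l)

theorem densityProfile_val (φ : T.Tower → ℝ) (p : T.Tower) :
    T.densityProfile φ p.1.2 p.1.1 = ENNReal.ofReal (φ p) :=
  Subtype.val_injective.extend_apply _ _ p

theorem isLipProfile_densityProfile (hφm : Measurable φ) (hφ : T.MemF K φ) {B : ℝ}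
    (hB : ∀ p, φ p ≤ B) : T.IsLipProfile K B (T.densityProfile φ) where
  aemeasurable l := ((measurableEmbedding_val.measurable_extend hφm.ennreal_ofReal
    measurable_zero).comp measurable_prodMk_right).aemeasurable
  le l x := by
    by_cases hx : l < T.R x
    · rw [densityProfile_val φ ⟨(x, l), hx⟩]
      exact ENNReal.ofReal_le_ofReal (hB _)
    · rw [densityProfile, Function.extend_apply' _ _ _ fun ⟨p, hp⟩ => hx (by simpa [hp] using p.2)]
      exact zero_le
  le_add l i hi hl x hx y hy := by
    have hxl : l < T.R x := by rwa [T.R_eq i hi x hx]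
    have hyl : l < T.R y := by rwa [T.R_eq i hi y hy]
    have hle := hφ.le_add ⟨(x, l), hxl⟩ ⟨(y, l), hyl⟩
    rw [sepTower_eq (l := l) hi ⟨rfl, hx⟩ ⟨rfl, hy⟩] at hle
    rw [densityProfile_val φ ⟨(x, l), hxl⟩, densityProfile_val φ ⟨(y, l), hyl⟩]
    exact (ENNReal.ofReal_le_ofReal hle).trans ENNReal.ofReal_add_le

theorem totalMass_densityProfile (φ : T.Tower → ℝ) :
    T.totalMass (T.densityProfile φ) = ∫⁻ p, ENNReal.ofReal (φ p) ∂T.towerMeasure := by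
  rw [totalMass, ← lintegral_towerMeasure fun z => T.densityProfile φ z.2 z.1]
  exact lintegral_congr (densityProfile_val φ)

theorem pushMass_densityProfile (φ : T.Tower → ℝ) {E : Set T.Tower} (hE : MeasurableSet E)
    (n : ℕ) :
    T.pushMass (T.densityProfile φ) (Subtype.val '' E) n =
      ((T.towerMeasure.withDensity fun p => ENNReal.ofReal (φ p)).map (T.towerMap^[n])) E := by
  have hEn : MeasurableSet (T.towerMap^[n] ⁻¹' E) := measurable_towerMap.iterate n hE
  rw [Measure.map_apply (measurable_towerMap.iterate n) hE, withDensity_apply _ hEn,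
    ← lintegral_indicator hEn]
  refine (lintegral_towerMeasure fun z => T.densityProfile φ z.2 z.1 *
    T.obs (Subtype.val '' E) n z.2 z.1).symm.trans (lintegral_congr fun p => ?_)
  rw [densityProfile_val, obs, ← val_towerMap_iterate]
  by_cases hp : T.towerMap^[n] p ∈ E
  · rw [indicator_of_mem (mem_image_of_mem _ hp), indicator_of_mem (mem_preimage.2 hp)]
    exact mul_one _
  · rw [indicator_of_notMem (s := Subtype.val '' E) (by rwa [Subtype.val_injective.mem_set_image]),
      indicator_of_notMem (by exact hp), mul_zero]

namespace HasRate

theorem isFiniteMeasure_towerMeasure (hT : T.HasRate ρ) : IsFiniteMeasure T.towerMeasure :=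
  ⟨towerMeasure_univ (T := T) ▸ (tsum_measure_lt_R_ne_top hT.summable_returnTail).lt_top⟩

theorem exists_tvDist_le (hT : T.HasRate ρ) (hρ : ∀ i n, 0 ≤ ρ i n)
    [IsProbabilityMeasure T.equilibrium] :
    ∃ j, ∀ K : ℝ, 0 ≤ K → ∃ C, 0 < C ∧ ∀ (φ : T.Tower → ℝ) (lam : ProbabilityMeasure T.Tower),
      Measurable φ → T.MemF K φ →
      (lam : Measure T.Tower) = T.towerMeasure.withDensity (fun p => ENNReal.ofReal (φ p)) →
      ∀ n : ℕ, tvDist ((lam : Measure T.Tower).map (T.towerMap^[n])) T.equilibrium ≤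
        ENNReal.ofReal (C * ρ j n) := by
  have hfin := hT.isFiniteMeasure_towerMeasure
  obtain ⟨j, hj⟩ := hT.exists_pushMass_sub_le
  refine ⟨j, fun K hK => ?_⟩
  obtain ⟨C, hC⟩ := hj K ((T.towerMeasure.real univ)⁻¹ + K) hK (by positivity)
  refine ⟨2 * (|C| + 1), by positivity, fun φ lam hφm hφ hlam n => ?_⟩
  have hmass : ∫⁻ p, ENNReal.ofReal (φ p) ∂T.towerMeasure = 1 := by
    rw [← setLIntegral_univ, ← withDensity_apply _ MeasurableSet.univ, ← hlam, measure_univ]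
  have hlip := isLipProfile_densityProfile hφm hφ (hφ.le_inv_add hK hφm hmass)
  rw [mul_assoc]
  refine tvDist_le _ _ fun E hE => ?_
  have hle := hC _ hlip _ (measurableEmbedding_val.measurableSet_image.2 hE) n
  rw [totalMass_densityProfile, hmass, pushMass_densityProfile φ hE, ← hlam, ENNReal.toReal_one,
    one_mul, ← real_equilibrium hE] at hle
  exact hle.trans (mul_le_mul_of_nonneg_right (by linarith [le_abs_self C]) (hρ j n))

theorem isEquilibrium_equilibrium (hT : T.HasRate ρ) :
    T.IsEquilibrium ⟨T.equilibrium, hT.isProbabilityMeasure_equilibrium⟩ :=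
  ⟨hT.measurePreserving_equilibrium, equilibrium_absolutelyContinuous,
    hT.absolutelyContinuous_equilibrium⟩

theorem eq_equilibrium (hT : T.HasRate ρ) (ν : ProbabilityMeasure T.Tower)
    (hν : MeasurePreserving T.towerMap (ν : Measure T.Tower) ν)
    (hac : (ν : Measure T.Tower) ≪ T.towerMeasure) :
    ν = ⟨T.equilibrium, hT.isProbabilityMeasure_equilibrium⟩ := by
  have hprob := hT.isProbabilityMeasure_equilibrium
  have hν_prob : IsProbabilityMeasure ν.1 := ν.2
  exact Subtype.ext (hT.ergodic_equilibrium.eq_of_absolutelyContinuous hν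
    (hac.trans hT.absolutelyContinuous_equilibrium))

theorem exists_isEquilibrium (hT : T.HasRate ρ) (hρ : ∀ i n, 0 ≤ ρ i n) :
    ∃ ν : ProbabilityMeasure T.Tower, T.IsEquilibrium ν ∧
      (∀ ν' : ProbabilityMeasure T.Tower, MeasurePreserving T.towerMap (ν' : Measure T.Tower) ν' →
        (ν' : Measure T.Tower) ≪ T.towerMeasure → ν' = ν) ∧
      ∃ j, ∀ K : ℝ, 0 ≤ K → ∃ C, 0 < C ∧ ∀ (φ : T.Tower → ℝ) (lam : ProbabilityMeasure T.Tower),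
        Measurable φ → T.MemF K φ →
        (lam : Measure T.Tower) = T.towerMeasure.withDensity (fun p => ENNReal.ofReal (φ p)) →
        ∀ n : ℕ, tvDist ((lam : Measure T.Tower).map (T.towerMap^[n])) (ν : Measure T.Tower) ≤
          ENNReal.ofReal (C * ρ j n) :=
  have := hT.isProbabilityMeasure_equilibrium
  ⟨_, hT.isEquilibrium_equilibrium, hT.eq_equilibrium, hT.exists_tvDist_le hρ⟩

end HasRate

theorem hasRate_of_returnTail_le_of_pos {ι : Type*} {r : ι → ℕ → ℝ} (hr : IsRateFamily r)
    (hρ : IsRateFamily ρ) (hrρ : HasTailRate r ρ) {i : ι} {C : ℝ}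
    (hC : ∀ n, 1 ≤ n → T.returnTail n ≤ C * r i n) : T.HasRate ρ := by
  obtain ⟨C', hC'⟩ := hr.exists_le_of_eventually_le
    (fun n => measureReal_mono (μ := T.m₀) (subset_univ {x | n < T.R x})) hC
  exact hasRate_of_returnTail_le hr hρ hrρ hC'

end YoungTower

theorem rpow_neg_le_mul_polyRate {a : ℝ} (ha : 0 ≤ a) {n : ℕ} (hn : 1 ≤ n) :
    (n : ℝ) ^ (-a) ≤ (1 / 2 : ℝ) ^ (-a) * polyRate a n := by
  have hn' : (1 : ℝ) ≤ n := by exact_mod_cast hn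
  rw [polyRate, ← Real.mul_rpow (by norm_num) (by positivity)]
  exact Real.rpow_le_rpow_of_nonpos (by positivity) (by linarith) (by linarith)

theorem polyRate_le_rpow_neg {a : ℝ} (ha : 0 ≤ a) {n : ℕ} (hn : 1 ≤ n) :
    polyRate a n ≤ (n : ℝ) ^ (-a) :=
  Real.rpow_le_rpow_of_nonpos (by exact_mod_cast hn) (by linarith) (by linarith)

theorem hasTailRate_polyRate {b : ℝ} (hb : 0 < b) :
    HasTailRate (fun _ : Unit => polyRate (b + 1)) (fun _ : Unit => polyRate b) where
  summable _ := summable_polyRate (by linarith)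
  absTail_le _ := ⟨(), absTail_polyRate_le hb⟩

theorem hasTailRate_expRate {η : ℝ} (hη : 0 < η) : HasTailRate (expRate η) (expRate η) where
  summable := summable_expRate hη
  absTail_le := absTail_expRate_le hη

theorem YoungTower.hasRate_polyRate {T : YoungTower.{u}} {C ζ : ℝ} (hζ : 1 < ζ)
    (h : ∀ n : ℕ, 1 ≤ n → T.returnTail n ≤ C * (n : ℝ) ^ (-ζ)) :
    T.HasRate fun _ : Unit => polyRate (ζ - 1) := by
  have hζ₀ : 0 < ζ - 1 := sub_pos.2 hζ
  have htail := hasTailRate_polyRate hζ₀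
  rw [sub_add_cancel] at htail
  refine hasRate_of_returnTail_le_of_pos (C := |C| * (1 / 2 : ℝ) ^ (-ζ)) (i := ())
    (isRateFamily_polyRate (by linarith)) (isRateFamily_polyRate hζ₀) htail fun n hn => ?_
  calc T.returnTail n ≤ C * (n : ℝ) ^ (-ζ) := h n hn
    _ ≤ |C| * ((1 / 2 : ℝ) ^ (-ζ) * polyRate ζ n) :=
      mul_le_mul (le_abs_self C) (rpow_neg_le_mul_polyRate (by linarith) hn) (by positivity)
        (abs_nonneg C)
    _ = |C| * (1 / 2 : ℝ) ^ (-ζ) * polyRate ζ n := (mul_assoc _ _ _).symm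

theorem YoungTower.hasRate_expRate {T : YoungTower.{u}} {C c η : ℝ} (hc : 0 < c) (hη : 0 < η)
    (hη1 : η ≤ 1)
    (h : ∀ n : ℕ, 1 ≤ n → T.returnTail n ≤ C * Real.exp (-c * (n : ℝ) ^ η)) :
    T.HasRate (expRate η) :=
  hasRate_of_returnTail_le_of_pos (isRateFamily_expRate hη hη1) (isRateFamily_expRate hη hη1)
    (hasTailRate_expRate hη) (i := ⟨c, hc⟩) h

theorem young_tower_convergence_to_equilibrium_general (T : YoungTower.{u}) :
    (∀ C ζ : ℝ, 1 < ζ → (∀ n : ℕ, 1 ≤ n → T.m₀.real {x | n < T.R x} ≤ C * (n : ℝ) ^ (-ζ)) →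
      ∃ ν : ProbabilityMeasure T.Tower, T.IsEquilibrium ν ∧
        (∀ ν' : ProbabilityMeasure T.Tower,
          MeasurePreserving T.towerMap (ν' : Measure T.Tower) ν' →
          (ν' : Measure T.Tower) ≪ T.towerMeasure → ν' = ν) ∧
        ∀ Cφ : ℝ, 0 ≤ Cφ → ∃ C' : ℝ, 0 < C' ∧
          ∀ (φ : T.Tower → ℝ) (lam : ProbabilityMeasure T.Tower),
            Measurable φ → T.MemF Cφ φ →
            (lam : Measure T.Tower) =
              T.towerMeasure.withDensity (fun p => ENNReal.ofReal (φ p)) →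
            ∀ n : ℕ, 1 ≤ n →
              tvDist ((lam : Measure T.Tower).map (T.towerMap^[n])) (ν : Measure T.Tower)
                ≤ ENNReal.ofReal (C' * (n : ℝ) ^ (-(ζ - 1)))) ∧
    (∀ C c η : ℝ, 0 < c → 0 < η → η ≤ 1 →
      (∀ n : ℕ, 1 ≤ n → T.m₀.real {x | n < T.R x} ≤ C * Real.exp (-c * (n : ℝ) ^ η)) →
      ∃ ν : ProbabilityMeasure T.Tower, T.IsEquilibrium ν ∧
        (∀ ν' : ProbabilityMeasure T.Tower,
          MeasurePreserving T.towerMap (ν' : Measure T.Tower) ν' →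
          (ν' : Measure T.Tower) ≪ T.towerMeasure → ν' = ν) ∧
        ∃ c' : ℝ, 0 < c' ∧ ∀ Cφ : ℝ, 0 ≤ Cφ → ∃ C' : ℝ, 0 < C' ∧
          ∀ (φ : T.Tower → ℝ) (lam : ProbabilityMeasure T.Tower),
            Measurable φ → T.MemF Cφ φ →
            (lam : Measure T.Tower) =
              T.towerMeasure.withDensity (fun p => ENNReal.ofReal (φ p)) →
            ∀ n : ℕ,
              tvDist ((lam : Measure T.Tower).map (T.towerMap^[n])) (ν : Measure T.Tower)
                ≤ ENNReal.ofReal (C' * Real.exp (-c' * (n : ℝ) ^ η))) := by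
  constructor
  · intro C ζ hζ htail
    obtain ⟨ν, hν, huniq, -, hconv⟩ := (YoungTower.hasRate_polyRate hζ htail).exists_isEquilibrium
      fun _ n => (polyRate_pos _ n).le
    refine ⟨ν, hν, huniq, fun Cφ hCφ => ?_⟩
    obtain ⟨C', hC', hle⟩ := hconv Cφ hCφ
    refine ⟨C', hC', fun φ lam hφm hφ hlam n hn => (hle φ lam hφm hφ hlam n).trans ?_⟩
    gcongr
    exact polyRate_le_rpow_neg (by linarith) hn
  · intro C c η hc hη hη1 htail
    obtain ⟨ν, hν, huniq, j, hconv⟩ :=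
      (YoungTower.hasRate_expRate hc hη hη1 htail).exists_isEquilibrium
        fun c n => (expRate_pos η c n).le
    exact ⟨ν, hν, huniq, j.1, j.2, hconv⟩

end

/-- Convergence to equilibrium on a Young tower `T`. Under either tail condition there is exactly
one `F`-invariant probability measure `ν` equivalent to `m`, and the push-forwards of every
probability measure `lam` with density `φ ∈ F_β⁺` converge to `ν` in total variation, at a
polynomial rate in the first case and at a (stretched) exponential rate in the second. -/
theorem young_tower_convergence_to_equilibrium (T : YoungTower.{u}) :
    (∀ C ζ : ℝ, 0 < C → 1 < ζ →
      (∀ n : ℕ, 1 ≤ n → T.m₀.real {x | n < T.R x} ≤ C * (n : ℝ) ^ (-ζ)) →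
      ∃ ν : ProbabilityMeasure T.Tower, T.IsEquilibrium ν ∧
        (∀ ν' : ProbabilityMeasure T.Tower, T.IsEquilibrium ν' → ν' = ν) ∧
        ∀ Cφ : ℝ, 0 < Cφ → ∃ C' : ℝ, 0 < C' ∧
          ∀ (φ : T.Tower → ℝ) (lam : ProbabilityMeasure T.Tower),
            Measurable φ → T.MemFPlus Cφ φ →
            (lam : Measure T.Tower) =
              T.towerMeasure.withDensity (fun p => ENNReal.ofReal (φ p)) →
            ∀ n : ℕ, 1 ≤ n →
              tvDist ((lam : Measure T.Tower).map (T.towerMap^[n])) (ν : Measure T.Tower)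
                ≤ ENNReal.ofReal (C' * (n : ℝ) ^ (-(ζ - 1)))) ∧
    (∀ C c η : ℝ, 0 < C → 0 < c → 0 < η → η ≤ 1 →
      (∀ n : ℕ, 1 ≤ n → T.m₀.real {x | n < T.R x} ≤ C * Real.exp (-c * (n : ℝ) ^ η)) →
      ∃ ν : ProbabilityMeasure T.Tower, T.IsEquilibrium ν ∧
        (∀ ν' : ProbabilityMeasure T.Tower, T.IsEquilibrium ν' → ν' = ν) ∧
        ∃ c' : ℝ, 0 < c' ∧ ∀ Cφ : ℝ, 0 < Cφ → ∃ C' : ℝ, 0 < C' ∧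
          ∀ (φ : T.Tower → ℝ) (lam : ProbabilityMeasure T.Tower),
            Measurable φ → T.MemFPlus Cφ φ →
            (lam : Measure T.Tower) =
              T.towerMeasure.withDensity (fun p => ENNReal.ofReal (φ p)) →
            ∀ n : ℕ, 1 ≤ n →
              tvDist ((lam : Measure T.Tower).map (T.towerMap^[n])) (ν : Measure T.Tower)
                ≤ ENNReal.ofReal (C' * Real.exp (-c' * (n : ℝ) ^ η))) := by
  refine (young_tower_convergence_to_equilibrium_general T).imp
    (fun hpoly C ζ _ hζ htail => ?_) fun hexp C c η _ hc hη hη1 htail => ?_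
  · obtain ⟨ν, hν, huniq, hconv⟩ := hpoly C ζ hζ htail
    refine ⟨ν, hν, fun ν' hν' => huniq ν' hν'.1 hν'.2.1, fun Cφ hCφ => ?_⟩
    exact (hconv Cφ hCφ.le).imp fun C' hC' =>
      ⟨hC'.1, fun φ lam hφm hφ => hC'.2 φ lam hφm hφ.1⟩
  · obtain ⟨ν, hν, huniq, c', hc', hconv⟩ := hexp C c η hc hη hη1 htail
    refine ⟨ν, hν, fun ν' hν' => huniq ν' hν'.1 hν'.2.1, c', hc', fun Cφ hCφ => ?_⟩
    exact (hconv Cφ hCφ.le).imp fun C' hC' =>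
      ⟨hC'.1, fun φ lam hφm hφ hlam n _ => hC'.2 φ lam hφm hφ.1 hlam n⟩
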